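/- Assume f satisfies (f1), (f2), (f3): f(s) ≥ f'(s)(s−β) for all s ≥ β, and (f4): (F/f)'(s) ≥ (n−2)/(2n) for all s > β, and let α* ∈ G₂. Then there exists δ > 0 such that for all α₁ < α₂ in (α*−δ, α*+δ): if α₁ ∈ G₂ ∪ N₂, then α₂ ∈ N₂, Z₂(α₁) > Z₂(α₂), and |u'(Z₂(α₁),α₁)| < |u'(Z₂(α₂),α₂)|; and if α₂ ∈ G₂, then α₁ ∈ F₂. -/

import Mathlib

open Set Filter MeasureTheory

namespace Paper

noncomputable section

/-- `F s = ∫₀ˢ f t dt`. -/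
def Fint (f : ℝ → ℝ) (s : ℝ) : ℝ := ∫ t in (0:ℝ)..s, f t

/-- Hypothesis (f1): `f` is odd, `f 0 = 0`, there are `β > b > 0` with `f > 0` on `(b,∞)`,
`f ≤ 0`, `f ≢ 0` on `[0,b]`, and `F β = 0`. -/
def Hf1 (f : ℝ → ℝ) (b β : ℝ) : Prop :=
  (∀ s, f (-s) = -f s) ∧ f 0 = 0 ∧ 0 < b ∧ b < β ∧
    (∀ s, b < s → 0 < f s) ∧ (∀ s ∈ Icc (0:ℝ) b, f s ≤ 0) ∧
    (∃ s ∈ Icc (0:ℝ) b, f s ≠ 0) ∧ Fint f β = 0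

/-- Hypothesis (f2): `f` continuous on `[0,∞)`, C¹ on `(0,∞)`, `f' ∈ L¹(0,1)`. -/
def Hf2 (f : ℝ → ℝ) : Prop :=
  ContinuousOn f (Ici 0) ∧ (∀ s : ℝ, 0 < s → DifferentiableAt ℝ f s) ∧
    ContinuousOn (deriv f) (Ioi 0) ∧ IntegrableOn (deriv f) (Ioo 0 1)

/-- Hypothesis (f3): `f s ≥ f' s * (s - β)` for `s ≥ β`. -/
def Hf3 (f : ℝ → ℝ) (β : ℝ) : Prop := ∀ s, β ≤ s → deriv f s * (s - β) ≤ f s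

/-- Hypothesis (f4): `(F/f)' s ≥ (n-2)/(2n)` for `s > β`. -/
def Hf4 (n : ℕ) (f : ℝ → ℝ) (β : ℝ) : Prop :=
  ∀ s, β < s → ((n : ℝ) - 2) / (2 * (n : ℝ)) ≤ deriv (fun t => Fint f t / f t) s

/-- Hypothesis (f4'): `(F/f)' s ≥ (n-2)/2` for `s > β`. -/
def Hf4' (n : ℕ) (f : ℝ → ℝ) (β : ℝ) : Prop :=
  ∀ s, β < s → ((n : ℝ) - 2) / 2 ≤ deriv (fun t => Fint f t / f t) s

/-- Hypothesis (f5): `s ↦ s f' s / f s` is nonincreasing on `[β,∞)`. -/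
def Hf5 (f : ℝ → ℝ) (β : ℝ) : Prop := AntitoneOn (fun s => s * deriv f s / f s) (Ici β)

/-- Hypothesis (f6): `β f' β / f β ≤ n/(n-2)`. -/
def Hf6 (n : ℕ) (f : ℝ → ℝ) (β : ℝ) : Prop := β * deriv f β / f β ≤ (n : ℝ) / ((n : ℝ) - 2)

/-- Hypothesis (f1'): `f 0 = 0` and `s f s > 0` for `s > 0`. -/
def Hf1' (f : ℝ → ℝ) : Prop := f 0 = 0 ∧ ∀ s : ℝ, 0 < s → 0 < s * f s

/-- Hypothesis (f3'): `f s ≥ s f' s` for `s > 0`, with strict inequality at points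
arbitrarily close to `0`. -/
def Hf3' (f : ℝ → ℝ) : Prop :=
  (∀ s : ℝ, 0 < s → s * deriv f s ≤ f s) ∧
    ∀ ε : ℝ, 0 < ε → ∃ s ∈ Ioo (0:ℝ) ε, s * deriv f s < f s

/-- `v` is a C² solution of (E) on `(0,∞)`, continuous on `[0,∞)`,
with `v 0 = α` and `v' 0 = 0`. -/
def IVPsol (n : ℕ) (f : ℝ → ℝ) (α : ℝ) (v : ℝ → ℝ) : Prop :=
  v 0 = α ∧ deriv v 0 = 0 ∧ ContinuousOn v (Ici 0) ∧
    (∀ r : ℝ, 0 < r → DifferentiableAt ℝ v r ∧ DifferentiableAt ℝ (deriv v) r) ∧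
    (∀ r : ℝ, 0 < r → deriv (deriv v) r + ((n : ℝ) - 1) / r * deriv v r + f (v r) = 0)

/-- The family `α ↦ u α` of solutions of the IVP, with `u α r` and `u' α r`
continuous in `(α, r)`. -/
def Family (n : ℕ) (f : ℝ → ℝ) (u : ℝ → ℝ → ℝ) : Prop :=
  (∀ α : ℝ, 0 < α → IVPsol n f α (u α)) ∧
    ContinuousOn (fun p : ℝ × ℝ => u p.1 p.2) (Ioi 0 ×ˢ Ici 0) ∧
    ContinuousOn (fun p : ℝ × ℝ => deriv (u p.1) p.2) (Ioi 0 ×ˢ Ici 0)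

/-- The set whose supremum is `Z_k α`, given `T = T_{k-1} α`. -/
def ZsetAux (u : ℝ → ℝ → ℝ) (k : ℕ) (T α : ℝ) : Set ℝ :=
  {r | T < r ∧ ∀ s ∈ Ioo T r, (-1 : ℝ) ^ k * u α s < 0 ∧ 0 < (-1 : ℝ) ^ k * deriv (u α) s}

/-- The pair `(Z_k, T_k)`, with `T₀ = 0`;
`Z_k α = sup {r > T_{k-1} α | (-1)^k u < 0, (-1)^k u' > 0 on (T_{k-1} α, r)}` and
`T_k α = inf {r > Z_k α | u'(r, α) = 0}`. -/
def ZT (u : ℝ → ℝ → ℝ) : ℕ → (ℝ → ℝ) × (ℝ → ℝ)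
  | 0 => (fun _ => 0, fun _ => 0)
  | k + 1 =>
    let Z : ℝ → ℝ := fun α => sSup (ZsetAux u (k + 1) ((ZT u k).2 α) α)
    (Z, fun α => sInf {r | Z α < r ∧ deriv (u α) r = 0})

/-- `Z_k α` (as a real number; the genuine value when the defining set is bounded above). -/
def Zk (u : ℝ → ℝ → ℝ) (k : ℕ) (α : ℝ) : ℝ := (ZT u k).1 α

/-- `T_k α`, with `T₀ = 0`. -/
def Tk (u : ℝ → ℝ → ℝ) (k : ℕ) (α : ℝ) : ℝ := (ZT u k).2 α

/-- The defining set of `Z_k α`; `Z_k α = ∞` iff this set is unbounded above. -/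
def ZsetK (u : ℝ → ℝ → ℝ) (k : ℕ) (α : ℝ) : Set ℝ := ZsetAux u k (Tk u (k - 1) α) α

open Classical in
/-- The value of `u (·, α)` at `Z_k α`, as a limit `r → ∞` when `Z_k α = ∞`. -/
def uAtZ (u : ℝ → ℝ → ℝ) (k : ℕ) (α : ℝ) : ℝ :=
  if BddAbove (ZsetK u k α) then u α (Zk u k α) else limUnder atTop (u α)

open Classical in
/-- The value of `u' (·, α)` at `Z_k α`, as a limit `r → ∞` when `Z_k α = ∞`. -/
def duAtZ (u : ℝ → ℝ → ℝ) (k : ℕ) (α : ℝ) : ℝ :=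
  if BddAbove (ZsetK u k α) then deriv (u α) (Zk u k α) else limUnder atTop (deriv (u α))

open Classical in
/-- `Z_k α` as an extended real number. -/
def ZkE (u : ℝ → ℝ → ℝ) (k : ℕ) (α : ℝ) : WithTop ℝ :=
  if BddAbove (ZsetK u k α) then (Zk u k α : WithTop ℝ) else ⊤

/-- Membership in `F̃_k` (for `α ∈ N_{k-1}`): `(-1)^k u' (r, α) < 0` for all `r > Z_{k-1} α`. -/
def Ftil (u : ℝ → ℝ → ℝ) (k : ℕ) (α : ℝ) : Prop :=
  ∀ r, Zk u (k - 1) α < r → (-1 : ℝ) ^ k * deriv (u α) r < 0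

/-- The sets `N_k` (with `N₀ := (0,∞)`). -/
def Nk (u : ℝ → ℝ → ℝ) : ℕ → Set ℝ
  | 0 => Ioi 0
  | 1 => {α | 0 < α ∧ uAtZ u 1 α = 0 ∧ duAtZ u 1 α < 0}
  | k + 2 => {α | α ∈ Nk u (k + 1) ∧ ¬Ftil u (k + 2) α ∧ uAtZ u (k + 2) α = 0 ∧
      0 < (-1 : ℝ) ^ (k + 2) * duAtZ u (k + 2) α}

/-- The sets `G_k`. -/
def Gk (u : ℝ → ℝ → ℝ) : ℕ → Set ℝ
  | 0 => ∅
  | 1 => {α | 0 < α ∧ uAtZ u 1 α = 0 ∧ duAtZ u 1 α = 0}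
  | k + 2 => {α | α ∈ Nk u (k + 1) ∧ ¬Ftil u (k + 2) α ∧ uAtZ u (k + 2) α = 0 ∧
      duAtZ u (k + 2) α = 0}

/-- The set `F̃_k` (for `k ≥ 2`). -/
def FtilSet (u : ℝ → ℝ → ℝ) (k : ℕ) : Set ℝ := {α | α ∈ Nk u (k - 1) ∧ Ftil u k α}

/-- The set `F_k` (for `k ≥ 2`). -/
def Fk (u : ℝ → ℝ → ℝ) (k : ℕ) : Set ℝ :=
  {α | α ∈ Nk u (k - 1) ∧ ¬Ftil u k α ∧ (-1 : ℝ) ^ k * uAtZ u k α < 0}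

/-- The sets `P_k`. -/
def Pk (u : ℝ → ℝ → ℝ) : ℕ → Set ℝ
  | 0 => ∅
  | 1 => {α | 0 < α ∧ 0 < uAtZ u 1 α}
  | k + 2 => FtilSet u (k + 2) ∪ Fk u (k + 2)

/-- The set of extremal points (zeros of `u' (·, α)`) in `[0, A]`. -/
def ExtSet (u : ℝ → ℝ → ℝ) (α A : ℝ) : Set ℝ := {r | r ∈ Icc 0 A ∧ deriv (u α) r = 0}

/-- The conclusion of the δ₁-lemma (Lemma 4.1): every solution with initial value in
`(α*-δ₁, α*+δ₁)` has exactly `k` extremal points in `[0, T_{k-1}(α*) + a]`, with minimum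
values `< -β` and maximum values `> β`; moreover any two such solutions intersect between
any two of their consecutive extremal points, and in `(T_{k-1}(α*), Z_k(α*))`. -/
def DeltaOneLemma (f : ℝ → ℝ) (β : ℝ) (u : ℝ → ℝ → ℝ) (k : ℕ) (αs a δ₁ : ℝ) : Prop :=
  0 < a ∧ 0 < δ₁ ∧
    (∀ α ∈ Ioo (αs - δ₁) (αs + δ₁),
      (ExtSet u α (Tk u (k - 1) αs + a)).Finite ∧
        (ExtSet u α (Tk u (k - 1) αs + a)).ncard = k ∧
        ∀ r ∈ ExtSet u α (Tk u (k - 1) αs + a),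
          (IsLocalMin (u α) r → u α r < -β) ∧ (IsLocalMax (u α) r → β < u α r)) ∧
    ∀ α₁ ∈ Ioo (αs - δ₁) (αs + δ₁), ∀ α₂ ∈ Ioo (αs - δ₁) (αs + δ₁), α₁ < α₂ →
      (∀ i : ℕ, 1 ≤ i → i ≤ k - 1 →
        ∃ t, max (Tk u (i - 1) α₁) (Tk u (i - 1) α₂) < t ∧
          t < min (Tk u i α₁) (Tk u i α₂) ∧ u α₁ t = u α₂ t) ∧
      ∃ t, Tk u (k - 1) αs < t ∧ (BddAbove (ZsetK u k αs) → t < Zk u k αs) ∧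
        u α₁ t = u α₂ t

/-- `ρ` is the inverse of the monotone branch of `v` on `[t₁, t₂]`, whose set of values
is `[m, M]`. -/
def InvBranch (v ρ : ℝ → ℝ) (t₁ t₂ m M : ℝ) : Prop :=
  (∀ s ∈ Icc m M, ρ s ∈ Icc t₁ t₂ ∧ v (ρ s) = s) ∧
    ∀ s ∈ Ioo m M, HasDerivAt ρ (1 / deriv v (ρ s)) s

/-- `ρ` inverts a decreasing branch of `v` over the value interval `[m, M]`, along which
`(v')² + 2F > 0`. -/
def DecBranchInv (f : ℝ → ℝ) (v ρ : ℝ → ℝ) (m M : ℝ) : Prop :=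
  ∀ s ∈ Icc m M, 0 ≤ ρ s ∧ v (ρ s) = s ∧ deriv v (ρ s) < 0 ∧
    HasDerivAt ρ (1 / deriv v (ρ s)) s ∧ 0 < (deriv v (ρ s)) ^ 2 + 2 * Fint f s

/-- The functional `Q(s) = -4 (F/f)(s) r/r' - r²/(r')² - 2 r² F(s) + H(s)` computed along
the branch inverse `ρ`. -/
def Qfun (f H ρ : ℝ → ℝ) (s : ℝ) : ℝ :=
  -4 * (Fint f s / f s) * (ρ s / deriv ρ s) - (ρ s) ^ 2 / (deriv ρ s) ^ 2 -
    2 * (ρ s) ^ 2 * Fint f s + H s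

/-- The functional `P(s) = -2n (F/f)(s) r^{n-1}/r' - r^n/(r')² - 2 r^n F(s)`. -/
def Pfun (n : ℕ) (f : ℝ → ℝ) (ρ : ℝ → ℝ) (s : ℝ) : ℝ :=
  -(2 * (n : ℝ)) * (Fint f s / f s) * (ρ s ^ (n - 1) / deriv ρ s) -
    ρ s ^ n / (deriv ρ s) ^ 2 - 2 * ρ s ^ n * Fint f s

/-- The functional `W(s) = r(s) √((u'(r(s)))² + 2 F(s))`. -/
def Wfun (f v ρ : ℝ → ℝ) (s : ℝ) : ℝ :=
  ρ s * Real.sqrt ((deriv v (ρ s)) ^ 2 + 2 * Fint f s)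

/-- The functional `W̃(s) = r(s)^{n-1} √((u'(r(s)))² + 2 F(s))`. -/
def Wtil (n : ℕ) (f : ℝ → ℝ) (v ρ : ℝ → ℝ) (s : ℝ) : ℝ :=
  ρ s ^ (n - 1) * Real.sqrt ((deriv v (ρ s)) ^ 2 + 2 * Fint f s)

/-- `v` changes sign at `z ∈ (0,∞)`: `v z = 0` and `v` takes both signs in every
neighborhood of `z` (within `(0,∞)`). -/
def SignChange (v : ℝ → ℝ) (z : ℝ) : Prop :=
  v z = 0 ∧ ∀ ε : ℝ, 0 < ε →
    (∃ x ∈ Ioo (z - ε) (z + ε) ∩ Ioi 0, 0 < v x) ∧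
    (∃ x ∈ Ioo (z - ε) (z + ε) ∩ Ioi 0, v x < 0)

/-- `v` has exactly `m` sign changes in `(0,∞)`. -/
def ExactSignChanges (v : ℝ → ℝ) (m : ℕ) : Prop :=
  {z | 0 < z ∧ SignChange v z}.Finite ∧ {z | 0 < z ∧ SignChange v z}.ncard = m

/-- Bound state: a C² solution of (E) on `(0,∞)` with `v' 0 = 0` and `v r → 0` as `r → ∞`. -/
def BoundState (n : ℕ) (f : ℝ → ℝ) (v : ℝ → ℝ) : Prop :=
  ContinuousOn v (Ici 0) ∧
    (∀ r : ℝ, 0 < r → DifferentiableAt ℝ v r ∧ DifferentiableAt ℝ (deriv v) r) ∧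
    (∀ r : ℝ, 0 < r → deriv (deriv v) r + ((n : ℝ) - 1) / r * deriv v r + f (v r) = 0) ∧
    deriv v 0 = 0 ∧ Tendsto v atTop (nhds 0)

/-- Solution of the Dirichlet problem on the ball of radius `R`. -/
def DirichletSol (n : ℕ) (f : ℝ → ℝ) (R : ℝ) (v : ℝ → ℝ) : Prop :=
  ContinuousOn v (Icc 0 R) ∧
    (∀ r ∈ Ioo (0:ℝ) R, DifferentiableAt ℝ v r ∧ DifferentiableAt ℝ (deriv v) r) ∧
    (∀ r ∈ Ioo (0:ℝ) R, deriv (deriv v) r + ((n : ℝ) - 1) / r * deriv v r + f (v r) = 0) ∧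
    deriv v 0 = 0 ∧ v R = 0

end
end Paper

open Paper Set Filter MeasureTheory

/-!
Write `n = k + 2`, and describe a monotone branch of a solution by its value `s`: `r(s)` is the
radius at which `s` is attained and `p(s) = |u'(r(s))|` the slope there, so that on a decreasing
branch `r' = -1/p` and `p' = (k+1)/r - f/p`. Two solutions can then be compared at equal values.

On the first, decreasing branch, (f3) makes the solution with the larger initial value reach every
level of `[β, α₁]` later. Once the slopes cross, the weighted speed `r √(u'² + 2F(u))` (where
`F ≤ 0`) and the momentum `r^(n-1) |u'|` (where `f ≤ 0`) keep them apart, and the Pohozaev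
functional, monotone by (f4), shows that the larger initial value has the deeper first minimum.

On the second, increasing branch the Pohozaev functional orders the slopes above `β` in absolute
value. A solution near one in `G₂` gets close to `0` with a slope as small as we please; were the
slopes never to cross, a logarithmic estimate on the radii would bound this slope from below.
After the crossing the gap in weighted speed persists, so the solution with the larger initial
value reaches `0`, earlier and with a larger slope.
-/

open Topology

namespace Paper

variable {k : ℕ} {f F G r p r₁ p₁ r₂ p₂ : ℝ → ℝ} {a c : ℝ}

/-! ### Monotonicity and continuous induction on a compact interval -/

section ContinuousInduction

variable {g : ℝ → ℝ}

theorem antitoneOn_Icc_of_hasDerivAt (hg : ContinuousOn g (Icc a c))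
    (hd : ∀ s ∈ Ioo a c, ∃ d, HasDerivAt g d s ∧ d ≤ 0) : AntitoneOn g (Icc a c) := by
  choose! g' hg' hneg using hd
  rw [← interior_Icc] at hg' hneg
  exact antitoneOn_of_hasDerivWithinAt_nonpos (convex_Icc a c) hg
    (fun s hs => (hg' s hs).hasDerivWithinAt) hneg

theorem monotoneOn_Icc_of_hasDerivAt (hg : ContinuousOn g (Icc a c))
    (hd : ∀ s ∈ Ioo a c, ∃ d, HasDerivAt g d s ∧ 0 ≤ d) : MonotoneOn g (Icc a c) := by
  choose! g' hg' hnonneg using hd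
  rw [← interior_Icc] at hg' hnonneg
  exact monotoneOn_of_hasDerivWithinAt_nonneg (convex_Icc a c) hg
    (fun s hs => (hg' s hs).hasDerivWithinAt) hnonneg

theorem strictAntiOn_Icc_of_hasDerivAt (hg : ContinuousOn g (Icc a c))
    (hd : ∀ s ∈ Ioo a c, ∃ d, HasDerivAt g d s ∧ d < 0) : StrictAntiOn g (Icc a c) := by
  choose! g' hg' hneg using hd
  rw [← interior_Icc] at hg' hneg
  exact strictAntiOn_of_hasDerivWithinAt_neg (convex_Icc a c) hg
    (fun s hs => (hg' s hs).hasDerivWithinAt) hneg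

theorem exists_last_nonpos {s₁ : ℝ} (hg : ContinuousOn g (Icc a c)) (hs₁ : s₁ ∈ Icc a c)
    (h : g s₁ ≤ 0) : ∃ s ∈ Icc a c, g s ≤ 0 ∧ ∀ t ∈ Ioc s c, 0 < g t := by
  have hclosed : IsClosed (Icc a c ∩ g ⁻¹' Iic 0) :=
    hg.preimage_isClosed_of_isClosed isClosed_Icc isClosed_Iic
  obtain ⟨m, hm, hmax⟩ :=
    (isCompact_Icc.of_isClosed_subset hclosed inter_subset_left).exists_isGreatest ⟨s₁, hs₁, h⟩
  refine ⟨m, hm.1, hm.2, fun t ht => not_le.mp fun hneg => ?_⟩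
  exact ht.1.not_ge (hmax ⟨⟨hm.1.1.trans ht.1.le, ht.2⟩, hneg⟩)

theorem pos_of_pos_right (hg : ContinuousOn g (Icc a c)) (hc : 0 < g c)
    (step : ∀ s ∈ Ico a c, (∀ t ∈ Ioc s c, 0 < g t) → 0 < g s) : ∀ s ∈ Icc a c, 0 < g s := by
  intro s hs
  by_contra! hneg
  obtain ⟨m, hm, hm0, hpos⟩ := exists_last_nonpos hg hs hneg
  have hmc : m < c := hm.2.lt_of_ne fun h => (h ▸ hm0).not_gt hc
  exact (step m ⟨hm.1, hmc⟩ hpos).not_ge hm0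

theorem nonneg_of_pos_Ioc (hac : a < c) (hg : ContinuousOn g (Icc a c))
    (hpos : ∀ t ∈ Ioc a c, 0 < g t) : 0 ≤ g a := by
  have hcl : a ∈ closure (Ioc a c) := closure_Ioc hac.ne ▸ left_mem_Icc.mpr hac.le
  have hcont := (hg a (left_mem_Icc.mpr hac.le)).mono Ioc_subset_Icc_self
  exact isClosed_Ici.closure_subset (hcont.mem_closure hcl (t := Ici 0) fun t ht => (hpos t ht).le)

theorem exists_last_zero (hg : ContinuousOn g (Icc a c)) (hc : g c ≤ 0)
    (h : ¬ ∀ s ∈ Icc a c, g s ≤ 0) : ∃ s ∈ Icc a c, g s = 0 ∧ ∀ t ∈ Icc s c, g t ≤ 0 := by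
  push Not at h
  obtain ⟨s₁, hs₁, hpos⟩ := h
  obtain ⟨m, hm, hm0, hlt⟩ :=
    exists_last_nonpos hg.neg hs₁ (neg_nonpos.mpr hpos.le)
  simp only [Pi.neg_apply, Left.neg_nonpos_iff, Left.neg_pos_iff] at hm0 hlt
  have hzero : g m = 0 := by
    refine le_antisymm ?_ hm0
    rcases hm.2.lt_or_eq with hmc | rfl
    · exact neg_nonneg.mp (nonneg_of_pos_Ioc (g := -g) hmc
        (hg.neg.mono (Icc_subset_Icc_left hm.1)) fun t ht => neg_pos.mpr (hlt t ht))
    · exact hc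
  refine ⟨m, hm, hzero, fun t ht => ?_⟩
  rcases ht.1.lt_or_eq with hmt | rfl
  · exact (hlt t ⟨hmt, ht.2⟩).le
  · exact hzero.le

end ContinuousInduction

theorem lt_of_pow_mul_lt_pow_mul {x y A B : ℝ} (m : ℕ) (hy : 0 ≤ y) (hyx : y ≤ x) (hA : 0 ≤ A)
    (h : x ^ m * A < y ^ m * B) : A < B :=
  lt_of_mul_lt_mul_left
    ((mul_le_mul_of_nonneg_right (pow_le_pow_left₀ hy hyx m) hA).trans_lt h) (pow_nonneg hy m)

/-! ### Decreasing branches as functions of the value of the solution -/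

/-- `r` and `p` describe a decreasing branch of a solution `v` of (E) in dimension `k + 2`, as
functions of the value `s = v` in `[a, c]`: `r` is the inverse of `v`, and `p s = -v' (r s)`. -/
structure Branch (k : ℕ) (f r p : ℝ → ℝ) (a c : ℝ) : Prop where
  cont_r : ContinuousOn r (Icc a c)
  cont_p : ContinuousOn p (Icc a c)
  r_pos : ∀ s ∈ Ioo a c, 0 < r s
  p_pos : ∀ s ∈ Ioo a c, 0 < p s
  r_nonneg : ∀ s ∈ Icc a c, 0 ≤ r s
  p_nonneg : ∀ s ∈ Icc a c, 0 ≤ p s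
  deriv_r : ∀ s ∈ Ioo a c, HasDerivAt r (-(p s)⁻¹) s
  deriv_p : ∀ s ∈ Ioo a c, HasDerivAt p ((k + 1) / r s - f s / p s) s

/-- The momentum `rⁿ⁻¹ p = -rⁿ⁻¹ v'` in dimension `n = k + 2`, whose derivative along a branch
involves only `f`. -/
def momentum (k : ℕ) (r p : ℝ → ℝ) (s : ℝ) : ℝ := r s ^ (k + 1) * p s

/-- The energy `(v')² + 2 F(v)`, as a function of the value `s` of `v`. -/
def energy (F p : ℝ → ℝ) (s : ℝ) : ℝ := p s ^ 2 + 2 * F s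

/-- The energy weighted by `rᵐ`. In dimension `n`, the exponent `2 (n - 1)` gives the square of
the functional `W̃`, and the exponent `n` the energy part of the Pohozaev functional. -/
def weightedEnergy (m : ℕ) (F r p : ℝ → ℝ) (s : ℝ) : ℝ := r s ^ m * energy F p s

/-- The functional `W = r √((v')² + 2 F)` of a branch. -/
noncomputable def weightedSpeed (F r p : ℝ → ℝ) (s : ℝ) : ℝ := r s * √(energy F p s)

/-- The quantity `r₁ⁿ⁻¹ (p₂² - p₁²)` comparing the slopes of two branches in dimension
`n = k + 2`. -/
def slopeGap (k : ℕ) (r₁ p₁ p₂ : ℝ → ℝ) (s : ℝ) : ℝ := r₁ s ^ (k + 1) * (p₂ s ^ 2 - p₁ s ^ 2)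

theorem energy_lt_energy {s : ℝ} (hp₁ : 0 ≤ p₁ s) (hp : p₁ s < p₂ s) :
    energy F p₁ s < energy F p₂ s :=
  add_lt_add_left (pow_lt_pow_left₀ hp hp₁ two_ne_zero) _

theorem slope_lt_of_energy_lt {s : ℝ} (hp₂ : 0 ≤ p₂ s) (h : energy F p₁ s < energy F p₂ s) :
    p₁ s < p₂ s :=
  lt_of_pow_lt_pow_left₀ 2 hp₂ (lt_of_add_lt_add_right h)

namespace Branch

theorem mono (B : Branch k f r p a c) {a' c' : ℝ} (ha : a ≤ a') (hc : c' ≤ c) :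
    Branch k f r p a' c' where
  cont_r := B.cont_r.mono (Icc_subset_Icc ha hc)
  cont_p := B.cont_p.mono (Icc_subset_Icc ha hc)
  r_pos s hs := B.r_pos s (Ioo_subset_Ioo ha hc hs)
  p_pos s hs := B.p_pos s (Ioo_subset_Ioo ha hc hs)
  r_nonneg s hs := B.r_nonneg s (Icc_subset_Icc ha hc hs)
  p_nonneg s hs := B.p_nonneg s (Icc_subset_Icc ha hc hs)
  deriv_r s hs := B.deriv_r s (Ioo_subset_Ioo ha hc hs)
  deriv_p s hs := B.deriv_p s (Ioo_subset_Ioo ha hc hs)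

theorem strictAntiOn_radius (B : Branch k f r p a c) : StrictAntiOn r (Icc a c) :=
  strictAntiOn_Icc_of_hasDerivAt B.cont_r fun s hs =>
    ⟨_, B.deriv_r s hs, neg_neg_of_pos (inv_pos.mpr (B.p_pos s hs))⟩

theorem r_pos_of_lt (B : Branch k f r p a c) {s : ℝ} (hs : s ∈ Ico a c) : 0 < r s :=
  (B.r_nonneg c (right_mem_Icc.mpr (hs.1.trans hs.2.le))).trans_lt
    (B.strictAntiOn_radius ⟨hs.1, hs.2.le⟩ (right_mem_Icc.mpr (hs.1.trans hs.2.le)) hs.2)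

theorem r_pos_of_pos_right (B : Branch k f r p a c) (hc : 0 < r c) {s : ℝ} (hs : s ∈ Icc a c) :
    0 < r s :=
  hc.trans_le (B.strictAntiOn_radius.antitoneOn hs (right_mem_Icc.mpr (hs.1.trans hs.2)) hs.2)

theorem hasDerivAt_slope_sq (B : Branch k f r p a c) {s : ℝ} (hs : s ∈ Ioo a c) :
    HasDerivAt (fun s => p s ^ 2) (2 * ((k + 1) * p s / r s - f s)) s := by
  have hr := (B.r_pos s hs).ne'
  have hp := (B.p_pos s hs).ne'
  refine ((B.deriv_p s hs).pow 2).congr_deriv ?_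
  push_cast
  field_simp

theorem hasDerivAt_radius_pow (B : Branch k f r p a c) (m : ℕ) {s : ℝ} (hs : s ∈ Ioo a c) :
    HasDerivAt (fun s => r s ^ (m + 1)) (-((m + 1) * r s ^ m / p s)) s := by
  refine ((B.deriv_r s hs).pow (m + 1)).congr_deriv ?_
  push_cast
  ring

theorem momentum_nonneg (B : Branch k f r p a c) {s : ℝ} (hs : s ∈ Icc a c) :
    0 ≤ momentum k r p s :=
  mul_nonneg (pow_nonneg (B.r_nonneg s hs) _) (B.p_nonneg s hs)

theorem continuousOn_momentum (B : Branch k f r p a c) :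
    ContinuousOn (momentum k r p) (Icc a c) :=
  (B.cont_r.pow _).mul B.cont_p

theorem hasDerivAt_momentum (B : Branch k f r p a c) {s : ℝ} (hs : s ∈ Ioo a c) :
    HasDerivAt (momentum k r p) (-(r s ^ (k + 1) * f s / p s)) s := by
  have hr := (B.r_pos s hs).ne'
  have hp := (B.p_pos s hs).ne'
  refine ((B.hasDerivAt_radius_pow k hs).mul (B.deriv_p s hs)).congr_deriv ?_
  field_simp
  ring

theorem hasDerivAt_momentum_sq (B : Branch k f r p a c) {s : ℝ} (hs : s ∈ Ioo a c) :
    HasDerivAt (fun s => momentum k r p s ^ 2) (-(2 * f s * (r s ^ (k + 1)) ^ 2)) s := by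
  have hp := (B.p_pos s hs).ne'
  refine ((B.hasDerivAt_momentum hs).pow 2).congr_deriv ?_
  rw [momentum]
  push_cast
  field_simp

theorem hasDerivAt_energy (B : Branch k f r p a c) {s : ℝ} (hF : HasDerivAt F (f s) s)
    (hs : s ∈ Ioo a c) : HasDerivAt (energy F p) (2 * (k + 1) * p s / r s) s := by
  refine ((B.hasDerivAt_slope_sq hs).add (hF.const_mul 2)).congr_deriv ?_
  ring

theorem continuousOn_weightedEnergy (B : Branch k f r p a c) (hF : ∀ s, HasDerivAt F (f s) s)
    (m : ℕ) : ContinuousOn (weightedEnergy m F r p) (Icc a c) :=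
  (B.cont_r.pow _).mul ((B.cont_p.pow _).add
    (continuousOn_const.mul fun s _ => (hF s).continuousAt.continuousWithinAt))

theorem hasDerivAt_weightedEnergy (B : Branch k f r p a c) (m : ℕ) {s : ℝ}
    (hF : HasDerivAt F (f s) s) (hs : s ∈ Ioo a c) :
    HasDerivAt (weightedEnergy (m + 1) F r p)
      (r s ^ m * ((2 * k + 1 - m) * p s - 2 * (m + 1) * F s / p s)) s := by
  have hr := (B.r_pos s hs).ne'
  have hp := (B.p_pos s hs).ne'
  refine ((B.hasDerivAt_radius_pow m hs).mul (B.hasDerivAt_energy hF hs)).congr_deriv ?_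
  rw [energy]
  field_simp
  ring

theorem momentum_le (B₁ : Branch k f r₁ p₁ a c) (B₂ : Branch k f r₂ p₂ a c) {s : ℝ}
    (hs : s ∈ Icc a c) (hr : r₁ s ≤ r₂ s) (hp : p₁ s ≤ p₂ s) :
    momentum k r₁ p₁ s ≤ momentum k r₂ p₂ s :=
  mul_le_mul (pow_le_pow_left₀ (B₁.r_nonneg s hs) hr _) hp (B₁.p_nonneg s hs)
    (pow_nonneg (B₂.r_nonneg s hs) _)

theorem continuousOn_slopeGap (B₁ : Branch k f r₁ p₁ a c) (B₂ : Branch k f r₂ p₂ a c) :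
    ContinuousOn (slopeGap k r₁ p₁ p₂) (Icc a c) :=
  (B₁.cont_r.pow _).mul ((B₂.cont_p.pow _).sub (B₁.cont_p.pow _))

theorem hasDerivAt_slopeGap (B₁ : Branch k f r₁ p₁ a c) (B₂ : Branch k f r₂ p₂ a c) {s : ℝ}
    (hs : s ∈ Ioo a c) (hr : r₁ s ≤ r₂ s) (hp : p₁ s < p₂ s) :
    ∃ d, HasDerivAt (slopeGap k r₁ p₁ p₂) d s ∧
      d < -(2 * (k + 1) * r₁ s ^ k * p₁ s * (r₂ s - r₁ s) / r₂ s) := by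
  have r1 := B₁.r_pos s hs
  have p1 := B₁.p_pos s hs
  have r2 := B₂.r_pos s hs
  refine ⟨_, (B₁.hasDerivAt_radius_pow k hs).mul
    ((B₂.hasDerivAt_slope_sq hs).sub (B₁.hasDerivAt_slope_sq hs)), ?_⟩
  have excess : 0 < (k + 1) * r₁ s ^ k * ((p₂ s - p₁ s) ^ 2 / p₁ s +
      2 * (p₂ s - p₁ s) * (r₂ s - r₁ s) / r₂ s) := by
    have : 0 < p₂ s - p₁ s := sub_pos.mpr hp
    have : 0 ≤ r₂ s - r₁ s := sub_nonneg.mpr hr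
    positivity
  refine lt_of_sub_pos (excess.trans_eq ?_)
  have := B₂.p_pos s hs
  field_simp
  ring

theorem strictAntiOn_slopeGap (B₁ : Branch k f r₁ p₁ a c) (B₂ : Branch k f r₂ p₂ a c)
    (hr : ∀ s ∈ Ioo a c, r₁ s ≤ r₂ s) (hp : ∀ s ∈ Ioo a c, p₁ s < p₂ s) :
    StrictAntiOn (slopeGap k r₁ p₁ p₂) (Icc a c) := by
  refine strictAntiOn_Icc_of_hasDerivAt (continuousOn_slopeGap B₁ B₂) fun s hs => ?_
  obtain ⟨d, hd, hlt⟩ := hasDerivAt_slopeGap B₁ B₂ hs (hr s hs) (hp s hs)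
  refine ⟨d, hd, hlt.trans_le (neg_nonpos.mpr ?_)⟩
  have r1 := B₁.r_pos s hs
  have p1 := B₁.p_pos s hs
  have r2 := B₂.r_pos s hs
  have hr' : 0 ≤ r₂ s - r₁ s := sub_nonneg.mpr (hr s hs)
  positivity

theorem slope_lt_of_radius_le (B₁ : Branch k f r₁ p₁ a c) (B₂ : Branch k f r₂ p₂ a c)
    (hc : p₁ c < p₂ c) (hr : ∀ s ∈ Icc a c, r₁ s ≤ r₂ s) : ∀ s ∈ Icc a c, p₁ s < p₂ s := by
  have hpos := pos_of_pos_right (B₂.cont_p.sub B₁.cont_p) (sub_pos.mpr hc) ?_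
  · exact fun s hs => sub_pos.mp (hpos s hs)
  intro s hs hlt
  simp only [Pi.sub_apply, sub_pos] at hlt ⊢
  have hs' : s ∈ Icc a c := ⟨hs.1, hs.2.le⟩
  have hcm : c ∈ Icc a c := ⟨hs.1.trans hs.2.le, le_rfl⟩
  have anti := strictAntiOn_slopeGap (B₁.mono hs.1 le_rfl) (B₂.mono hs.1 le_rfl)
    (fun t ht => hr t ⟨hs.1.trans ht.1.le, ht.2.le⟩) (fun t ht => hlt t ⟨ht.1, ht.2.le⟩)
  have hgap : 0 < slopeGap k r₁ p₁ p₂ s := calc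
    0 ≤ slopeGap k r₁ p₁ p₂ c := mul_nonneg (pow_nonneg (B₁.r_nonneg c hcm) _)
        (sub_nonneg.mpr (pow_le_pow_left₀ (B₁.p_nonneg c hcm) hc.le 2))
    _ < slopeGap k r₁ p₁ p₂ s := anti (left_mem_Icc.mpr hs.2.le) (right_mem_Icc.mpr hs.2.le) hs.2
  exact lt_of_pow_lt_pow_left₀ 2 (B₂.p_nonneg s hs')
    (sub_pos.mp (pos_of_mul_pos_right hgap (pow_nonneg (B₁.r_nonneg s hs') _)))

theorem strictAntiOn_radius_sub (B₁ : Branch k f r₁ p₁ a c) (B₂ : Branch k f r₂ p₂ a c)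
    (hp : ∀ s ∈ Ioo a c, p₁ s < p₂ s) : StrictAntiOn (fun s => r₁ s - r₂ s) (Icc a c) :=
  strictAntiOn_Icc_of_hasDerivAt (B₁.cont_r.sub B₂.cont_r) fun s hs =>
    ⟨_, (B₁.deriv_r s hs).sub (B₂.deriv_r s hs),
      by linarith [inv_strictAnti₀ (B₁.p_pos s hs) (hp s hs)]⟩

theorem radius_le_of_slope_lt (B₁ : Branch k f r₁ p₁ a c) (B₂ : Branch k f r₂ p₂ a c)
    (hp : ∀ s ∈ Ioo a c, p₁ s < p₂ s) (hr : r₂ c ≤ r₁ c) : ∀ s ∈ Icc a c, r₂ s ≤ r₁ s :=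
  fun _ hs => sub_nonneg.mp ((sub_nonneg.mpr hr).trans
    ((strictAntiOn_radius_sub B₁ B₂ hp).antitoneOn hs
      (right_mem_Icc.mpr (hs.1.trans hs.2)) hs.2))

-- After a crossing the slope order keeps `Φ` growing downwards, and the sign of `Φ` in turn
-- enforces the slope order, so that both persist by continuous induction.
theorem slope_lt_of_crossing (B₁ : Branch k f r₁ p₁ a c) (B₂ : Branch k f r₂ p₂ a c)
    {Φ : ℝ → ℝ} (hΦ : ContinuousOn Φ (Icc a c)) (hr : r₂ c ≤ r₁ c) (hc : 0 < Φ c)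
    (hd : ∀ s ∈ Ioo a c, r₂ s ≤ r₁ s → p₁ s < p₂ s → ∃ d, HasDerivAt Φ d s ∧ d ≤ 0)
    (hslope : ∀ s ∈ Icc a c, r₂ s ≤ r₁ s → 0 < Φ s → p₁ s < p₂ s) :
    ∀ s ∈ Icc a c, p₁ s < p₂ s ∧ r₂ s ≤ r₁ s ∧ Φ c ≤ Φ s := by
  have order : ∀ s ∈ Icc a c, (∀ t ∈ Ioc s c, p₁ t < p₂ t) → r₂ s ≤ r₁ s ∧ Φ c ≤ Φ s := by
    intro s hs hlt
    have hsc : s ∈ Icc s c := left_mem_Icc.mpr hs.2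
    have hle := radius_le_of_slope_lt (B₁.mono hs.1 le_rfl) (B₂.mono hs.1 le_rfl)
      (fun t ht => hlt t ⟨ht.1, ht.2.le⟩) hr
    refine ⟨hle s hsc, antitoneOn_Icc_of_hasDerivAt (hΦ.mono (Icc_subset_Icc_left hs.1))
      (fun t ht => ?_) hsc (right_mem_Icc.mpr hs.2) hs.2⟩
    exact hd t ⟨hs.1.trans_lt ht.1, ht.2⟩ (hle t (Ioo_subset_Icc_self ht)) (hlt t ⟨ht.1, ht.2.le⟩)
  intro s hs
  have hpos := pos_of_pos_right (B₂.cont_p.sub B₁.cont_p)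
    (sub_pos.mpr (hslope c (right_mem_Icc.mpr (hs.1.trans hs.2)) hr hc)) fun t ht hlt => by
      simp only [Pi.sub_apply, sub_pos] at hlt ⊢
      obtain ⟨hle, hΦle⟩ := order t ⟨ht.1, ht.2.le⟩ hlt
      exact hslope t ⟨ht.1, ht.2.le⟩ hle (hc.trans_le hΦle)
  have hlt : ∀ t ∈ Icc a c, p₁ t < p₂ t := fun t ht => sub_pos.mp (hpos t ht)
  exact ⟨hlt s hs, order s hs fun t ht => hlt t ⟨hs.1.trans ht.1.le, ht.2⟩⟩

theorem slope_lt_of_momentum_lt (B₁ : Branch k f r₁ p₁ a c) (B₂ : Branch k f r₂ p₂ a c) {s : ℝ}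
    (hs : s ∈ Icc a c) (hr : r₂ s ≤ r₁ s) (hy : momentum k r₁ p₁ s < momentum k r₂ p₂ s) :
    p₁ s < p₂ s :=
  lt_of_pow_mul_lt_pow_mul (k + 1) (B₂.r_nonneg s hs) hr (B₁.p_nonneg s hs) hy

theorem momentum_lt_of_nonpos (B₁ : Branch k f r₁ p₁ a c) (B₂ : Branch k f r₂ p₂ a c)
    (hf : ∀ s ∈ Icc a c, f s ≤ 0) (hr : r₂ c ≤ r₁ c)
    (hy : momentum k r₁ p₁ c < momentum k r₂ p₂ c) :
    ∀ s ∈ Icc a c, p₁ s < p₂ s ∧ momentum k r₁ p₁ s < momentum k r₂ p₂ s := by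
  intro s hs
  have lt_of_sq : ∀ t ∈ Icc a c, 0 < momentum k r₂ p₂ t ^ 2 - momentum k r₁ p₁ t ^ 2 →
      momentum k r₁ p₁ t < momentum k r₂ p₂ t := fun t ht h =>
    lt_of_pow_lt_pow_left₀ 2 (B₂.momentum_nonneg ht) (sub_pos.mp h)
  have hc : 0 < momentum k r₂ p₂ c ^ 2 - momentum k r₁ p₁ c ^ 2 := sub_pos.mpr
    (pow_lt_pow_left₀ hy (B₁.momentum_nonneg (right_mem_Icc.mpr (hs.1.trans hs.2))) two_ne_zero)
  obtain ⟨hp, -, hΦ⟩ := slope_lt_of_crossing B₁ B₂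
    (Φ := fun t => momentum k r₂ p₂ t ^ 2 - momentum k r₁ p₁ t ^ 2)
    ((B₂.continuousOn_momentum.pow 2).sub (B₁.continuousOn_momentum.pow 2)) hr hc
    (fun t ht hrt _ => ⟨_, (B₂.hasDerivAt_momentum_sq ht).sub (B₁.hasDerivAt_momentum_sq ht), by
      have hsq : (r₂ t ^ (k + 1)) ^ 2 ≤ (r₁ t ^ (k + 1)) ^ 2 := by
        have := B₂.r_pos t ht
        gcongr
      nlinarith [hf t (Ioo_subset_Icc_self ht)]⟩)
    (fun t ht hrt h => slope_lt_of_momentum_lt B₁ B₂ ht hrt (lt_of_sq t ht h)) s hs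
  exact ⟨hp, lt_of_sq s hs (hc.trans_le hΦ)⟩

theorem weightedEnergy_lt_of_nonpos (B₁ : Branch k f r₁ p₁ a c) (B₂ : Branch k f r₂ p₂ a c)
    (hF : ∀ s, HasDerivAt F (f s) s) (hF0 : ∀ s ∈ Icc a c, F s ≤ 0)
    (hE : ∀ s ∈ Icc a c, 0 ≤ energy F p₁ s) (hr : r₂ c ≤ r₁ c)
    (hW : weightedEnergy (2 * k + 2) F r₁ p₁ c < weightedEnergy (2 * k + 2) F r₂ p₂ c) :
    ∀ s ∈ Icc a c, r₂ s ≤ r₁ s ∧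
      weightedEnergy (2 * k + 2) F r₁ p₁ s < weightedEnergy (2 * k + 2) F r₂ p₂ s := by
  intro s hs
  obtain ⟨-, hrs, hΦ⟩ := slope_lt_of_crossing B₁ B₂
    (Φ := fun t => weightedEnergy (2 * k + 2) F r₂ p₂ t - weightedEnergy (2 * k + 2) F r₁ p₁ t)
    ((B₂.continuousOn_weightedEnergy hF _).sub (B₁.continuousOn_weightedEnergy hF _)) hr
    (sub_pos.mpr hW)
    (fun t ht hrt hpt => ⟨_, (B₂.hasDerivAt_weightedEnergy (2 * k + 1) (hF t) ht).sub
      (B₁.hasDerivAt_weightedEnergy (2 * k + 1) (hF t) ht), by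
      have r1 := B₁.r_pos t ht
      have r2 := B₂.r_pos t ht
      have p1 := B₁.p_pos t ht
      have hquot : r₂ t ^ (2 * k + 1) / p₂ t ≤ r₁ t ^ (2 * k + 1) / p₁ t := by gcongr
      have hcoef : 0 ≤ 4 * ((k : ℝ) + 1) * -F t :=
        mul_nonneg (by positivity) (neg_nonneg.mpr (hF0 t (Ioo_subset_Icc_self ht)))
      have := mul_le_mul_of_nonneg_left hquot hcoef
      push_cast
      linear_combination this⟩)
    (fun t ht hrt h => slope_lt_of_energy_lt (B₂.p_nonneg t ht)
      (lt_of_pow_mul_lt_pow_mul _ (B₂.r_nonneg t ht) hrt (hE t ht) (sub_pos.mp h))) s hs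
  exact ⟨hrs, sub_pos.mp ((sub_pos.mpr hW).trans_le hΦ)⟩

end Branch

/-! ### The Pohozaev functional -/

/-- The Pohozaev functional `2 n (F/f) rⁿ⁻¹ p - rⁿ (p² + 2 F)` in dimension `n = k + 2`, with `G` in
the role of `F / f`. -/
def pohozaev (k : ℕ) (F G r p : ℝ → ℝ) (s : ℝ) : ℝ :=
  2 * (k + 2) * G s * momentum k r p s - weightedEnergy (k + 2) F r p s

/-- `G` is a continuous version of `F / f` on `[a, c]` satisfying (f4) in dimension `k + 2`, in the
form `2 n G' ≥ n - 2`. -/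
structure PohozaevWeight (k : ℕ) (f F G : ℝ → ℝ) (a c : ℝ) : Prop where
  cont : ContinuousOn G (Icc a c)
  mul_eq : ∀ s ∈ Icc a c, G s * f s = F s
  diff : ∀ s ∈ Ioo a c, DifferentiableAt ℝ G s
  le_deriv : ∀ s ∈ Ioo a c, (k : ℝ) ≤ 2 * (k + 2) * deriv G s

theorem PohozaevWeight.mono (H : PohozaevWeight k f F G a c) {a' c' : ℝ} (ha : a ≤ a')
    (hc : c' ≤ c) : PohozaevWeight k f F G a' c' where
  cont := H.cont.mono (Icc_subset_Icc ha hc)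
  mul_eq s hs := H.mul_eq s (Icc_subset_Icc ha hc hs)
  diff s hs := H.diff s (Ioo_subset_Ioo ha hc hs)
  le_deriv s hs := H.le_deriv s (Ioo_subset_Ioo ha hc hs)

namespace Branch

theorem continuousOn_pohozaev (B : Branch k f r p a c) (hF : ∀ s, HasDerivAt F (f s) s)
    (H : PohozaevWeight k f F G a c) : ContinuousOn (pohozaev k F G r p) (Icc a c) :=
  ((continuousOn_const.mul H.cont).mul B.continuousOn_momentum).sub
    (B.continuousOn_weightedEnergy hF _)

theorem hasDerivAt_pohozaev (B : Branch k f r p a c) (hF : ∀ s, HasDerivAt F (f s) s)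
    (H : PohozaevWeight k f F G a c) {s : ℝ} (hs : s ∈ Ioo a c) :
    HasDerivAt (pohozaev k F G r p) ((2 * (k + 2) * deriv G s - k) * momentum k r p s) s := by
  have hp := (B.p_pos s hs).ne'
  refine ((((H.diff s hs).hasDerivAt.const_mul (2 * ((k : ℝ) + 2))).mul
    (B.hasDerivAt_momentum hs)).sub
    (B.hasDerivAt_weightedEnergy (k + 1) (hF s) hs)).congr_deriv ?_
  rw [← H.mul_eq s (Ioo_subset_Icc_self hs), momentum]
  push_cast
  field_simp
  ring

theorem monotoneOn_pohozaev (B : Branch k f r p a c) (hF : ∀ s, HasDerivAt F (f s) s)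
    (H : PohozaevWeight k f F G a c) : MonotoneOn (pohozaev k F G r p) (Icc a c) :=
  monotoneOn_Icc_of_hasDerivAt (B.continuousOn_pohozaev hF H) fun s hs =>
    ⟨_, B.hasDerivAt_pohozaev hF H hs, mul_nonneg (sub_nonneg.mpr (H.le_deriv s hs))
      (B.momentum_nonneg (Ioo_subset_Icc_self hs))⟩

theorem pohozaev_lt_of_momentum_le (B₁ : Branch k f r₁ p₁ a c) (B₂ : Branch k f r₂ p₂ a c)
    (hF : ∀ s, HasDerivAt F (f s) s) (H : PohozaevWeight k f F G a c) (hac : a ≤ c)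
    (hy : ∀ s ∈ Ioo a c, momentum k r₁ p₁ s ≤ momentum k r₂ p₂ s)
    (hc : pohozaev k F G r₂ p₂ c < pohozaev k F G r₁ p₁ c) :
    pohozaev k F G r₂ p₂ a < pohozaev k F G r₁ p₁ a := by
  have anti : AntitoneOn (fun s => pohozaev k F G r₁ p₁ s - pohozaev k F G r₂ p₂ s) (Icc a c) :=
    antitoneOn_Icc_of_hasDerivAt
      ((B₁.continuousOn_pohozaev hF H).sub (B₂.continuousOn_pohozaev hF H)) fun s hs =>
      ⟨_, (B₁.hasDerivAt_pohozaev hF H hs).sub (B₂.hasDerivAt_pohozaev hF H hs),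
        by nlinarith [H.le_deriv s hs, hy s hs]⟩
  exact sub_pos.mp ((sub_pos.mpr hc).trans_le
    (anti (left_mem_Icc.mpr hac) (right_mem_Icc.mpr hac) hac))

/-! ### Comparison of two first branches -/

section FirstBranches

variable {z d : ℝ}

theorem slope_lt_and_momentum_le_of_nonpos (B₁ : Branch k f r₁ p₁ a c)
    (B₂ : Branch k f r₂ p₂ a c) (hf : ∀ s ∈ Icc a c, f s ≤ 0) (hrc : 0 < r₁ c)
    (hr : r₁ c ≤ r₂ c) (hp : p₁ c < p₂ c) :
    ∀ s ∈ Icc a c, p₁ s < p₂ s ∧ momentum k r₁ p₁ s ≤ momentum k r₂ p₂ s := by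
  by_cases hall : ∀ s ∈ Icc a c, r₁ s - r₂ s ≤ 0
  · have hle : ∀ s ∈ Icc a c, r₁ s ≤ r₂ s := fun s hs => sub_nonpos.mp (hall s hs)
    intro s hs
    have hps := slope_lt_of_radius_le B₁ B₂ hp hle s hs
    exact ⟨hps, momentum_le B₁ B₂ hs (hle s hs) hps.le⟩
  obtain ⟨σ, hσ, hrσ, hle⟩ := exists_last_zero (B₁.cont_r.sub B₂.cont_r) (sub_nonpos.mpr hr) hall
  simp only [Pi.sub_apply, sub_nonpos] at hrσ hle
  have hpσ := slope_lt_of_radius_le (B₁.mono hσ.1 le_rfl) (B₂.mono hσ.1 le_rfl) hp hle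
  have hyσ : momentum k r₁ p₁ σ < momentum k r₂ p₂ σ := by
    rw [momentum, momentum, ← sub_eq_zero.mp hrσ]
    exact mul_lt_mul_of_pos_left (hpσ σ (left_mem_Icc.mpr hσ.2))
      (pow_pos (B₁.r_pos_of_pos_right hrc hσ) _)
  intro s hs
  rcases le_total s σ with hsσ | hσs
  · have := momentum_lt_of_nonpos (B₁.mono le_rfl hσ.2) (B₂.mono le_rfl hσ.2)
      (fun t ht => hf t ⟨ht.1, ht.2.trans hσ.2⟩) (sub_eq_zero.mp hrσ).ge hyσ s ⟨hs.1, hsσ⟩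
    exact ⟨this.1, this.2.le⟩
  · have hs' : s ∈ Icc σ c := ⟨hσs, hs.2⟩
    exact ⟨hpσ s hs', momentum_le B₁ B₂ hs (hle s hs') (hpσ s hs').le⟩

theorem radius_le_or_weightedEnergy_lt (B₁ : Branch k f r₁ p₁ a c) (B₂ : Branch k f r₂ p₂ a c)
    (hF : ∀ s, HasDerivAt F (f s) s) (hd : d ∈ Ico a c) (hp : p₁ c < p₂ c)
    (hr : ∀ s ∈ Icc d c, r₁ s ≤ r₂ s) (hF0 : ∀ s ∈ Icc a d, F s ≤ 0)
    (hE : ∀ s ∈ Icc a d, 0 ≤ energy F p₁ s) :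
    (r₁ a ≤ r₂ a ∧ p₁ a < p₂ a) ∨
      (r₂ a ≤ r₁ a ∧
        weightedEnergy (2 * k + 2) F r₁ p₁ a < weightedEnergy (2 * k + 2) F r₂ p₂ a) := by
  have extend : ∀ {σ}, (∀ s ∈ Icc σ d, r₁ s ≤ r₂ s) → ∀ s ∈ Icc σ c, r₁ s ≤ r₂ s :=
    fun h s hs => (le_total s d).elim (fun hsd => h s ⟨hs.1, hsd⟩) fun hds => hr s ⟨hds, hs.2⟩
  have ham : a ∈ Icc a c := ⟨le_rfl, hd.1.trans hd.2.le⟩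
  by_cases hall : ∀ s ∈ Icc a d, r₁ s - r₂ s ≤ 0
  · have hle := extend fun s hs => sub_nonpos.mp (hall s hs)
    exact Or.inl ⟨hle a ham, slope_lt_of_radius_le B₁ B₂ hp hle a ham⟩
  obtain ⟨σ, hσ, hrσ, hσle⟩ := exists_last_zero
    ((B₁.mono le_rfl hd.2.le).cont_r.sub (B₂.mono le_rfl hd.2.le).cont_r)
    (sub_nonpos.mpr (hr d ⟨le_rfl, hd.2.le⟩)) hall
  have hrσ' : r₁ σ = r₂ σ := sub_eq_zero.mp hrσ
  have hσc : σ < c := hσ.2.trans_lt hd.2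
  have hpσ := slope_lt_of_radius_le (B₁.mono hσ.1 le_rfl) (B₂.mono hσ.1 le_rfl) hp
    (extend fun s hs => sub_nonpos.mp (hσle s hs)) σ (left_mem_Icc.mpr hσc.le)
  refine Or.inr (weightedEnergy_lt_of_nonpos (B₁.mono le_rfl hσc.le) (B₂.mono le_rfl hσc.le) hF
    (fun s hs => hF0 s ⟨hs.1, hs.2.trans hσ.2⟩) (fun s hs => hE s ⟨hs.1, hs.2.trans hσ.2⟩)
    hrσ'.ge ?_ a (left_mem_Icc.mpr hσ.1))
  rw [weightedEnergy, weightedEnergy, ← hrσ']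
  exact mul_lt_mul_of_pos_left (energy_lt_energy (B₁.p_nonneg σ ⟨hσ.1, hσc.le⟩) hpσ)
    (pow_pos (B₁.r_pos_of_lt ⟨hσ.1, hσc⟩) _)

theorem slope_lt_and_pohozaev_lt (B₁ : Branch k f r₁ p₁ a c) (B₂ : Branch k f r₂ p₂ a c)
    (hF : ∀ s, HasDerivAt F (f s) s) (H : PohozaevWeight k f F G a z) (haz : a < z)
    (hd : d ∈ Ico z c) (hp : p₁ c < p₂ c) (hr : ∀ s ∈ Icc d c, r₁ s ≤ r₂ s)
    (hF0 : ∀ s ∈ Icc z d, F s ≤ 0) (hFz : F z = 0) (hGz : G z = 0)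
    (hE : ∀ s ∈ Icc z d, 0 ≤ energy F p₁ s) (hf : ∀ s ∈ Icc a z, f s ≤ 0) :
    p₁ a < p₂ a ∧ pohozaev k F G r₂ p₂ a < pohozaev k F G r₁ p₁ a := by
  have hz : z ∈ Ioo a c := ⟨haz, hd.1.trans_lt hd.2⟩
  have r1 := B₁.r_pos z hz
  have B₁' := B₁.mono le_rfl hz.2.le
  have B₂' := B₂.mono le_rfl hz.2.le
  have energy_eq : ∀ p : ℝ → ℝ, energy F p z = p z ^ 2 := fun p => by rw [energy, hFz]; ring
  obtain ⟨hlow, hWz⟩ : (∀ s ∈ Icc a z, p₁ s < p₂ s ∧ momentum k r₁ p₁ s ≤ momentum k r₂ p₂ s) ∧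
      weightedEnergy (k + 2) F r₁ p₁ z < weightedEnergy (k + 2) F r₂ p₂ z := by
    rcases radius_le_or_weightedEnergy_lt (B₁.mono haz.le le_rfl) (B₂.mono haz.le le_rfl) hF hd hp
      hr hF0 hE with ⟨hrz, hpz⟩ | ⟨hrz, hWz⟩
    · refine ⟨slope_lt_and_momentum_le_of_nonpos B₁' B₂' hf r1 hrz hpz, ?_⟩
      rw [weightedEnergy, weightedEnergy, energy_eq, energy_eq]
      have hp1 := B₁.p_nonneg z (Ioo_subset_Icc_self hz)
      exact mul_lt_mul' (pow_le_pow_left₀ r1.le hrz _) (pow_lt_pow_left₀ hpz hp1 two_ne_zero)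
        (sq_nonneg _) (pow_pos (r1.trans_le hrz) _)
    · have hyz : momentum k r₁ p₁ z < momentum k r₂ p₂ z := by
        refine lt_of_pow_lt_pow_left₀ 2 (B₂'.momentum_nonneg (right_mem_Icc.mpr haz.le)) ?_
        rw [weightedEnergy, weightedEnergy, energy_eq, energy_eq] at hWz
        rw [momentum, momentum]
        linear_combination hWz
      refine ⟨fun s hs => (momentum_lt_of_nonpos B₁' B₂' hf hrz hyz s hs).imp_right le_of_lt, ?_⟩
      refine lt_of_pow_mul_lt_pow_mul k (B₂.r_pos z hz).le hrz
        (mul_nonneg (pow_nonneg r1.le _) (hE z ⟨le_rfl, hd.1⟩)) ?_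
      rw [weightedEnergy, weightedEnergy] at hWz ⊢
      linear_combination hWz
  refine ⟨(hlow a (left_mem_Icc.mpr haz.le)).1, pohozaev_lt_of_momentum_le B₁' B₂' hF H haz.le
    (fun s hs => (hlow s (Ioo_subset_Icc_self hs)).2) ?_⟩
  simpa only [pohozaev, hGz, mul_zero, zero_mul, zero_sub, neg_lt_neg_iff] using hWz

end FirstBranches

/-! ### Comparison of two second branches -/

theorem antitoneOn_pohozaev_sub_quotient (B₁ : Branch k f r₁ p₁ a c) (B₂ : Branch k f r₂ p₂ a c)
    (hF : ∀ s, HasDerivAt F (f s) s) (H : PohozaevWeight k f F G a c)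
    (hf : ∀ s ∈ Ioo a c, 0 ≤ f s) (hP₂ : ∀ s ∈ Ioo a c, pohozaev k F G r₂ p₂ s ≤ 0)
    (hp : ∀ s ∈ Ioo a c, p₁ s < p₂ s) (hy : ∀ s ∈ Icc a c, 0 < momentum k r₂ p₂ s) :
    AntitoneOn (fun s => pohozaev k F G r₁ p₁ s -
      momentum k r₁ p₁ s / momentum k r₂ p₂ s * pohozaev k F G r₂ p₂ s) (Icc a c) := by
  refine antitoneOn_Icc_of_hasDerivAt ((B₁.continuousOn_pohozaev hF H).sub
    ((B₁.continuousOn_momentum.div B₂.continuousOn_momentum fun s hs => (hy s hs).ne').mul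
      (B₂.continuousOn_pohozaev hF H))) fun s hs =>
    ⟨momentum k r₁ p₁ s / momentum k r₂ p₂ s * (f s * (1 / p₁ s ^ 2 - 1 / p₂ s ^ 2)) *
      pohozaev k F G r₂ p₂ s, ?_, ?_⟩
  · have r1 := (B₁.r_pos s hs).ne'
    have p1 := (B₁.p_pos s hs).ne'
    have r2 := (B₂.r_pos s hs).ne'
    have p2 := (B₂.p_pos s hs).ne'
    refine ((B₁.hasDerivAt_pohozaev hF H hs).sub (((B₁.hasDerivAt_momentum hs).div
      (B₂.hasDerivAt_momentum hs) (hy s (Ioo_subset_Icc_self hs)).ne').mul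
      (B₂.hasDerivAt_pohozaev hF H hs))).congr_deriv ?_
    generalize pohozaev k F G r₂ p₂ s = P
    simp only [Pi.div_apply, momentum]
    field_simp
    ring
  · have p1 := B₁.p_pos s hs
    have hinv : 1 / p₂ s ^ 2 ≤ 1 / p₁ s ^ 2 := by
      have := hp s hs
      gcongr
    exact mul_nonpos_of_nonneg_of_nonpos (mul_nonneg
      (div_nonneg (B₁.momentum_nonneg (Ioo_subset_Icc_self hs)) (hy s (Ioo_subset_Icc_self hs)).le)
      (mul_nonneg (hf s hs) (sub_nonneg.mpr hinv))) (hP₂ s hs)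

theorem momentum_mul_pohozaev_lt (B₁ : Branch k f r₁ p₁ a c) (B₂ : Branch k f r₂ p₂ a c)
    (hF : ∀ s, HasDerivAt F (f s) s) (H : PohozaevWeight k f F G a c) (hac : a < c)
    (hf : ∀ s ∈ Ioo a c, 0 ≤ f s) (hP₂ : ∀ s ∈ Ioo a c, pohozaev k F G r₂ p₂ s ≤ 0)
    (hPc : pohozaev k F G r₂ p₂ c < pohozaev k F G r₁ p₁ c) (hpc : p₁ c = 0)
    (hp : ∀ s ∈ Ioo a c, p₁ s < p₂ s) (hypos : ∀ s ∈ Icc a c, 0 < momentum k r₂ p₂ s)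
    (hy : momentum k r₂ p₂ a ≤ momentum k r₁ p₁ a) :
    momentum k r₁ p₁ a * pohozaev k F G r₂ p₂ a <
      momentum k r₂ p₂ a * pohozaev k F G r₁ p₁ a := by
  have ham : a ∈ Icc a c := left_mem_Icc.mpr hac.le
  have hcm : c ∈ Icc a c := right_mem_Icc.mpr hac.le
  have hyc : momentum k r₁ p₁ c - momentum k r₂ p₂ c ≤ 0 := by
    rw [momentum, hpc, mul_zero, zero_sub]
    exact neg_nonpos.mpr (hypos c hcm).le
  obtain ⟨σ, hσ, hyσ, hyle⟩ : ∃ σ ∈ Icc a c, momentum k r₁ p₁ σ = momentum k r₂ p₂ σ ∧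
      ∀ s ∈ Icc σ c, momentum k r₁ p₁ s ≤ momentum k r₂ p₂ s := by
    by_cases hall : ∀ s ∈ Icc a c, momentum k r₁ p₁ s - momentum k r₂ p₂ s ≤ 0
    · exact ⟨a, ham, le_antisymm (sub_nonpos.mp (hall a ham)) hy,
        fun s hs => sub_nonpos.mp (hall s hs)⟩
    · obtain ⟨σ, hσ, h0, hle⟩ := exists_last_zero
        (B₁.continuousOn_momentum.sub B₂.continuousOn_momentum) hyc hall
      exact ⟨σ, hσ, sub_eq_zero.mp h0, fun s hs => sub_nonpos.mp (hle s hs)⟩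
  have hPσ : pohozaev k F G r₂ p₂ σ < pohozaev k F G r₁ p₁ σ :=
    pohozaev_lt_of_momentum_le (B₁.mono hσ.1 le_rfl) (B₂.mono hσ.1 le_rfl) hF
      (H.mono hσ.1 le_rfl) hσ.2 (fun s hs => hyle s (Ioo_subset_Icc_self hs)) hPc
  have hsub : Ioo a σ ⊆ Ioo a c := Ioo_subset_Ioo_right hσ.2
  have anti := antitoneOn_pohozaev_sub_quotient (B₁.mono le_rfl hσ.2) (B₂.mono le_rfl hσ.2) hF
    (H.mono le_rfl hσ.2) (fun s hs => hf s (hsub hs)) (fun s hs => hP₂ s (hsub hs))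
    (fun s hs => hp s (hsub hs)) (fun s hs => hypos s ⟨hs.1, hs.2.trans hσ.2⟩)
    (left_mem_Icc.mpr hσ.1) (right_mem_Icc.mpr hσ.1) hσ.1
  simp only [hyσ, div_self (hypos σ hσ).ne', one_mul] at anti
  have hquot := (sub_pos.mpr hPσ).trans_le anti
  rw [sub_pos, div_mul_eq_mul_div, div_lt_iff₀ (hypos a ham)] at hquot
  linarith

variable {m : ℝ}

theorem pohozaev_cross_pos (B₁ : Branch k f r₁ p₁ a m) (B₂ : Branch k f r₂ p₂ a m)
    (hF : ∀ s, HasDerivAt F (f s) s) (H : PohozaevWeight k f F G a m) (ham : a < m)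
    (hf : ∀ s ∈ Ioo a m, 0 ≤ f s) (hP₂ : ∀ s ∈ Ioo a m, pohozaev k F G r₂ p₂ s ≤ 0)
    (hPm : pohozaev k F G r₂ p₂ m < pohozaev k F G r₁ p₁ m) (hpm : p₁ m = 0)
    (hr₂ : 0 < r₂ m) (hp₂ : ∀ s ∈ Icc a m, 0 < p₂ s) (hp : ∀ s ∈ Ioo a m, p₁ s < p₂ s)
    (hy : momentum k r₂ p₂ a ≤ momentum k r₁ p₁ a) :
    0 < p₁ a * p₂ a * (r₂ a * p₂ a - r₁ a * p₁ a) + 2 * F a * (p₁ a * r₂ a - p₂ a * r₁ a) := by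
  have hlt := momentum_mul_pohozaev_lt B₁ B₂ hF H ham hf hP₂ hPm hpm hp
    (fun s hs => mul_pos (pow_pos (B₂.r_pos_of_pos_right hr₂ hs) _) (hp₂ s hs)) hy
  have r1 : 0 < r₁ a := B₁.r_pos_of_lt ⟨le_rfl, ham⟩
  have r2 : 0 < r₂ a := B₂.r_pos_of_lt ⟨le_rfl, ham⟩
  refine pos_of_mul_pos_right (a := r₁ a ^ (k + 1) * r₂ a ^ (k + 1)) ?_ (by positivity)
  rw [pohozaev, pohozaev] at hlt
  simp only [momentum, weightedEnergy, energy] at hlt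
  linear_combination hlt

theorem slope_lt_of_pohozaev_lt (B₁ : Branch k f r₁ p₁ a m) (B₂ : Branch k f r₂ p₂ a m)
    (hF : ∀ s, HasDerivAt F (f s) s) (H : PohozaevWeight k f F G a m)
    (hf : ∀ s ∈ Ioo a m, 0 ≤ f s) (hF0 : ∀ s ∈ Icc a m, 0 ≤ F s)
    (hP₂ : ∀ s ∈ Ioo a m, pohozaev k F G r₂ p₂ s ≤ 0)
    (hPm : pohozaev k F G r₂ p₂ m < pohozaev k F G r₁ p₁ m) (hpm : p₁ m = 0)
    (hr₂ : 0 < r₂ m) (hp₂ : ∀ s ∈ Icc a m, 0 < p₂ s) : ∀ s ∈ Icc a m, p₁ s < p₂ s := by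
  intro s₀ hs₀
  have hpm' : p₁ m < p₂ m := hpm ▸ hp₂ m (right_mem_Icc.mpr (hs₀.1.trans hs₀.2))
  refine sub_pos.mp (pos_of_pos_right (B₂.cont_p.sub B₁.cont_p) (sub_pos.mpr hpm') ?_ s₀ hs₀)
  intro s hs hpos
  have hlt : ∀ t ∈ Ioo s m, p₁ t < p₂ t := fun t ht => sub_pos.mp (hpos t ⟨ht.1, ht.2.le⟩)
  have B₁' := B₁.mono hs.1 le_rfl
  have B₂' := B₂.mono hs.1 le_rfl
  have hsm : s ∈ Icc s m := left_mem_Icc.mpr hs.2.le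
  refine (nonneg_of_pos_Ioc hs.2 (B₂'.cont_p.sub B₁'.cont_p) hpos).lt_of_ne fun h0 => ?_
  have heq : p₁ s = p₂ s := (sub_eq_zero.mp h0.symm).symm
  rcases le_or_gt (r₁ s) (r₂ s) with hr | hr
  · have hle : ∀ t ∈ Icc s m, r₁ t ≤ r₂ t := fun t ht => sub_nonpos.mp
      (((strictAntiOn_radius_sub B₁' B₂' hlt).antitoneOn hsm ht ht.1).trans (sub_nonpos.mpr hr))
    exact (slope_lt_of_radius_le B₁' B₂' hpm' hle s hsm).ne heq
  · have hsub : Ioo s m ⊆ Ioo a m := Ioo_subset_Ioo_left hs.1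
    have p2 : 0 < p₂ s := hp₂ s ⟨hs.1, hs.2.le⟩
    have r2 : 0 < r₂ s := B₂.r_pos_of_lt hs
    have hFs : 0 ≤ F s := hF0 s ⟨hs.1, hs.2.le⟩
    have cross := pohozaev_cross_pos B₁' B₂' hF (H.mono hs.1 le_rfl) hs.2
      (fun t ht => hf t (hsub ht)) (fun t ht => hP₂ t (hsub ht)) hPm hpm hr₂
      (fun t ht => hp₂ t ⟨hs.1.trans ht.1, ht.2⟩) hlt (by
        rw [momentum, momentum, heq]
        gcongr)
    rw [heq] at cross
    have hprod : 0 < (r₂ s - r₁ s) * (p₂ s * (p₂ s ^ 2 + 2 * F s)) := by linear_combination cross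
    exact hprod.not_ge (mul_nonpos_of_nonpos_of_nonneg (sub_nonpos.mpr hr.le) (by positivity))

theorem radius_mul_slope_lt_of_pohozaev_lt (B₁ : Branch k f r₁ p₁ a m)
    (B₂ : Branch k f r₂ p₂ a m) (hF : ∀ s, HasDerivAt F (f s) s)
    (H : PohozaevWeight k f F G a m) (ham : a < m) (hf : ∀ s ∈ Ioo a m, 0 ≤ f s) (hFa : F a = 0)
    (hP₂ : ∀ s ∈ Ioo a m, pohozaev k F G r₂ p₂ s ≤ 0)
    (hPm : pohozaev k F G r₂ p₂ m < pohozaev k F G r₁ p₁ m) (hpm : p₁ m = 0)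
    (hr₂ : 0 < r₂ m) (hp₂ : ∀ s ∈ Icc a m, 0 < p₂ s) (hp : ∀ s ∈ Ioo a m, p₁ s < p₂ s)
    (hra : r₂ a ≤ r₁ a) : r₁ a * p₁ a < r₂ a * p₂ a := by
  have ha : a ∈ Icc a m := left_mem_Icc.mpr ham.le
  rcases le_or_gt (momentum k r₂ p₂ a) (momentum k r₁ p₁ a) with hy | hy
  · have cross := pohozaev_cross_pos B₁ B₂ hF H ham hf hP₂ hPm hpm hr₂ hp₂ hp hy
    rw [hFa, mul_zero, zero_mul, add_zero] at cross
    exact sub_pos.mp (pos_of_mul_pos_right cross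
      (mul_nonneg (B₁.p_nonneg a ha) (hp₂ a ha).le))
  · refine lt_of_pow_mul_lt_pow_mul k (B₂.r_nonneg a ha) hra
      (mul_nonneg (B₁.r_nonneg a ha) (B₁.p_nonneg a ha)) ?_
    rw [momentum, momentum] at hy
    linear_combination hy

theorem weightedSpeed_rate_le {x y A κ : ℝ} (hA : A ≤ 0) (hx : 0 < x) (hxy : x ≤ y)
    (hE : 0 < x ^ 2 + 2 * A) (hκ : 0 ≤ κ) :
    (κ * y - 2 * A / y) / √(y ^ 2 + 2 * A) ≤ (κ * x - 2 * A / x) / √(x ^ 2 + 2 * A) := by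
  have : 0 < y := hx.trans_le hxy
  have hxy2 : x ^ 2 ≤ y ^ 2 := by gcongr
  have hE' : 0 < y ^ 2 + 2 * A := by linarith
  have h1 : y / √(y ^ 2 + 2 * A) ≤ x / √(x ^ 2 + 2 * A) := by
    rw [div_le_div_iff₀ (Real.sqrt_pos.mpr hE') (Real.sqrt_pos.mpr hE)]
    refine le_of_sq_le_sq ?_ (by positivity)
    rw [mul_pow, mul_pow, Real.sq_sqrt hE.le, Real.sq_sqrt hE'.le]
    nlinarith
  have h2 : 1 / y / √(y ^ 2 + 2 * A) ≤ 1 / x / √(x ^ 2 + 2 * A) := by gcongr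
  have h3 := mul_le_mul_of_nonneg_left h1 hκ
  have h4 := mul_le_mul_of_nonneg_left h2 (show 0 ≤ -(2 * A) by linarith)
  linear_combination h3 + h4

theorem continuousOn_weightedSpeed (B : Branch k f r p a c) (hF : ∀ s, HasDerivAt F (f s) s) :
    ContinuousOn (weightedSpeed F r p) (Icc a c) :=
  B.cont_r.mul ((B.cont_p.pow _).add
    (continuousOn_const.mul fun s _ => (hF s).continuousAt.continuousWithinAt)).sqrt

theorem hasDerivAt_weightedSpeed (B : Branch k f r p a c) {s : ℝ} (hF : HasDerivAt F (f s) s)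
    (hs : s ∈ Ioo a c) (hE : 0 < energy F p s) :
    HasDerivAt (weightedSpeed F r p) ((k * p s - 2 * F s / p s) / √(energy F p s)) s := by
  have hr := (B.r_pos s hs).ne'
  have hp := (B.p_pos s hs).ne'
  have hq := (Real.sqrt_pos.mpr hE).ne'
  refine ((B.deriv_r s hs).mul ((B.hasDerivAt_energy hF hs).sqrt hE.ne')).congr_deriv ?_
  field_simp
  rw [Real.sq_sqrt hE.le, energy]
  ring

theorem weightedSpeed_sub_le (B₁ : Branch k f r₁ p₁ a c) (B₂ : Branch k f r₂ p₂ a c)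
    (hF : ∀ s, HasDerivAt F (f s) s) (hF0 : ∀ s ∈ Ioo a c, F s ≤ 0)
    (hE : ∀ s ∈ Ioo a c, 0 < energy F p₁ s) (hr : r₂ c ≤ r₁ c)
    (hW : weightedSpeed F r₁ p₁ c < weightedSpeed F r₂ p₂ c) :
    ∀ s ∈ Icc a c, p₁ s < p₂ s ∧ r₂ s ≤ r₁ s ∧
      weightedSpeed F r₂ p₂ c - weightedSpeed F r₁ p₁ c ≤
        weightedSpeed F r₂ p₂ s - weightedSpeed F r₁ p₁ s := by
  refine slope_lt_of_crossing B₁ B₂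
    (Φ := fun s => weightedSpeed F r₂ p₂ s - weightedSpeed F r₁ p₁ s)
    ((B₂.continuousOn_weightedSpeed hF).sub (B₁.continuousOn_weightedSpeed hF)) hr
    (sub_pos.mpr hW) (fun s hs _ hps => ?_) fun s hs hrs hWs => ?_
  · have p1 := B₁.p_pos s hs
    have hE₂ := (hE s hs).trans (energy_lt_energy p1.le hps)
    exact ⟨_, (B₂.hasDerivAt_weightedSpeed (hF s) hs hE₂).sub
      (B₁.hasDerivAt_weightedSpeed (hF s) hs (hE s hs)), sub_nonpos.mpr
      (weightedSpeed_rate_le (hF0 s hs) p1 hps.le (hE s hs) (Nat.cast_nonneg k))⟩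
  · refine slope_lt_of_energy_lt (F := F) (B₂.p_nonneg s hs)
      (lt_imp_lt_of_le_imp_le Real.sqrt_le_sqrt (lt_of_mul_lt_mul_left ?_ (B₂.r_nonneg s hs)))
    exact (mul_le_mul_of_nonneg_right hrs (Real.sqrt_nonneg _)).trans_lt (sub_pos.mp hWs)

end Branch

/-! ### A small slope near the level `0` forces a crossing -/

namespace Branch

theorem monotoneOn_slope (B : Branch k f r p a c) (hf : ∀ s ∈ Ioo a c, f s ≤ 0) :
    MonotoneOn p (Icc a c) :=
  monotoneOn_Icc_of_hasDerivAt B.cont_p fun s hs => ⟨_, B.deriv_p s hs, by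
    have r1 := B.r_pos s hs
    have h1 : 0 ≤ ((k : ℝ) + 1) / r s := by positivity
    exact sub_nonneg.mpr
      ((div_nonpos_of_nonpos_of_nonneg (hf s hs) (B.p_pos s hs).le).trans h1)⟩

theorem monotoneOn_momentum (B : Branch k f r p a c) (hf : ∀ s ∈ Ioo a c, f s ≤ 0) :
    MonotoneOn (momentum k r p) (Icc a c) :=
  monotoneOn_Icc_of_hasDerivAt B.continuousOn_momentum fun s hs =>
    ⟨_, B.hasDerivAt_momentum hs, neg_nonneg.mpr (div_nonpos_of_nonpos_of_nonneg
      (mul_nonpos_of_nonneg_of_nonpos (pow_nonneg (B.r_pos s hs).le _) (hf s hs))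
      (B.p_pos s hs).le)⟩

theorem mul_sub_le_slopeGap (B₁ : Branch k f r₁ p₁ a c) (B₂ : Branch k f r₂ p₂ a c)
    (hac : a ≤ c) (hr : ∀ s ∈ Ioo a c, r₁ s ≤ r₂ s) (hp : ∀ s ∈ Ioo a c, p₁ s < p₂ s)
    (hpc : p₁ c ≤ p₂ c) {q : ℝ}
    (hq : ∀ s ∈ Ioo a c, q ≤ 2 * (k + 1) * r₁ s ^ k * p₁ s * (r₂ s - r₁ s) / r₂ s) :
    q * (c - a) ≤ slopeGap k r₁ p₁ p₂ a := by
  have anti : AntitoneOn (fun s => slopeGap k r₁ p₁ p₂ s + q * s) (Icc a c) :=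
    antitoneOn_Icc_of_hasDerivAt ((continuousOn_slopeGap B₁ B₂).add
      (continuousOn_const.mul continuousOn_id)) fun s hs => by
      obtain ⟨d, hd, hlt⟩ := hasDerivAt_slopeGap B₁ B₂ hs (hr s hs) (hp s hs)
      exact ⟨_, hd.add ((hasDerivAt_id s).const_mul q), by linarith [hq s hs]⟩
  have hcm := right_mem_Icc.mpr hac
  have hgap : 0 ≤ slopeGap k r₁ p₁ p₂ c := mul_nonneg (pow_nonneg (B₁.r_nonneg c hcm) _)
    (sub_nonneg.mpr (pow_le_pow_left₀ (B₁.p_nonneg c hcm) hpc 2))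
  linarith [anti (left_mem_Icc.mpr hac) hcm hac]

theorem div_le_inv_sub_inv {s K C : ℝ} (hr : 0 < r₁ s) (hp₁ : 0 < p₁ s) (hp : p₁ s < p₂ s)
    (hK : 0 ≤ K) (hgap : K ≤ slopeGap k r₁ p₁ p₂ s) (hC : momentum k r₁ p₁ s ≤ C) :
    K / (2 * C) / p₂ s ^ 2 ≤ (p₁ s)⁻¹ - (p₂ s)⁻¹ := by
  have hp₂ := hp₁.trans hp
  have hmom : 0 < momentum k r₁ p₁ s := mul_pos (pow_pos hr _) hp₁
  have hCpos := hmom.trans_le hC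
  calc K / (2 * C) / p₂ s ^ 2 = K / (C * (p₂ s * (p₂ s + p₂ s))) := by
        rw [div_div]
        ring_nf
    _ ≤ slopeGap k r₁ p₁ p₂ s / (momentum k r₁ p₁ s * (p₂ s * (p₁ s + p₂ s))) := by
        have := hK.trans hgap
        gcongr
    _ = (p₁ s)⁻¹ - (p₂ s)⁻¹ := by
        rw [slopeGap, momentum]
        field_simp
        ring

theorem mul_log_sub_log_le (B₁ : Branch k f r₁ p₁ a c) (B₂ : Branch k f r₂ p₂ a c)
    (hac : a ≤ c) (hp₂ : ∀ s ∈ Icc a c, 0 < p₂ s) {L M : ℝ} (hL : 0 ≤ L) (hM : 0 < M)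
    (hinv : ∀ s ∈ Ioo a c, L / p₂ s ^ 2 ≤ (p₁ s)⁻¹ - (p₂ s)⁻¹)
    (hrate : ∀ s ∈ Ioo a c, (k + 1) * p₂ s / r₂ s - f s ≤ M) :
    L / M * (Real.log (p₂ c) - Real.log (p₂ a)) ≤ (r₂ c - r₁ c) - (r₂ a - r₁ a) := by
  have mono : MonotoneOn (fun s => r₂ s - r₁ s - L / M * Real.log (p₂ s)) (Icc a c) :=
    monotoneOn_Icc_of_hasDerivAt ((B₂.cont_r.sub B₁.cont_r).sub
      (continuousOn_const.mul (B₂.cont_p.log fun s hs => (hp₂ s hs).ne'))) fun s hs => by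
      have hp := B₂.p_pos s hs
      refine ⟨_, ((B₂.deriv_r s hs).sub (B₁.deriv_r s hs)).sub
        (((B₂.deriv_p s hs).log hp.ne').const_mul _), ?_⟩
      have hlog : L / M * (((k + 1) / r₂ s - f s / p₂ s) / p₂ s) ≤ L / p₂ s ^ 2 := calc
        _ = L / M * (((k + 1) * p₂ s / r₂ s - f s) / p₂ s ^ 2) := by
            field_simp
        _ ≤ L / M * (M / p₂ s ^ 2) := by
            have := hrate s hs
            gcongr
        _ = L / p₂ s ^ 2 := by
            field_simp
      linarith [hinv s hs]
  linarith [mono (left_mem_Icc.mpr hac) (right_mem_Icc.mpr hac) hac]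

end Branch

/-- A slope at most `η` at a level `ε < b / 2` forces two branches with ordered slopes to cross
above `ε`, provided that the radii and the slopes at the level `b / 2` obey the bounds
`ρ, R, σ, τ`. -/
def Threshold (k : ℕ) (f : ℝ → ℝ) (b ρ R σ τ η : ℝ) : Prop :=
  ∀ ⦃ε : ℝ⦄ ⦃r₁ p₁ r₂ p₂ : ℝ → ℝ⦄, 0 < ε → ε < b / 2 →
    Branch k f r₁ p₁ ε b → Branch k f r₂ p₂ ε b → (∀ s ∈ Icc ε b, 0 < p₁ s ∧ p₁ s < p₂ s) →
    (∀ s ∈ Icc ε b, ρ ≤ r₁ s) → r₂ (b / 2) ≤ R → σ ≤ p₁ (b / 2) → p₂ (b / 2) ≤ τ → p₂ ε ≤ η →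
    ∃ s ∈ Icc ε b, r₂ s < r₁ s

section Threshold

variable {b d ε Q ρ R σ τ : ℝ}

theorem mul_radius_sub_le_slopeGap (B₁ : Branch k f r₁ p₁ d b) (B₂ : Branch k f r₂ p₂ d b)
    (hdb : d ≤ b) (hf : ∀ s ∈ Ioo d b, f s ≤ 0) (hle : ∀ s ∈ Icc d b, r₁ s ≤ r₂ s)
    (hp : ∀ s ∈ Icc d b, p₁ s < p₂ s) (hρ : 0 < ρ) (hσ : 0 ≤ σ) (hr₁ : ∀ s ∈ Icc d b, ρ ≤ r₁ s)
    (hr₂ : r₂ d ≤ R) (hp₁ : σ ≤ p₁ d) :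
    2 * (k + 1) * ρ ^ k * σ * (r₂ d - r₁ d) / R * (b - d) ≤ slopeGap k r₁ p₁ p₂ d := by
  have hd : d ∈ Icc d b := left_mem_Icc.mpr hdb
  refine B₁.mul_sub_le_slopeGap B₂ hdb (fun s hs => hle s (Ioo_subset_Icc_self hs))
    (fun s hs => hp s (Ioo_subset_Icc_self hs)) (hp b (right_mem_Icc.mpr hdb)).le fun s hs => ?_
  have hs' := Ioo_subset_Icc_self hs
  have hgap₀ : 0 ≤ r₂ d - r₁ d := sub_nonneg.mpr (hle d hd)
  have hgap : r₂ d - r₁ d ≤ r₂ s - r₁ s := by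
    linarith [(B₁.strictAntiOn_radius_sub B₂ fun t ht => hp t (Ioo_subset_Icc_self ht)).antitoneOn
      hd hs' hs.1.le]
  have hσs : σ ≤ p₁ s := hp₁.trans (B₁.monotoneOn_slope hf hd hs' hs.1.le)
  have hRs : r₂ s ≤ R := (B₂.strictAntiOn_radius.antitoneOn hd hs' hs.1.le).trans hr₂
  have hρs := hr₁ s hs'
  have r1 := B₁.r_pos s hs
  have r2 := B₂.r_pos s hs
  have p1 := B₁.p_pos s hs
  have := hgap₀.trans hgap
  gcongr

theorem slopeGap_mul_log_le (B₁ : Branch k f r₁ p₁ ε d) (B₂ : Branch k f r₂ p₂ ε d)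
    (hεd : ε ≤ d) (hf : ∀ s ∈ Ioo ε d, f s ≤ 0) (hfQ : ∀ s ∈ Ioo ε d, -f s ≤ Q) (hQ : 0 ≤ Q)
    (hle : ∀ s ∈ Icc ε d, r₁ s ≤ r₂ s) (hp : ∀ s ∈ Icc ε d, 0 < p₁ s ∧ p₁ s < p₂ s)
    (hρ : 0 < ρ) (hr₁ : ∀ s ∈ Icc ε d, ρ ≤ r₁ s) (hr₂ : r₂ d ≤ R) (hp₂ : p₂ d ≤ τ) :
    slopeGap k r₁ p₁ p₂ d / (2 * (R ^ (k + 1) * τ)) / ((k + 1) * τ / ρ + Q) *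
      (Real.log (p₂ d) - Real.log (p₂ ε)) ≤ (r₂ d - r₁ d) - (r₂ ε - r₁ ε) := by
  have hd : d ∈ Icc ε d := right_mem_Icc.mpr hεd
  have r1 : 0 < r₁ d := hρ.trans_le (hr₁ d hd)
  have r2 : 0 < r₂ d := r1.trans_le (hle d hd)
  have p1 := (hp d hd).1
  have p2 := p1.trans (hp d hd).2
  have hR : 0 < R := r2.trans_le hr₂
  have hτ : 0 < τ := p2.trans_le hp₂
  have hgap : 0 ≤ slopeGap k r₁ p₁ p₂ d :=
    mul_nonneg (by positivity) (sub_nonneg.mpr (pow_le_pow_left₀ p1.le (hp d hd).2.le 2))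
  have hmom : momentum k r₁ p₁ d ≤ R ^ (k + 1) * τ :=
    (B₁.momentum_le B₂ hd (hle d hd) (hp d hd).2.le).trans
      (mul_le_mul (pow_le_pow_left₀ r2.le hr₂ _) hp₂ p2.le (by positivity))
  refine B₁.mul_log_sub_log_le B₂ hεd (fun s hs => (hp s hs).1.trans (hp s hs).2)
    (by positivity) (by positivity) (fun s hs => ?_) fun s hs => ?_
  · have hs' := Ioo_subset_Icc_self hs
    refine Branch.div_le_inv_sub_inv (B₁.r_pos s hs) (B₁.p_pos s hs) (hp s hs').2 hgap ?_
      ((B₁.monotoneOn_momentum hf hs' hd hs.2.le).trans hmom)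
    exact (B₁.strictAntiOn_slopeGap B₂ (fun t ht => hle t (Ioo_subset_Icc_self ht))
      fun t ht => (hp t (Ioo_subset_Icc_self ht)).2).antitoneOn hs' hd hs.2.le
  · have hs' := Ioo_subset_Icc_self hs
    have hτs : p₂ s ≤ τ := (B₂.monotoneOn_slope hf hs' hd hs.2.le).trans hp₂
    have hρs : ρ ≤ r₂ s := (hr₁ s hs').trans (hle s hs')
    have hslope : (k + 1) * p₂ s / r₂ s ≤ (k + 1) * τ / ρ := by gcongr
    linarith [hfQ s hs]

theorem mul_log_slope_sub_le_one (B₁ : Branch k f r₁ p₁ ε b) (B₂ : Branch k f r₂ p₂ ε b)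
    (hεd : ε < d) (hdb : d ≤ b) (hf : ∀ s ∈ Ioo ε b, f s ≤ 0) (hfQ : ∀ s ∈ Ioo ε b, -f s ≤ Q)
    (hQ : 0 ≤ Q) (hle : ∀ s ∈ Icc ε b, r₁ s ≤ r₂ s) (hp : ∀ s ∈ Icc ε b, 0 < p₁ s ∧ p₁ s < p₂ s)
    (hlog : 0 ≤ Real.log (p₂ d) - Real.log (p₂ ε)) (hρ : 0 < ρ) (hr₁ : ∀ s ∈ Icc ε b, ρ ≤ r₁ s)
    (hr₂ : r₂ d ≤ R) (hσ : 0 ≤ σ) (hp₁ : σ ≤ p₁ d) (hp₂ : p₂ d ≤ τ) :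
    2 * (k + 1) * ρ ^ k * σ / R * (b - d) / (2 * (R ^ (k + 1) * τ)) / ((k + 1) * τ / ρ + Q) *
      (Real.log (p₂ d) - Real.log (p₂ ε)) ≤ 1 := by
  have hd : d ∈ Icc ε b := ⟨hεd.le, hdb⟩
  have hεm : ε ∈ Icc ε b := ⟨le_rfl, hεd.le.trans hdb⟩
  have low : Icc ε d ⊆ Icc ε b := Icc_subset_Icc_right hdb
  have high : Icc d b ⊆ Icc ε b := Icc_subset_Icc_left hεd.le
  have hlow : Ioo ε d ⊆ Ioo ε b := Ioo_subset_Ioo_right hdb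
  have hR : 0 < R := (hρ.trans_le ((hr₁ d hd).trans (hle d hd))).trans_le hr₂
  have hτ : 0 < τ := ((hp d hd).1.trans (hp d hd).2).trans_le hp₂
  have hgap := B₁.strictAntiOn_radius_sub B₂ (fun s hs => (hp s (Ioo_subset_Icc_self hs)).2)
    hεm hd hεd
  have hgap_pos : 0 < r₂ d - r₁ d := by linarith [hle ε hεm]
  have upper := mul_radius_sub_le_slopeGap (B₁.mono hεd.le le_rfl) (B₂.mono hεd.le le_rfl) hdb
    (fun s hs => hf s (Ioo_subset_Ioo_left hεd.le hs)) (fun s hs => hle s (high hs))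
    (fun s hs => (hp s (high hs)).2) hρ hσ (fun s hs => hr₁ s (high hs)) hr₂ hp₁
  have lower := slopeGap_mul_log_le (B₁.mono le_rfl hdb) (B₂.mono le_rfl hdb) hεd.le
    (fun s hs => hf s (hlow hs)) (fun s hs => hfQ s (hlow hs)) hQ (fun s hs => hle s (low hs))
    (fun s hs => hp s (low hs)) hρ (fun s hs => hr₁ s (low hs)) hr₂ hp₂
  refine le_of_mul_le_mul_right ?_ hgap_pos
  rw [one_mul]
  calc _ = 2 * (k + 1) * ρ ^ k * σ * (r₂ d - r₁ d) / R * (b - d) / (2 * (R ^ (k + 1) * τ)) /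
        ((k + 1) * τ / ρ + Q) * (Real.log (p₂ d) - Real.log (p₂ ε)) := by ring
    _ ≤ slopeGap k r₁ p₁ p₂ d / (2 * (R ^ (k + 1) * τ)) / ((k + 1) * τ / ρ + Q) *
        (Real.log (p₂ d) - Real.log (p₂ ε)) := by gcongr
    _ ≤ (r₂ d - r₁ d) - (r₂ ε - r₁ ε) := lower
    _ ≤ r₂ d - r₁ d := sub_le_self _ (sub_nonneg.mpr (hle ε hεm))

theorem exists_threshold (k : ℕ) (hb : 0 < b) (hf : ∀ s ∈ Icc 0 b, f s ≤ 0)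
    (hfQ : ∀ s ∈ Icc 0 b, -f s ≤ Q) (hρ : 0 < ρ) (hR : 0 < R) (hσ : 0 < σ) (hτ : 0 < τ) :
    ∃ η > 0, Threshold k f b ρ R σ τ η := by
  have hQ : 0 ≤ Q :=
    (neg_nonneg.mpr (hf 0 (left_mem_Icc.mpr hb.le))).trans (hfQ 0 (left_mem_Icc.mpr hb.le))
  obtain ⟨A, hA, hAdef⟩ : ∃ A > 0, A = 2 * (k + 1) * ρ ^ k * σ / R * (b - b / 2) /
      (2 * (R ^ (k + 1) * τ)) / ((k + 1) * τ / ρ + Q) :=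
    ⟨_, by rw [sub_half]; positivity, rfl⟩
  refine ⟨σ * Real.exp (-A⁻¹), by positivity, ?_⟩
  intro ε r₁ p₁ r₂ p₂ hε hεb B₁ B₂ hp hr₁ hr₂ hσ₁ hτ₂ hη
  by_contra! hle
  have hdb : b / 2 ≤ b := half_le_self hb.le
  have hεm : ε ∈ Icc ε b := ⟨le_rfl, hεb.le.trans hdb⟩
  have hlog : A⁻¹ < Real.log (p₂ (b / 2)) - Real.log (p₂ ε) := by
    have hη' := Real.log_le_log ((hp ε hεm).1.trans (hp ε hεm).2) hη
    rw [Real.log_mul hσ.ne' (Real.exp_pos _).ne', Real.log_exp] at hη'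
    linarith [Real.log_lt_log hσ (hσ₁.trans_lt (hp _ ⟨hεb.le, hdb⟩).2)]
  have hle_one := mul_log_slope_sub_le_one B₁ B₂ hεb hdb
    (fun s hs => hf s ⟨hε.le.trans hs.1.le, hs.2.le⟩)
    (fun s hs => hfQ s ⟨hε.le.trans hs.1.le, hs.2.le⟩) hQ hle hp ((inv_pos.mpr hA).trans hlog).le
    hρ hr₁ hr₂ hσ.le hσ₁ hτ₂
  rw [← hAdef] at hle_one
  exact hle_one.not_gt ((inv_lt_iff_one_lt_mul₀' hA).mp hlog)

end Threshold

/-! ### Solutions and their decreasing branches -/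

theorem exists_first_zero {g : ℝ → ℝ} {s : ℝ} (hg : ContinuousOn g (Icc a c)) (ha : 0 < g a)
    (hs : s ∈ Icc a c) (h : g s ≤ 0) : ∃ x ∈ Ioc a c, g x = 0 ∧ ∀ t ∈ Ico a x, 0 < g t := by
  have hclosed : IsClosed (Icc a c ∩ g ⁻¹' Iic 0) :=
    hg.preimage_isClosed_of_isClosed isClosed_Icc isClosed_Iic
  obtain ⟨x, ⟨hx, hx0⟩, hmin⟩ :=
    (isCompact_Icc.of_isClosed_subset hclosed inter_subset_left).exists_isLeast ⟨s, hs, h⟩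
  have hpos : ∀ t ∈ Ico a x, 0 < g t := fun t ht => not_le.mp fun hneg =>
    ht.2.not_ge (hmin ⟨⟨ht.1, ht.2.le.trans hx.2⟩, hneg⟩)
  obtain ⟨y, hy, hy0⟩ := intermediate_value_Icc' hx.1 (hg.mono (Icc_subset_Icc_right hx.2))
    ⟨hx0, ha.le⟩
  have hyx : y = x := hy.2.antisymm (hmin ⟨⟨hy.1, hy.2.trans hx.2⟩, hy0.le⟩)
  subst hyx
  exact ⟨y, ⟨hx.1.lt_of_ne fun h => (h ▸ ha).ne' hy0, hx.2⟩, hy0, hpos⟩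

theorem nonpos_of_neg_Ioo {g : ℝ → ℝ} (hac : a < c) (hg : ContinuousOn g (Icc a c))
    (hneg : ∀ x ∈ Ioo a c, g x < 0) : ∀ x ∈ Icc a c, g x ≤ 0 := by
  intro x hx
  have hcl : x ∈ closure (Ioo a c) := by rwa [closure_Ioo hac.ne]
  have hcw := (hg x hx).mono Ioo_subset_Icc_self
  exact isClosed_Iic.closure_subset (hcw.mem_closure hcl (t := Iic 0) fun y hy => (hneg y hy).le)

theorem exists_continuousOn_inverse {g : ℝ → ℝ} (hac : a ≤ c) (hg : ContinuousOn g (Icc a c))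
    (anti : StrictAntiOn g (Icc a c)) :
    ∃ φ : ℝ → ℝ, ContinuousOn φ (Icc (g c) (g a)) ∧ (∀ x ∈ Icc a c, φ (g x) = x) ∧
      (∀ s ∈ Icc (g c) (g a), φ s ∈ Icc a c ∧ g (φ s) = s) ∧
      ∀ s ∈ Ioo (g c) (g a), φ s ∈ Ioo a c := by
  have himg : g '' Icc a c = Icc (g c) (g a) :=
    Subset.antisymm anti.antitoneOn.image_Icc_subset (intermediate_value_Icc' hac hg)
  have hright : ∀ s ∈ Icc (g c) (g a), Function.invFunOn g (Icc a c) s ∈ Icc a c ∧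
      g (Function.invFunOn g (Icc a c) s) = s := fun s hs => by
    rw [← himg] at hs
    exact ⟨Function.invFunOn_mem hs, Function.invFunOn_eq hs⟩
  have hleft : ∀ x ∈ Icc a c, Function.invFunOn g (Icc a c) (g x) = x := fun x hx =>
    anti.injOn.leftInvOn_invFunOn hx
  refine ⟨Function.invFunOn g (Icc a c), continuousOn_iff_isClosed.mpr fun t ht =>
    ⟨g '' (t ∩ Icc a c), ((isCompact_Icc.inter_left ht).image_of_continuousOn
      (hg.mono inter_subset_right)).isClosed, ?_⟩, hleft, hright, fun s hs => ?_⟩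
  · ext s
    constructor
    · rintro ⟨hst, hs⟩
      exact ⟨⟨_, ⟨hst, (hright s hs).1⟩, (hright s hs).2⟩, hs⟩
    · rintro ⟨⟨x, ⟨hxt, hx⟩, rfl⟩, hs⟩
      exact ⟨by rwa [mem_preimage, hleft x hx], hs⟩
  · obtain ⟨hmem, heq⟩ := hright s (Ioo_subset_Icc_self hs)
    refine ⟨hmem.1.lt_of_ne fun h => ?_, hmem.2.lt_of_ne fun h => ?_⟩
    · exact hs.2.ne (heq ▸ congrArg g h).symm
    · exact hs.1.ne' (heq ▸ congrArg g h)

/-- `v` is a solution of (E) on `(0, ∞)` in dimension `k + 2`, of class `C¹` up to `0`, where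
`v' = 0`. -/
structure Sol (k : ℕ) (f v : ℝ → ℝ) : Prop where
  cont : ContinuousOn v (Ici 0)
  cont_deriv : ContinuousOn (deriv v) (Ici 0)
  deriv_zero : deriv v 0 = 0
  hasDerivAt : ∀ r, 0 < r → HasDerivAt v (deriv v r) r
  hasDerivAt_deriv : ∀ r, 0 < r →
    HasDerivAt (deriv v) (-((k + 1) / r * deriv v r) - f (v r)) r

namespace Sol

variable {v v₁ v₂ : ℝ → ℝ} {A B : ℝ}

theorem neg (S : Sol k f v) (hodd : ∀ s, f (-s) = -f s) : Sol k f (fun r => -v r) := by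
  have hd : deriv (fun r => -v r) = fun r => -deriv v r := funext fun _ => deriv.fun_neg
  refine ⟨S.cont.neg, hd ▸ S.cont_deriv.neg, by simp only [hd, S.deriv_zero, neg_zero],
    fun r hr => hd ▸ (S.hasDerivAt r hr).neg, fun r hr => ?_⟩
  rw [hd]
  refine (S.hasDerivAt_deriv r hr).neg.congr_deriv ?_
  rw [hodd]
  ring

theorem strictAntiOn (S : Sol k f v) (hA : 0 ≤ A) (hneg : ∀ x ∈ Ioo A B, deriv v x < 0) :
    StrictAntiOn v (Icc A B) :=
  strictAntiOn_Icc_of_hasDerivAt (S.cont.mono fun _ hx => hA.trans hx.1)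
    fun x hx => ⟨_, S.hasDerivAt x (hA.trans_lt hx.1), hneg x hx⟩

theorem exists_branch (S : Sol k f v) (hA : 0 ≤ A) (hAB : A < B)
    (hneg : ∀ x ∈ Ioo A B, deriv v x < 0) :
    ∃ r p : ℝ → ℝ, Branch k f r p (v B) (v A) ∧ (∀ x ∈ Icc A B, r (v x) = x) ∧
      (∀ s ∈ Icc (v B) (v A), r s ∈ Icc A B ∧ v (r s) = s) ∧ ∀ s, p s = -deriv v (r s) := by
  have hsub : Icc A B ⊆ Ici 0 := fun _ hx => hA.trans hx.1
  obtain ⟨r, hr, hleft, hright, hmem⟩ :=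
    exists_continuousOn_inverse hAB.le (S.cont.mono hsub) (S.strictAntiOn hA hneg)
  have hnonpos := nonpos_of_neg_Ioo hAB (S.cont_deriv.mono hsub) hneg
  have hdr : ∀ s ∈ Ioo (v B) (v A), HasDerivAt r (deriv v (r s))⁻¹ s := fun s hs =>
    HasDerivAt.of_local_left_inverse (f := v) (hr.continuousAt (Icc_mem_nhds hs.1 hs.2))
      (S.hasDerivAt _ (hA.trans_lt (hmem s hs).1)) (hneg _ (hmem s hs)).ne
      (by filter_upwards [Icc_mem_nhds hs.1 hs.2] with t ht using (hright t ht).2)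
  refine ⟨r, fun s => -deriv v (r s), ?_, hleft, hright, fun s => rfl⟩
  constructor
  case cont_r => exact hr
  case cont_p => exact (S.cont_deriv.comp hr fun s hs => hsub (hright s hs).1).neg
  case r_pos => exact fun s hs => hA.trans_lt (hmem s hs).1
  case p_pos => exact fun s hs => neg_pos.mpr (hneg _ (hmem s hs))
  case r_nonneg => exact fun s hs => hsub (hright s hs).1
  case p_nonneg => exact fun s hs => neg_nonneg.mpr (hnonpos _ (hright s hs).1)
  case deriv_r => exact fun s hs => (hdr s hs).congr_deriv (by rw [inv_neg, neg_neg])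
  case deriv_p =>
    intro s hs
    have hx := hA.trans_lt (hmem s hs).1
    have hne := (hneg _ (hmem s hs)).ne
    refine ((S.hasDerivAt_deriv _ hx).comp s (hdr s hs)).neg.congr_deriv ?_
    rw [(hright s (Ioo_subset_Icc_self hs)).2]
    field_simp
    ring

theorem antitoneOn_wronskian {β x₀ : ℝ} (S₁ : Sol k f v₁) (S₂ : Sol k f v₂)
    (hf : ∀ x ∈ Ioo 0 x₀, f (v₂ x) * (v₁ x - β) ≤ f (v₁ x) * (v₂ x - β)) :
    AntitoneOn (fun x => x ^ (k + 1) * (deriv v₁ x * (v₂ x - β) - (v₁ x - β) * deriv v₂ x))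
      (Icc 0 x₀) := by
  have hsub : Icc 0 x₀ ⊆ Ici 0 := Icc_subset_Ici_self
  refine antitoneOn_Icc_of_hasDerivAt ((continuousOn_pow _).mul
    (((S₁.cont_deriv.mono hsub).mul ((S₂.cont.mono hsub).sub continuousOn_const)).sub
      (((S₁.cont.mono hsub).sub continuousOn_const).mul (S₂.cont_deriv.mono hsub))))
    fun x hx => ⟨x ^ (k + 1) * (f (v₂ x) * (v₁ x - β) - f (v₁ x) * (v₂ x - β)), ?_,
      mul_nonpos_of_nonneg_of_nonpos (pow_nonneg hx.1.le _) (sub_nonpos.mpr (hf x hx))⟩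
  have hx0 := hx.1.ne'
  refine ((hasDerivAt_pow (k + 1) x).mul (((S₁.hasDerivAt_deriv x hx.1).mul
    ((S₂.hasDerivAt x hx.1).sub_const β)).sub (((S₁.hasDerivAt x hx.1).sub_const β).mul
    (S₂.hasDerivAt_deriv x hx.1)))).congr_deriv ?_
  simp only [Pi.sub_apply, Pi.mul_apply]
  push_cast
  field_simp
  ring

theorem antitoneOn_ratio {β x₀ : ℝ} (S₁ : Sol k f v₁) (S₂ : Sol k f v₂)
    (hf : ∀ x ∈ Ioo 0 x₀, f (v₂ x) * (v₁ x - β) ≤ f (v₁ x) * (v₂ x - β))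
    (hv₂ : ∀ x ∈ Icc 0 x₀, β < v₂ x) :
    AntitoneOn (fun x => (v₁ x - β) / (v₂ x - β)) (Icc 0 x₀) := by
  have hsub : Icc 0 x₀ ⊆ Ici 0 := Icc_subset_Ici_self
  have hne : ∀ x ∈ Icc 0 x₀, v₂ x - β ≠ 0 := fun x hx => (sub_pos.mpr (hv₂ x hx)).ne'
  refine antitoneOn_Icc_of_hasDerivAt (((S₁.cont.mono hsub).sub continuousOn_const).div
    ((S₂.cont.mono hsub).sub continuousOn_const) hne) fun x hx =>
      ⟨_, ((S₁.hasDerivAt x hx.1).sub_const β).div ((S₂.hasDerivAt x hx.1).sub_const β)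
        (hne x (Ioo_subset_Icc_self hx)), div_nonpos_of_nonpos_of_nonneg ?_ (sq_nonneg _)⟩
  have wron := antitoneOn_wronskian S₁ S₂ hf (left_mem_Icc.mpr (hx.1.trans hx.2).le)
    (Ioo_subset_Icc_self hx) hx.1.le
  simp only [zero_pow (Nat.succ_ne_zero k), zero_mul] at wron
  exact nonpos_of_mul_nonpos_right wron (pow_pos hx.1 _)

-- Sturm comparison: the ratio `(v₁ - β) / (v₂ - β)` starts below `1` and decreases.
theorem lt_of_superlinear {β X : ℝ} (S₁ : Sol k f v₁) (S₂ : Sol k f v₂)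
    (hf : ∀ s t, β < s → s ≤ t → f t * (s - β) ≤ f s * (t - β)) (h0 : v₁ 0 < v₂ 0)
    (hβ : ∀ x ∈ Icc 0 X, β < v₁ x) : ∀ x ∈ Icc 0 X, v₁ x < v₂ x := by
  intro y hy
  by_contra! hle
  obtain ⟨x₀, hx₀, heq, hpos⟩ := exists_first_zero
    ((S₂.cont.sub S₁.cont).mono Icc_subset_Ici_self) (sub_pos.mpr h0) hy (sub_nonpos.mpr hle)
  simp only [Pi.sub_apply, sub_eq_zero, sub_pos] at heq hpos
  have hv₁ : ∀ x ∈ Icc 0 x₀, β < v₁ x := fun x hx => hβ x ⟨hx.1, hx.2.trans hx₀.2⟩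
  have hle' : ∀ x ∈ Icc 0 x₀, v₁ x ≤ v₂ x := fun x hx =>
    hx.2.lt_or_eq.elim (fun h => (hpos x ⟨hx.1, h⟩).le) fun h => h ▸ heq.ge
  have hv₂ : ∀ x ∈ Icc 0 x₀, β < v₂ x := fun x hx => (hv₁ x hx).trans_le (hle' x hx)
  have h0' : (0 : ℝ) ∈ Icc 0 x₀ := left_mem_Icc.mpr hx₀.1.le
  have hx₀' : x₀ ∈ Icc 0 x₀ := right_mem_Icc.mpr hx₀.1.le
  have ratio := antitoneOn_ratio S₁ S₂ (fun x hx => hf _ _ (hv₁ x (Ioo_subset_Icc_self hx))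
    (hle' x (Ioo_subset_Icc_self hx))) hv₂ h0' hx₀' hx₀.1.le
  simp only [heq, div_self (sub_pos.mpr (hv₁ x₀ hx₀')).ne'] at ratio
  rw [one_le_div (sub_pos.mpr (hv₂ 0 h0'))] at ratio
  linarith

end Sol

/-! ### The nonlinearity -/

theorem hasDerivAt_Fint (hf : Continuous f) (s : ℝ) : HasDerivAt (Fint f) (f s) s :=
  intervalIntegral.integral_hasDerivAt_right (hf.intervalIntegrable _ _)
    hf.stronglyMeasurable.stronglyMeasurableAtFilter hf.continuousAt

theorem Fint_zero (f : ℝ → ℝ) : Fint f 0 = 0 := intervalIntegral.integral_same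

theorem Fint_neg (hodd : ∀ s, f (-s) = -f s) (s : ℝ) : Fint f (-s) = Fint f s := by
  have h := intervalIntegral.integral_comp_neg (a := 0) (b := s) f
  simp only [hodd, intervalIntegral.integral_neg, neg_zero] at h
  rw [Fint, Fint, intervalIntegral.integral_symm, ← h, neg_neg]

theorem PohozaevWeight.neg (H : PohozaevWeight k f F G a c) (hf : ∀ s, f (-s) = -f s)
    (hF : ∀ s, F (-s) = F s) (hG : ∀ s, G (-s) = -G s) :
    PohozaevWeight k f F G (-c) (-a) := by
  have hcc : ∀ s ∈ Icc (-c) (-a), -s ∈ Icc a c := fun s hs => ⟨le_neg.mp hs.2, neg_le.mp hs.1⟩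
  have hoo : ∀ s ∈ Ioo (-c) (-a), -s ∈ Ioo a c := fun s hs => ⟨lt_neg.mp hs.2, neg_lt.mp hs.1⟩
  have hGn : G = fun s => -G (-s) := funext fun s => by rw [hG, neg_neg]
  have hderiv : ∀ s ∈ Ioo (-c) (-a), HasDerivAt G (deriv G (-s)) s := fun s hs => by
    have h := (((H.diff _ (hoo s hs)).hasDerivAt.comp s (hasDerivAt_neg s)).neg).congr_deriv
      (by rw [mul_neg_one, neg_neg])
    exact h.congr_of_eventuallyEq (.of_eq hGn)
  constructor
  case cont => exact (H.cont.comp continuousOn_neg hcc).neg.congr fun s _ => congrFun hGn s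
  case mul_eq =>
    intro s hs
    have h := H.mul_eq _ (hcc s hs)
    rwa [hG, hf, hF, neg_mul_neg] at h
  case diff => exact fun s hs => (hderiv s hs).differentiableAt
  case le_deriv => exact fun s hs => (hderiv s hs).deriv ▸ H.le_deriv _ (hoo s hs)

/-- `f` satisfies (f1), (f3) and (f4) in dimension `k + 2`; of (f2), only the continuity and the
differentiability beyond `β` are kept. -/
structure Nonlinearity (k : ℕ) (f : ℝ → ℝ) (b β : ℝ) : Prop where
  cont : Continuous f
  odd : ∀ s, f (-s) = -f s
  b_pos : 0 < b
  b_lt : b < β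
  pos : ∀ s, b < s → 0 < f s
  nonpos : ∀ s ∈ Icc 0 b, f s ≤ 0
  prim_β : Fint f β = 0
  diff : ∀ s, β < s → DifferentiableAt ℝ f s
  superlinear : Hf3 f β
  subcritical : Hf4 (k + 2) f β

namespace Nonlinearity

variable {b β : ℝ}

theorem β_pos (N : Nonlinearity k f b β) : 0 < β := N.b_pos.trans N.b_lt

theorem hasDerivAt (N : Nonlinearity k f b β) (s : ℝ) : HasDerivAt (Fint f) (f s) s :=
  hasDerivAt_Fint N.cont s

theorem continuous_prim (N : Nonlinearity k f b β) : Continuous (Fint f) :=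
  continuous_iff_continuousAt.mpr fun s => (N.hasDerivAt s).continuousAt

theorem prim_even (N : Nonlinearity k f b β) (s : ℝ) : Fint f (-s) = Fint f s := Fint_neg N.odd s

theorem strictMonoOn_prim (N : Nonlinearity k f b β) : StrictMonoOn (Fint f) (Ici b) :=
  strictMonoOn_of_deriv_pos (convex_Ici b) N.continuous_prim.continuousOn fun s hs => by
    rw [interior_Ici] at hs
    exact (N.hasDerivAt s).deriv ▸ N.pos s hs

theorem prim_pos (N : Nonlinearity k f b β) {s : ℝ} (hs : β < s) : 0 < Fint f s :=
  N.prim_β ▸ N.strictMonoOn_prim N.b_lt.le (N.b_lt.trans hs).le hs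

theorem prim_nonneg (N : Nonlinearity k f b β) {s : ℝ} (hs : β ≤ s) : 0 ≤ Fint f s :=
  hs.lt_or_eq.elim (fun h => (N.prim_pos h).le) fun h => h ▸ N.prim_β.ge

theorem prim_nonpos (N : Nonlinearity k f b β) {s : ℝ} (hs : s ∈ Icc (-β) β) : Fint f s ≤ 0 := by
  have nonpos : ∀ t ∈ Icc 0 β, Fint f t ≤ 0 := by
    intro t ht
    rcases le_total t b with htb | htb
    · rw [← Fint_zero f]
      exact antitoneOn_Icc_of_hasDerivAt N.continuous_prim.continuousOn
        (fun x hx => ⟨_, N.hasDerivAt x, N.nonpos x (Ioo_subset_Icc_self hx)⟩)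
        (left_mem_Icc.mpr N.b_pos.le) ⟨ht.1, htb⟩ ht.1
    · exact N.prim_β ▸ N.strictMonoOn_prim.monotoneOn htb N.b_lt.le ht.2
  rcases le_total 0 s with h | h
  · exact nonpos s ⟨h, hs.2⟩
  · exact N.prim_even s ▸ nonpos (-s) ⟨neg_nonneg.mpr h, neg_le.mp hs.1⟩

theorem nonpos_of_le_neg (N : Nonlinearity k f b β) {s : ℝ} (hs : s ≤ -β) : f s ≤ 0 :=
  neg_nonneg.mp (N.odd s ▸ (N.pos (-s) (N.b_lt.trans_le (le_neg.mp hs))).le)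

theorem mul_sub_le_mul_sub (N : Nonlinearity k f b β) {s t : ℝ} (hs : β < s) (hst : s ≤ t) :
    f t * (s - β) ≤ f s * (t - β) := by
  have anti := antitoneOn_Icc_of_hasDerivAt (a := s) (c := t) (g := fun x => f x / (x - β))
    (N.cont.continuousOn.div (continuousOn_id.sub continuousOn_const)
      fun x hx => (sub_pos.mpr (hs.trans_le hx.1)).ne')
    (fun x hx => ⟨_, (N.diff x (hs.trans hx.1)).hasDerivAt.div ((hasDerivAt_id x).sub_const β)
      (sub_pos.mpr (hs.trans hx.1)).ne', div_nonpos_of_nonpos_of_nonneg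
        (by simpa using N.superlinear x (hs.trans hx.1).le) (sq_nonneg _)⟩)
    (left_mem_Icc.mpr hst) (right_mem_Icc.mpr hst) hst
  exact (div_le_div_iff₀ (sub_pos.mpr (hs.trans_le hst)) (sub_pos.mpr hs)).mp anti

theorem pohozaevWeight (N : Nonlinearity k f b β) (m : ℝ) :
    PohozaevWeight k f (Fint f) (fun t => Fint f t / f t) β m := by
  have hne : ∀ s, β ≤ s → f s ≠ 0 := fun s hs => (N.pos s (N.b_lt.trans_le hs)).ne'
  refine ⟨N.continuous_prim.continuousOn.div N.cont.continuousOn fun s hs => hne s hs.1,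
    fun s hs => div_mul_cancel₀ _ (hne s hs.1),
    fun s hs => (N.hasDerivAt s).differentiableAt.div (N.diff s hs.1) (hne s hs.1.le),
    fun s hs => ?_⟩
  have h := N.subcritical s hs.1
  push_cast at h
  rw [div_le_iff₀ (by positivity)] at h
  linarith

theorem pohozaevWeight_neg (N : Nonlinearity k f b β) (m : ℝ) :
    PohozaevWeight k f (Fint f) (fun t => Fint f t / f t) m (-β) :=
  neg_neg m ▸ (N.pohozaevWeight (-m)).neg N.odd N.prim_even fun s => by
    rw [N.prim_even, N.odd, div_neg]

end Nonlinearity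

/-! ### Comparison of two solutions up to the first minimum -/

variable {b β : ℝ}

namespace Branch

theorem strictMonoOn_energy (B : Branch k f r p a c) (hF : ∀ s, HasDerivAt F (f s) s) :
    StrictMonoOn (energy F p) (Icc a c) := by
  refine strictMonoOn_of_deriv_pos (convex_Icc a c) ((B.cont_p.pow 2).add
    (continuousOn_const.mul fun s _ => (hF s).continuousAt.continuousWithinAt)) fun s hs => ?_
  rw [interior_Icc] at hs
  rw [(B.hasDerivAt_energy (hF s) hs).deriv]
  have hr := B.r_pos s hs
  have hp := B.p_pos s hs
  positivity

end Branch

theorem energy_of_slope_eq_zero {s : ℝ} (hp : p s = 0) : energy F p s = 2 * F s := by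
  rw [energy, hp]
  ring

theorem pohozaev_of_slope_eq_zero {s : ℝ} (hp : p s = 0) :
    pohozaev k F G r p s = -(2 * (r s ^ (k + 2) * F s)) := by
  rw [pohozaev, momentum, weightedEnergy, energy_of_slope_eq_zero hp, hp]
  ring

/-- `v` decreases from `v 0 > β` to its first minimum `v T < -β`. -/
structure Descent (k : ℕ) (f : ℝ → ℝ) (β : ℝ) (v : ℝ → ℝ) (T : ℝ) : Prop where
  sol : Sol k f v
  pos : 0 < T
  deriv_neg : ∀ x ∈ Ioo 0 T, deriv v x < 0
  deriv_eq : deriv v T = 0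
  top : β < v 0
  bot : v T < -β

namespace Descent

variable {v v₁ v₂ : ℝ → ℝ} {T T₁ T₂ : ℝ}

theorem exists_branch (D : Descent k f β v T) :
    ∃ r p : ℝ → ℝ, Branch k f r p (v T) (v 0) ∧
      (∀ s ∈ Icc (v T) (v 0), r s ∈ Icc 0 T ∧ v (r s) = s) ∧
      r (v T) = T ∧ p (v T) = 0 ∧ p (v 0) = 0 := by
  obtain ⟨r, p, B, left, right, hp⟩ := D.sol.exists_branch le_rfl D.pos D.deriv_neg
  have hT := left T (right_mem_Icc.mpr D.pos.le)
  exact ⟨r, p, B, right, hT, by rw [hp, hT, D.deriv_eq, neg_zero],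
    by rw [hp, left 0 (left_mem_Icc.mpr D.pos.le), D.sol.deriv_zero, neg_zero]⟩

theorem le_of_eq_value (N : Nonlinearity k f b β) (D : Descent k f β v₁ T) (S : Sol k f v₂)
    (h0 : v₁ 0 < v₂ 0) {x₁ x₂ : ℝ} (hx₁ : x₁ ∈ Icc 0 T) (hx₂ : 0 ≤ x₂) (heq : v₁ x₁ = v₂ x₂)
    (hβ : β ≤ v₁ x₁) : x₁ ≤ x₂ := by
  by_contra! hlt
  have anti : ∀ x ∈ Icc 0 x₂, v₁ x₁ < v₁ x := fun x hx =>
    D.sol.strictAntiOn le_rfl D.deriv_neg ⟨hx.1, (hx.2.trans hlt.le).trans hx₁.2⟩ hx₁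
      (hx.2.trans_lt hlt)
  have hx₂' : x₂ ∈ Icc 0 x₂ := right_mem_Icc.mpr hx₂
  have hlt₂ := D.sol.lt_of_superlinear S (fun s t => N.mul_sub_le_mul_sub) h0
    (fun x hx => hβ.trans_lt (anti x hx)) x₂ hx₂'
  exact (hlt₂.trans_eq heq.symm).not_gt (anti x₂ hx₂')

theorem slope_lt_and_pohozaev_lt (N : Nonlinearity k f b β) (D₁ : Descent k f β v₁ T₁)
    (D₂ : Descent k f β v₂ T₂) (h0 : v₁ 0 < v₂ 0) (B₁ : Branch k f r₁ p₁ (v₁ T₁) (v₁ 0))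
    (B₂ : Branch k f r₂ p₂ (v₂ T₂) (v₂ 0))
    (inv₁ : ∀ s ∈ Icc (v₁ T₁) (v₁ 0), r₁ s ∈ Icc 0 T₁ ∧ v₁ (r₁ s) = s)
    (inv₂ : ∀ s ∈ Icc (v₂ T₂) (v₂ 0), r₂ s ∈ Icc 0 T₂ ∧ v₂ (r₂ s) = s)
    (hT₁ : p₁ (v₁ T₁) = 0) (h₁ : p₁ (v₁ 0) = 0) {a : ℝ} (ha₁ : v₁ T₁ ≤ a) (ha₂ : v₂ T₂ ≤ a)
    (ha : a < -β) :
    p₁ a < p₂ a ∧ pohozaev k (Fint f) (fun t => Fint f t / f t) r₂ p₂ a <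
      pohozaev k (Fint f) (fun t => Fint f t / f t) r₁ p₁ a := by
  have hβ := N.β_pos
  have top := D₁.top
  have hFneg : Fint f (-β) = 0 := (N.prim_even β).trans N.prim_β
  have hr : ∀ s ∈ Icc β (v₁ 0), r₁ s ≤ r₂ s := by
    intro s hs
    obtain ⟨hmem₁, heq₁⟩ := inv₁ s ⟨by linarith [hs.1], hs.2⟩
    obtain ⟨hmem₂, heq₂⟩ := inv₂ s ⟨by linarith [hs.1], by linarith [hs.2]⟩
    exact D₁.le_of_eq_value N D₂.sol h0 hmem₁ hmem₂.1 (heq₁.trans heq₂.symm)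
      (hs.1.trans_eq heq₁.symm)
  have hmin : 0 ≤ energy (Fint f) p₁ (v₁ T₁) := by
    rw [energy_of_slope_eq_zero hT₁, ← N.prim_even]
    exact mul_nonneg zero_le_two (N.prim_nonneg (le_neg.mp D₁.bot.le))
  refine Branch.slope_lt_and_pohozaev_lt (B₁.mono ha₁ le_rfl) (B₂.mono ha₂ h0.le) N.hasDerivAt
    (N.pohozaevWeight_neg a) ha ⟨by linarith, top⟩ ?_ hr (fun s hs => N.prim_nonpos hs) hFneg
    (by rw [hFneg, zero_div]) (fun s hs => ?_) fun s hs => N.nonpos_of_le_neg hs.2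
  · rw [h₁]
    exact B₂.p_pos _ ⟨by linarith [D₂.bot], h0⟩
  · have hs' : v₁ T₁ ≤ s := by linarith [hs.1]
    exact hmin.trans ((B₁.strictMonoOn_energy N.hasDerivAt).monotoneOn ⟨le_rfl, by linarith⟩
      ⟨hs', by linarith [hs.2]⟩ hs')

theorem min_lt (N : Nonlinearity k f b β) (D₁ : Descent k f β v₁ T₁) (D₂ : Descent k f β v₂ T₂)
    (h0 : v₁ 0 < v₂ 0) :
    v₂ T₂ < v₁ T₁ ∧ T₁ ^ (k + 2) * Fint f (-v₁ T₁) < T₂ ^ (k + 2) * Fint f (-v₂ T₂) := by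
  obtain ⟨r₁, p₁, B₁, inv₁, hr₁, hT₁, h₁⟩ := D₁.exists_branch
  obtain ⟨r₂, p₂, B₂, inv₂, hr₂, hT₂, -⟩ := D₂.exists_branch
  have comparison := fun a => D₁.slope_lt_and_pohozaev_lt (a := a) N D₂ h0 B₁ B₂ inv₁ inv₂ hT₁ h₁
  have hlt : v₂ T₂ < v₁ T₁ := by
    by_contra! hle
    have hp := (comparison (v₂ T₂) hle le_rfl D₂.bot).1
    rw [hT₂] at hp
    exact hp.not_ge (B₁.p_nonneg _ ⟨hle, by linarith [N.β_pos, D₁.top, D₂.bot]⟩)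
  refine ⟨hlt, ?_⟩
  have hP := (comparison (v₁ T₁) le_rfl hlt.le D₁.bot).2
  have mono := (B₂.mono le_rfl (by linarith [N.β_pos, D₂.top])).monotoneOn_pohozaev N.hasDerivAt
    (N.pohozaevWeight_neg _) ⟨le_rfl, D₂.bot.le⟩ ⟨hlt.le, D₁.bot.le⟩ hlt.le
  have hval := mono.trans_lt hP
  rw [pohozaev_of_slope_eq_zero hT₁, pohozaev_of_slope_eq_zero hT₂, hr₁, hr₂] at hval
  rw [N.prim_even, N.prim_even]
  linarith

end Descent

/-! ### Comparison of two solutions after the first minimum -/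

namespace Branch

variable {a₁ a₂ m₁ m₂ : ℝ}

theorem slope_lt_second (N : Nonlinearity k f b β) (B₁ : Branch k f r₁ p₁ a₁ m₁)
    (B₂ : Branch k f r₂ p₂ a₂ m₂) (ha₁ : a₁ ≤ β) (ha₂ : a₂ < β) (hβ : β < m₁) (hm : m₁ < m₂)
    (hr₂ : 0 < r₂ m₂) (hp₁ : p₁ m₁ = 0) (hp₂ : p₂ m₂ = 0)
    (hP : r₁ m₁ ^ (k + 2) * Fint f m₁ < r₂ m₂ ^ (k + 2) * Fint f m₂) :
    (∀ s ∈ Icc β m₁, p₁ s < p₂ s) ∧ (r₂ β ≤ r₁ β → r₁ β * p₁ β < r₂ β * p₂ β) := by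
  have hFm : 0 < Fint f m₂ := N.prim_pos (hβ.trans hm)
  have hle : ∀ s ∈ Icc β m₁, pohozaev k (Fint f) (fun t => Fint f t / f t) r₂ p₂ s ≤
      -(2 * (r₂ m₂ ^ (k + 2) * Fint f m₂)) := fun s hs =>
    ((B₂.mono ha₂.le le_rfl).monotoneOn_pohozaev N.hasDerivAt (N.pohozaevWeight m₂)
      ⟨hs.1, hs.2.trans hm.le⟩ (right_mem_Icc.mpr (hβ.trans hm).le) (hs.2.trans hm.le)).trans_eq
      (pohozaev_of_slope_eq_zero hp₂)
  have B₁' := B₁.mono ha₁ le_rfl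
  have B₂' := B₂.mono ha₂.le hm.le
  have hf : ∀ s ∈ Ioo β m₁, 0 ≤ f s := fun s hs => (N.pos s (N.b_lt.trans hs.1)).le
  have hP₂ : ∀ s ∈ Ioo β m₁, pohozaev k (Fint f) (fun t => Fint f t / f t) r₂ p₂ s ≤ 0 :=
    fun s hs => (hle s (Ioo_subset_Icc_self hs)).trans (neg_nonpos.mpr (by positivity))
  have hPm : pohozaev k (Fint f) (fun t => Fint f t / f t) r₂ p₂ m₁ <
      pohozaev k (Fint f) (fun t => Fint f t / f t) r₁ p₁ m₁ := by
    rw [pohozaev_of_slope_eq_zero hp₁]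
    exact (hle m₁ (right_mem_Icc.mpr hβ.le)).trans_lt (by linarith)
  have hr₂' : 0 < r₂ m₁ := B₂.r_pos_of_pos_right hr₂ ⟨ha₂.le.trans hβ.le, hm.le⟩
  have hp₂' : ∀ s ∈ Icc β m₁, 0 < p₂ s := fun s hs =>
    B₂.p_pos s ⟨ha₂.trans_le hs.1, hs.2.trans_lt hm⟩
  have slope := slope_lt_of_pohozaev_lt B₁' B₂' N.hasDerivAt (N.pohozaevWeight m₁) hf
    (fun s hs => N.prim_nonneg hs.1) hP₂ hPm hp₁ hr₂' hp₂'
  exact ⟨slope, radius_mul_slope_lt_of_pohozaev_lt B₁' B₂' N.hasDerivAt (N.pohozaevWeight m₁) hβ hf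
    N.prim_β hP₂ hPm hp₁ hr₂' hp₂' fun s hs => slope s (Ioo_subset_Icc_self hs)⟩

theorem exists_weightedSpeed_lt (N : Nonlinearity k f b β) {ε : ℝ} (B₁ : Branch k f r₁ p₁ ε m₁)
    (B₂ : Branch k f r₂ p₂ ε m₂) (hε : ε ≤ β) (h₁ : β < m₁) (h₂ : β ≤ m₂)
    (hE : 0 ≤ energy (Fint f) p₁ ε) (hp : p₁ β < p₂ β)
    (hrp : r₂ β ≤ r₁ β → r₁ β * p₁ β < r₂ β * p₂ β)
    (hcross : (∀ s ∈ Icc ε β, p₁ s < p₂ s) → ∃ s ∈ Icc ε β, r₂ s < r₁ s) :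
    ∃ σ ∈ Icc ε β, r₂ σ ≤ r₁ σ ∧ p₁ σ < p₂ σ ∧
      weightedSpeed (Fint f) r₁ p₁ σ < weightedSpeed (Fint f) r₂ p₂ σ := by
  have C₁ := B₁.mono le_rfl h₁.le
  have C₂ := B₂.mono le_rfl h₂
  have hβ : β ∈ Icc ε β := right_mem_Icc.mpr hε
  rcases le_or_gt (r₂ β) (r₁ β) with h | h
  · refine ⟨β, hβ, h, hp, ?_⟩
    simp only [weightedSpeed, energy, N.prim_β, mul_zero, add_zero,
      Real.sqrt_sq (C₁.p_nonneg β hβ), Real.sqrt_sq (C₂.p_nonneg β hβ)]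
    exact hrp h
  obtain ⟨σ, hσ, hzero, hle⟩ := exists_last_zero (C₁.cont_r.sub C₂.cont_r) (sub_nonpos.mpr h.le)
    fun hall => by
      have hle := fun s hs => sub_nonpos.mp (hall s hs)
      obtain ⟨s, hs, hlt⟩ := hcross (slope_lt_of_radius_le C₁ C₂ hp hle)
      exact hlt.not_ge (hle s hs)
  have hreq : r₁ σ = r₂ σ := sub_eq_zero.mp hzero
  have hpσ := slope_lt_of_radius_le (C₁.mono hσ.1 le_rfl) (C₂.mono hσ.1 le_rfl) hp
    (fun s hs => sub_nonpos.mp (hle s hs)) σ (left_mem_Icc.mpr hσ.2)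
  refine ⟨σ, hσ, hreq.ge, hpσ, ?_⟩
  rw [weightedSpeed, weightedSpeed, ← hreq]
  refine mul_lt_mul_of_pos_left (Real.sqrt_lt_sqrt (hE.trans ?_)
    (energy_lt_energy (C₁.p_nonneg σ hσ) hpσ)) (B₁.r_pos_of_lt ⟨hσ.1, hσ.2.trans_lt h₁⟩)
  exact (C₁.strictMonoOn_energy N.hasDerivAt).monotoneOn (left_mem_Icc.mpr hε) hσ hσ.1

end Branch

namespace Sol

variable {v v₁ v₂ : ℝ → ℝ} {T X : ℝ}

theorem strictMonoOn (S : Sol k f v) (hT : 0 ≤ T) (hpos : ∀ x ∈ Ioo T X, 0 < deriv v x) :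
    StrictMonoOn v (Icc T X) :=
  strictMonoOn_of_deriv_pos (convex_Icc T X) (S.cont.mono fun _ hx => hT.trans hx.1)
    (by rwa [interior_Icc])

theorem exists_branch_neg (S : Sol k f v) (hodd : ∀ s, f (-s) = -f s) (hT : 0 ≤ T) (hTX : T < X)
    (hpos : ∀ x ∈ Ioo T X, 0 < deriv v x) :
    ∃ r p : ℝ → ℝ, Branch k f r p (-v X) (-v T) ∧
      (∀ x ∈ Icc T X, r (-v x) = x ∧ p (-v x) = deriv v x) ∧
      ∀ s ∈ Ico (-v X) (-v T), ∃ x ∈ Ioc T X, -v x = s := by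
  have hd : ∀ x, deriv (fun r => -v r) x = -deriv v x := fun _ => deriv.fun_neg
  obtain ⟨r, p, B, left, right, hp⟩ := (S.neg hodd).exists_branch hT hTX
    fun x hx => (hd x).trans_lt (neg_neg_of_pos (hpos x hx))
  refine ⟨r, p, B, fun x hx => ⟨left x hx, by rw [hp, left x hx, hd, neg_neg]⟩, fun s hs => ?_⟩
  obtain ⟨hmem, heq⟩ := right s (Ico_subset_Icc_self hs)
  exact ⟨r s, ⟨hmem.1.lt_of_ne fun h => (h ▸ heq ▸ hs.2).false, hmem.2⟩, heq⟩

end Sol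

/-- The energy `v'² + 2 F(v)` of `v` at the radius `x`, where `F` is the primitive of `f`. -/
noncomputable def radialEnergy (f v : ℝ → ℝ) (x : ℝ) : ℝ := deriv v x ^ 2 + 2 * Fint f (v x)

theorem energy_eq_radialEnergy {v : ℝ → ℝ} {x : ℝ} (hodd : ∀ s, f (-s) = -f s)
    (hp : p (-v x) = deriv v x) : energy (Fint f) p (-v x) = radialEnergy f v x := by
  rw [energy, radialEnergy, hp, Fint_neg hodd]

/-- Past its first minimum at `T`, `v` increases through the level `-b / 2` at `x` up to the level
`-ε` at `y`, with the bounds on the radii and slopes that enter `Threshold`. -/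
structure Ascent (b ε ρ R σ τ η : ℝ) (v : ℝ → ℝ) (T x y : ℝ) : Prop where
  le_T : ρ ≤ T
  mid_mem : x ∈ Ioo T y
  deriv_pos : ∀ t ∈ Ioc T y, 0 < deriv v t
  mid : -v x = b / 2
  mid_le : x ≤ R
  le_slope : σ ≤ deriv v x
  slope_le : deriv v x ≤ τ
  low : -v y = ε
  low_slope : deriv v y ≤ η

/-- At the radii `t₁` and `t₂`, `v₁` and `v₂` take the same value; `v₂` got there first, it has the
greater slope, and its weighted speed `r √(v'² + 2 F(v))` is greater by at least `κ`. -/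
structure Leads (f v₁ v₂ : ℝ → ℝ) (t₁ t₂ κ : ℝ) : Prop where
  eq : v₁ t₁ = v₂ t₂
  le : t₂ ≤ t₁
  slope_lt : deriv v₁ t₁ < deriv v₂ t₂
  gap : t₁ * √(radialEnergy f v₁ t₁) + κ ≤ t₂ * √(radialEnergy f v₂ t₂)

section Ascent

variable {v v₁ v₂ : ℝ → ℝ} {ε ρ R σ τ η T T₁ T₂ x x₁ x₂ y y₁ y₂ : ℝ}

namespace Ascent

theorem T_lt (A : Ascent b ε ρ R σ τ η v T x y) : T < y := A.mid_mem.1.trans A.mid_mem.2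

theorem exists_branch (A : Ascent b ε ρ R σ τ η v T x y) (S : Sol k f v)
    (hodd : ∀ s, f (-s) = -f s) (hT : 0 ≤ T) :
    ∃ r p : ℝ → ℝ, Branch k f r p ε (-v T) ∧
      (∀ x ∈ Icc T y, r (-v x) = x ∧ p (-v x) = deriv v x) ∧
      ∀ s ∈ Ico ε (-v T), ∃ x ∈ Ioc T y, -v x = s :=
  A.low ▸ S.exists_branch_neg hodd hT A.T_lt fun t ht => A.deriv_pos t (Ioo_subset_Ioc_self ht)

theorem exists_radius_lt (A₁ : Ascent b ε ρ R σ τ η v₁ T₁ x₁ y₁)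
    (A₂ : Ascent b ε ρ R σ τ η v₂ T₂ x₂ y₂) (hε : 0 < ε) (hεb : ε < b / 2)
    (hthr : Threshold k f b ρ R σ τ η) (B₁ : Branch k f r₁ p₁ ε b) (B₂ : Branch k f r₂ p₂ ε b)
    (val₁ : ∀ x ∈ Icc T₁ y₁, r₁ (-v₁ x) = x ∧ p₁ (-v₁ x) = deriv v₁ x)
    (val₂ : ∀ x ∈ Icc T₂ y₂, r₂ (-v₂ x) = x ∧ p₂ (-v₂ x) = deriv v₂ x)
    (surj₁ : ∀ s ∈ Icc ε b, ∃ x ∈ Ioc T₁ y₁, -v₁ x = s) (hp : ∀ s ∈ Icc ε b, p₁ s < p₂ s) :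
    ∃ s ∈ Icc ε b, r₂ s < r₁ s := by
  obtain ⟨-, hx₁⟩ := val₁ x₁ (Ioo_subset_Icc_self A₁.mid_mem)
  obtain ⟨hrx₂, hx₂⟩ := val₂ x₂ (Ioo_subset_Icc_self A₂.mid_mem)
  obtain ⟨-, hy₂⟩ := val₂ y₂ (right_mem_Icc.mpr A₂.T_lt.le)
  rw [A₁.mid] at hx₁
  rw [A₂.mid] at hrx₂ hx₂
  rw [A₂.low] at hy₂
  refine hthr hε hεb B₁ B₂ (fun s hs => ⟨?_, hp s hs⟩) (fun s hs => ?_) (hrx₂ ▸ A₂.mid_le)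
    (hx₁ ▸ A₁.le_slope) (hx₂ ▸ A₂.slope_le) (hy₂ ▸ A₂.low_slope)
  · obtain ⟨t, ht, rfl⟩ := surj₁ s hs
    exact (val₁ t (Ioc_subset_Icc_self ht)).2 ▸ A₁.deriv_pos t ht
  · obtain ⟨t, ht, rfl⟩ := surj₁ s hs
    exact (val₁ t (Ioc_subset_Icc_self ht)).1.symm ▸ A₁.le_T.trans ht.1.le

end Ascent

theorem Descent.exists_leads (N : Nonlinearity k f b β) (D₁ : Descent k f β v₁ T₁)
    (D₂ : Descent k f β v₂ T₂) (h0 : v₁ 0 < v₂ 0) (hε : 0 < ε) (hεb : ε < b / 2)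
    (hthr : Threshold k f b ρ R σ τ η) (A₁ : Ascent b ε ρ R σ τ η v₁ T₁ x₁ y₁)
    (A₂ : Ascent b ε ρ R σ τ η v₂ T₂ x₂ y₂) (hE : 0 ≤ radialEnergy f v₁ y₁) :
    ∃ t₁ ∈ Ioc T₁ y₁, ∃ t₂ ∈ Ioc T₂ y₂, ∃ κ > 0, Leads f v₁ v₂ t₁ t₂ κ ∧
      v₁ t₁ ∈ Icc (-β) (-ε) := by
  have hbβ := N.b_lt
  have bot₁ := D₁.bot
  obtain ⟨hm, hP⟩ := D₁.min_lt N D₂ h0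
  obtain ⟨r₁, p₁, B₁, val₁, surj₁⟩ := A₁.exists_branch D₁.sol N.odd D₁.pos.le
  obtain ⟨r₂, p₂, B₂, val₂, surj₂⟩ := A₂.exists_branch D₂.sol N.odd D₂.pos.le
  obtain ⟨hrT₁, hpT₁⟩ := val₁ T₁ (left_mem_Icc.mpr A₁.T_lt.le)
  obtain ⟨hrT₂, hpT₂⟩ := val₂ T₂ (left_mem_Icc.mpr A₂.T_lt.le)
  have hEε : 0 ≤ energy (Fint f) p₁ ε := by
    rw [← A₁.low, energy_eq_radialEnergy N.odd (val₁ y₁ (right_mem_Icc.mpr A₁.T_lt.le)).2]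
    exact hE
  obtain ⟨hslope, hmom⟩ := B₁.slope_lt_second N B₂ (by linarith) (by linarith) (by linarith)
    (by linarith) (hrT₂.symm ▸ D₂.pos) (hpT₁.trans D₁.deriv_eq) (hpT₂.trans D₂.deriv_eq)
    (by rwa [hrT₁, hrT₂])
  have hcross : (∀ s ∈ Icc ε β, p₁ s < p₂ s) → ∃ s ∈ Icc ε β, r₂ s < r₁ s := by
    intro hlt
    obtain ⟨s, hs, h⟩ := A₁.exists_radius_lt A₂ hε hεb hthr (B₁.mono le_rfl (by linarith))
      (B₂.mono le_rfl (by linarith)) val₁ val₂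
      (fun s hs => surj₁ s ⟨hs.1, by linarith [hs.2]⟩) fun s hs => hlt s ⟨hs.1, hs.2.trans hbβ.le⟩
    exact ⟨s, ⟨hs.1, hs.2.trans hbβ.le⟩, h⟩
  obtain ⟨s, hs, hr, hp, hW⟩ := B₁.exists_weightedSpeed_lt N B₂ (by linarith) (by linarith)
    (by linarith) hEε (hslope β ⟨le_rfl, by linarith⟩) hmom hcross
  obtain ⟨t₁, ht₁, rfl⟩ := surj₁ s ⟨hs.1, by linarith [hs.2]⟩
  obtain ⟨t₂, ht₂, heq⟩ := surj₂ (-v₁ t₁) ⟨hs.1, by linarith [hs.2]⟩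
  obtain ⟨hrt₁, hpt₁⟩ := val₁ t₁ (Ioc_subset_Icc_self ht₁)
  obtain ⟨hrt₂, hpt₂⟩ := val₂ t₂ (Ioc_subset_Icc_self ht₂)
  have hW₂ := energy_eq_radialEnergy N.odd hpt₂
  rw [heq] at hrt₂ hpt₂ hW₂
  rw [weightedSpeed, weightedSpeed, energy_eq_radialEnergy N.odd hpt₁, hW₂, hrt₁, hrt₂] at hW
  rw [hrt₁, hrt₂] at hr
  rw [hpt₁, hpt₂] at hp
  exact ⟨t₁, ht₁, t₂, ht₂, _, sub_pos.mpr hW, ⟨(neg_inj.mp heq).symm, hr, hp, by linarith⟩,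
    by linarith [hs.2], by linarith [hs.1]⟩

theorem Leads.ascend {t₁ t₂ z₁ z₂ κ : ℝ} (L : Leads f v₁ v₂ t₁ t₂ κ) (N : Nonlinearity k f b β)
    (S₁ : Sol k f v₁) (S₂ : Sol k f v₂) (hκ : 0 < κ) (ht₁ : 0 ≤ t₁) (ht₂ : 0 ≤ t₂)
    (hz₁ : t₁ < z₁) (hz₂ : t₂ < z₂) (hpos₁ : ∀ t ∈ Ioo t₁ z₁, 0 < deriv v₁ t)
    (hpos₂ : ∀ t ∈ Ioo t₂ z₂, 0 < deriv v₂ t) (heq : v₁ z₁ = v₂ z₂) (hlow : -β ≤ v₁ t₁)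
    (hhigh : v₁ z₁ ≤ 0) (hE : 0 ≤ radialEnergy f v₁ z₁) :
    Leads f v₁ v₂ z₁ z₂ κ ∧ z₂ < z₁ := by
  have hlt : -v₁ z₁ < -v₁ t₁ := neg_lt_neg
    (S₁.strictMonoOn ht₁ hpos₁ (left_mem_Icc.mpr hz₁.le) (right_mem_Icc.mpr hz₁.le) hz₁)
  obtain ⟨r₁, p₁, B₁, val₁, -⟩ := S₁.exists_branch_neg N.odd ht₁ hz₁ hpos₁
  obtain ⟨r₂, p₂, B₂, val₂, -⟩ := S₂.exists_branch_neg N.odd ht₂ hz₂ hpos₂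
  obtain ⟨hrt₁, hpt₁⟩ := val₁ t₁ (left_mem_Icc.mpr hz₁.le)
  obtain ⟨hrz₁, hpz₁⟩ := val₁ z₁ (right_mem_Icc.mpr hz₁.le)
  obtain ⟨hrt₂, hpt₂⟩ := val₂ t₂ (left_mem_Icc.mpr hz₂.le)
  obtain ⟨hrz₂, hpz₂⟩ := val₂ z₂ (right_mem_Icc.mpr hz₂.le)
  have hEt₁ := energy_eq_radialEnergy N.odd hpt₁
  have hEz₁ := energy_eq_radialEnergy N.odd hpz₁
  have hEt₂ := energy_eq_radialEnergy N.odd hpt₂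
  have hEz₂ := energy_eq_radialEnergy N.odd hpz₂
  rw [← L.eq] at hrt₂ hpt₂ hEt₂ B₂
  rw [← heq] at hrz₂ hpz₂ hEz₂ B₂
  have gap := L.gap
  have low : -v₁ z₁ ∈ Icc (-v₁ z₁) (-v₁ t₁) := left_mem_Icc.mpr hlt.le
  have key := Branch.weightedSpeed_sub_le B₁ B₂ N.hasDerivAt
    (fun s hs => N.prim_nonpos ⟨by linarith [hs.1, N.β_pos], by linarith [hs.2]⟩)
    (fun s hs => (hE.trans_eq hEz₁.symm).trans_lt
      (B₁.strictMonoOn_energy N.hasDerivAt low (Ioo_subset_Icc_self hs) hs.1))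
    (by rw [hrt₁, hrt₂]; exact L.le)
    (by rw [weightedSpeed, weightedSpeed, hEt₁, hEt₂, hrt₁, hrt₂]; linarith)
  have hr := B₁.strictAntiOn_radius_sub B₂ (fun s hs => (key s (Ioo_subset_Icc_self hs)).1)
    low (right_mem_Icc.mpr hlt.le) hlt
  obtain ⟨hp, -, hW⟩ := key _ low
  simp only [weightedSpeed, hEt₁, hEt₂, hEz₁, hEz₂, hrt₁, hrt₂, hrz₁, hrz₂] at hW
  rw [hpz₁, hpz₂] at hp
  simp only [hrt₁, hrt₂, hrz₁, hrz₂] at hr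
  have hz : z₂ < z₁ := by linarith [L.le]
  exact ⟨⟨heq, hz.le, hp, by linarith⟩, hz⟩

end Ascent

/-! ### The rise after the first minimum -/

/-- The right end points of the intervals starting at `T` on which `v` is negative and increasing;
their supremum is `Z₂` when `T = T₁`. -/
def Rise (v : ℝ → ℝ) (T : ℝ) : Set ℝ := {r | T < r ∧ ∀ s ∈ Ioo T r, v s < 0 ∧ 0 < deriv v s}

open Classical in
/-- The end of the rise of `v` past `T`, as a filter: the left neighbourhoods of `sSup (Rise v T)`,
or `atTop` if the rise never ends. Limits along it are values at `Z₂`, be it finite or not. -/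
noncomputable def riseEnd (v : ℝ → ℝ) (T : ℝ) : Filter ℝ :=
  if BddAbove (Rise v T) then 𝓝[<] sSup (Rise v T) else atTop

section Rise

variable {v : ℝ → ℝ} {A B T z : ℝ}

instance riseEnd_neBot : NeBot (riseEnd v T) := by
  rw [riseEnd]
  split_ifs <;> infer_instance

theorem sSup_mem_rise (hne : (Rise v T).Nonempty) (hb : BddAbove (Rise v T)) :
    sSup (Rise v T) ∈ Rise v T := by
  obtain ⟨r, hr⟩ := hne
  refine ⟨hr.1.trans_le (le_csSup hb hr), fun s hs => ?_⟩
  obtain ⟨r', hr', hlt⟩ := exists_lt_of_lt_csSup ⟨r, hr⟩ hs.2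
  exact hr'.2 s ⟨hs.1, hlt⟩

theorem forall_of_not_bddAbove_rise (hb : ¬BddAbove (Rise v T)) :
    ∀ s, T < s → v s < 0 ∧ 0 < deriv v s := by
  intro s hs
  obtain ⟨r, hr, hlt⟩ := not_bddAbove_iff.mp hb s
  exact hr.2 s ⟨hs, hlt⟩

theorem eventually_riseEnd (hne : (Rise v T).Nonempty) :
    ∀ᶠ r in riseEnd v T, T < r ∧ ∀ s ∈ Ioc T r, v s < 0 ∧ 0 < deriv v s := by
  rw [riseEnd]
  split_ifs with hb
  · have hZ := sSup_mem_rise hne hb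
    filter_upwards [Ioo_mem_nhdsLT hZ.1] with r hr
    exact ⟨hr.1, fun s hs => hZ.2 s ⟨hs.1, hs.2.trans_lt hr.2⟩⟩
  · filter_upwards [eventually_gt_atTop T] with r hr
    exact ⟨hr, fun s hs => forall_of_not_bddAbove_rise hb s hs.1⟩

namespace Sol

theorem continuousAt (S : Sol k f v) {r : ℝ} (hr : 0 < r) : ContinuousAt v r :=
  (S.hasDerivAt r hr).continuousAt

theorem continuousAt_deriv (S : Sol k f v) {r : ℝ} (hr : 0 < r) : ContinuousAt (deriv v) r :=
  (S.hasDerivAt_deriv r hr).continuousAt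

theorem le_of_mem_rise (S : Sol k f v) (hT : 0 ≤ T) (hz : z ∈ Rise v T) :
    v z ≤ 0 ∧ 0 ≤ deriv v z := by
  have hsub : Icc T z ⊆ Ici 0 := fun x hx => hT.trans hx.1
  exact ⟨nonpos_of_neg_Ioo hz.1 (S.cont.mono hsub) (fun x hx => (hz.2 x hx).1) z
    (right_mem_Icc.mpr hz.1.le), neg_nonpos.mp <| nonpos_of_neg_Ioo hz.1
    (S.cont_deriv.mono hsub).neg (fun x hx => neg_neg_of_pos (hz.2 x hx).2) z
    (right_mem_Icc.mpr hz.1.le)⟩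

theorem exists_gt_mem_rise (S : Sol k f v) (hT : 0 ≤ T) (hz : z ∈ Rise v T) (h1 : v z < 0)
    (h2 : 0 < deriv v z) : ∃ r ∈ Rise v T, z < r := by
  have h0 : 0 < z := hT.trans_lt hz.1
  obtain ⟨d, hd, hball⟩ := Metric.eventually_nhds_iff_ball.mp
    (((S.continuousAt h0).eventually_lt_const h1).and
      ((S.continuousAt_deriv h0).eventually_const_lt h2))
  rw [Real.ball_eq_Ioo] at hball
  refine ⟨z + d, ⟨by linarith [hz.1], fun s hs => ?_⟩, by linarith⟩
  rcases lt_or_ge s z with h | h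
  · exact hz.2 s ⟨hs.1, h⟩
  · exact hball s ⟨by linarith, hs.2⟩

theorem sSup_rise_eq_zero (S : Sol k f v) (hT : 0 ≤ T) (hne : (Rise v T).Nonempty)
    (hb : BddAbove (Rise v T)) (hpos : 0 < deriv v (sSup (Rise v T))) :
    v (sSup (Rise v T)) = 0 := by
  have hZ := sSup_mem_rise hne hb
  by_contra hne0
  obtain ⟨r, hr, hlt⟩ := S.exists_gt_mem_rise hT hZ
    ((S.le_of_mem_rise hT hZ).1.lt_of_ne hne0) hpos
  exact hlt.not_ge (le_csSup hb hr)

theorem eventually_gt_riseEnd (S : Sol k f v) (hT : 0 ≤ T) (hz : z ∈ Rise v T) (h1 : v z < 0)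
    (h2 : 0 < deriv v z) : ∀ᶠ r in riseEnd v T, z < r := by
  rw [riseEnd]
  split_ifs with hb
  · obtain ⟨r, hr, hlt⟩ := S.exists_gt_mem_rise hT hz h1 h2
    filter_upwards [Ioo_mem_nhdsLT (hlt.trans_le (le_csSup hb hr))] with r hr using hr.1
  · exact eventually_gt_atTop z

theorem strictMonoOn_of_mem_rise (S : Sol k f v) (hT : 0 ≤ T) (hz : z ∈ Rise v T) :
    StrictMonoOn v (Icc T z) :=
  S.strictMonoOn hT fun x hx => (hz.2 x hx).2

/-! ### Energy along solutions -/

theorem hasDerivAt_radialEnergy (S : Sol k f v) (hf : Continuous f) {r : ℝ} (hr : 0 < r) :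
    HasDerivAt (radialEnergy f v) (-(2 * (k + 1) / r * deriv v r ^ 2)) r := by
  refine (((S.hasDerivAt_deriv r hr).pow 2).add
    (((hasDerivAt_Fint hf (v r)).comp r (S.hasDerivAt r hr)).const_mul 2)).congr_deriv ?_
  simp only [Nat.cast_ofNat, Nat.add_one_sub_one, pow_one]
  ring

theorem continuousOn_radialEnergy (S : Sol k f v) (hf : Continuous f) :
    ContinuousOn (radialEnergy f v) (Ici 0) :=
  (S.cont_deriv.pow 2).add (continuousOn_const.mul
    (Continuous.comp_continuousOn (continuous_iff_continuousAt.mpr fun s =>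
      (hasDerivAt_Fint hf s).continuousAt) S.cont))

theorem radialEnergy_le (S : Sol k f v) (hf : Continuous f) (hA : 0 ≤ A) (hAB : A ≤ B) :
    radialEnergy f v B ≤ radialEnergy f v A :=
  antitoneOn_Icc_of_hasDerivAt ((S.continuousOn_radialEnergy hf).mono fun _ hx => hA.trans hx.1)
    (fun x hx => ⟨_, S.hasDerivAt_radialEnergy hf (hA.trans_lt hx.1), by
      have hx0 := hA.trans_lt hx.1
      exact neg_nonpos.mpr (by positivity)⟩)
    (left_mem_Icc.mpr hAB) (right_mem_Icc.mpr hAB) hAB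

theorem radialEnergy_lt (S : Sol k f v) (hf : Continuous f) (hA : 0 ≤ A) (hAB : A < B)
    (h : ∀ x ∈ Ioo A B, deriv v x ≠ 0) : radialEnergy f v B < radialEnergy f v A :=
  strictAntiOn_Icc_of_hasDerivAt ((S.continuousOn_radialEnergy hf).mono fun _ hx => hA.trans hx.1)
    (fun x hx => ⟨_, S.hasDerivAt_radialEnergy hf (hA.trans_lt hx.1), by
      have hx0 := hA.trans_lt hx.1
      have hd := h x hx
      exact neg_neg_of_pos (by positivity)⟩)
    (left_mem_Icc.mpr hAB.le) (right_mem_Icc.mpr hAB.le) hAB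

theorem radialEnergy_nonneg_of_tendsto (S : Sol k f v) (hf : Continuous f) {l : Filter ℝ} [NeBot l]
    (hlim : Tendsto v l (𝓝 0)) (hz : 0 ≤ z) (hl : ∀ᶠ r in l, z ≤ r) : 0 ≤ radialEnergy f v z := by
  have hF : Tendsto (fun r => 2 * Fint f (v r)) l (𝓝 0) := by
    have h := ((hasDerivAt_Fint hf 0).continuousAt.tendsto.comp hlim).const_mul 2
    rwa [Fint_zero, mul_zero] at h
  refine le_of_tendsto hF ?_
  filter_upwards [hl] with r hr
  exact (le_add_of_nonneg_left (sq_nonneg _)).trans (S.radialEnergy_le hf hz hr)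

theorem exists_rise_level (S : Sol k f v) (hf : Continuous f) (hT : 0 ≤ T)
    (hne : (Rise v T).Nonempty) (hlim : Tendsto v (riseEnd v T) (𝓝 0)) {s : ℝ} (hs : s < 0)
    (hTs : v T < s) : ∃ z ∈ Rise v T, v z = s ∧ 0 < deriv v z ∧ 0 ≤ radialEnergy f v z := by
  obtain ⟨r, hsr, hTr, hr⟩ := ((hlim.eventually_const_lt hs).and (eventually_riseEnd hne)).exists
  obtain ⟨z, hz, hzs⟩ := intermediate_value_Ioo hTr.le
    (S.cont.mono fun x hx => hT.trans hx.1) ⟨hTs, hsr⟩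
  have hzrise : z ∈ Rise v T := ⟨hz.1, fun t ht => hr t ⟨ht.1, (ht.2.trans hz.2).le⟩⟩
  have hdz := (hr z (Ioo_subset_Ioc_self hz)).2
  exact ⟨z, hzrise, hzs, hdz, S.radialEnergy_nonneg_of_tendsto hf hlim (hT.trans hz.1.le)
    ((S.eventually_gt_riseEnd hT hzrise (hzs.trans_lt hs) hdz).mono fun _ h => h.le)⟩

end Sol

end Rise

/-! ### Solutions increasing on a half line -/

theorem tendsto_deriv_zero_of_antitoneOn {v : ℝ → ℝ} {M L : ℝ}
    (hd : ∀ x, M ≤ x → DifferentiableAt ℝ v x) (anti : AntitoneOn (deriv v) (Ici M))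
    (hpos : ∀ x, M ≤ x → 0 ≤ deriv v x) (hlim : Tendsto v atTop (𝓝 L)) :
    Tendsto (deriv v) atTop (𝓝 0) := by
  have bound : ∀ᶠ x in atTop, deriv v x ≤ v x - v (x - 1) := by
    filter_upwards [eventually_ge_atTop (M + 1)] with x hx
    have hsub : ∀ y ∈ Icc (x - 1) x, M ≤ y := fun y hy => by linarith [hy.1]
    obtain ⟨c, hc, hcd⟩ := exists_deriv_eq_slope v (sub_one_lt x)
      (fun y hy => (hd y (hsub y hy)).continuousAt.continuousWithinAt)
      fun y hy => (hd y (hsub y (Ioo_subset_Icc_self hy))).differentiableWithinAt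
    rw [sub_sub_cancel, div_one] at hcd
    exact hcd ▸ anti (hsub c (Ioo_subset_Icc_self hc)) (hsub x ⟨(sub_one_lt x).le, le_rfl⟩) hc.2.le
  have shift : Tendsto (fun x => v x - v (x - 1)) atTop (𝓝 0) :=
    sub_self L ▸ hlim.sub (hlim.comp (tendsto_atTop_add_const_right atTop (-1 : ℝ) tendsto_id))
  refine tendsto_of_tendsto_of_tendsto_of_le_of_le' tendsto_const_nhds shift ?_ bound
  filter_upwards [eventually_ge_atTop M] with x hx using hpos x hx

theorem exists_nonneg_of_le_mul_deriv {v : ℝ → ℝ} {M κ : ℝ} (hM : 0 < M) (hκ : 0 < κ)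
    (hd : ∀ r, M ≤ r → HasDerivAt v (deriv v r) r) (hle : ∀ r, M ≤ r → κ ≤ r * deriv v r) :
    ∃ r, M ≤ r ∧ 0 ≤ v r := by
  have htop : Tendsto (fun r => v M - κ * Real.log M + κ * Real.log r) atTop atTop :=
    tendsto_atTop_add_const_left _ _ (Real.tendsto_log_atTop.const_mul_atTop hκ)
  obtain ⟨r, hr, hMr⟩ := ((htop.eventually_ge_atTop 0).and (eventually_ge_atTop M)).exists
  have hder : ∀ x, M ≤ x →
      HasDerivAt (fun x => v x - κ * Real.log x) (deriv v x - κ * x⁻¹) x :=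
    fun x hx => (hd x hx).sub ((Real.hasDerivAt_log (hM.trans_le hx).ne').const_mul κ)
  have mono := monotoneOn_Icc_of_hasDerivAt (a := M) (c := r)
    (fun x hx => (hder x hx.1).continuousAt.continuousWithinAt)
    (fun x hx => ⟨_, hder x hx.1.le, by
      rw [sub_nonneg, ← div_eq_mul_inv, div_le_iff₀' (hM.trans hx.1)]
      exact hle x hx.1.le⟩)
    (left_mem_Icc.mpr hMr) (right_mem_Icc.mpr hMr) hMr
  exact ⟨r, hMr, by linarith⟩

namespace Sol

variable {v : ℝ → ℝ} {T : ℝ}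

theorem exists_tendsto (S : Sol k f v) (hT : 0 ≤ T) (h : ∀ s, T < s → v s < 0 ∧ 0 < deriv v s) :
    ∃ L, Tendsto v atTop (𝓝 L) := by
  have hlt : ∀ x, T + 1 ≤ x → T < x := fun x hx => by linarith
  have mono : StrictMonoOn v (Ici (T + 1)) :=
    strictMonoOn_of_deriv_pos (convex_Ici _) (S.cont.mono fun x hx => hT.trans (hlt x hx).le)
      fun x hx => (h x (hlt x (interior_subset hx))).2
  have mono' : Monotone fun x => v (max x (T + 1)) := fun x y hxy =>
    mono.monotoneOn (mem_Ici.mpr (le_max_right _ _)) (mem_Ici.mpr (le_max_right _ _))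
      (max_le_max_right _ hxy)
  have bdd : BddAbove (range fun x => v (max x (T + 1))) :=
    ⟨0, forall_mem_range.mpr fun x => (h _ (hlt _ (le_max_right _ _))).1.le⟩
  refine ⟨_, (tendsto_atTop_ciSup mono' bdd).congr' ?_⟩
  filter_upwards [eventually_ge_atTop (T + 1)] with x hx
  rw [max_eq_left hx]

-- Once `v > -b`, equation (E) makes `v'` decrease.
theorem tendsto_deriv_zero (S : Sol k f v) (N : Nonlinearity k f b β) (hT : 0 ≤ T)
    (h : ∀ s, T < s → v s < 0 ∧ 0 < deriv v s) (hlim : Tendsto v atTop (𝓝 0)) :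
    Tendsto (deriv v) atTop (𝓝 0) := by
  obtain ⟨M, hM⟩ := eventually_atTop.mp
    ((hlim.eventually_const_lt (neg_neg_of_pos N.b_pos)).and (eventually_gt_atTop T))
  have hpos : ∀ x, M ≤ x → 0 < x := fun x hx => hT.trans_lt (hM x hx).2
  refine tendsto_deriv_zero_of_antitoneOn (M := M)
    (fun x hx => (S.hasDerivAt x (hpos x hx)).differentiableAt) (fun x hx y _ hxy => ?_)
    (fun x hx => (h x (hM x hx).2).2.le) hlim
  refine antitoneOn_Icc_of_hasDerivAt (S.cont_deriv.mono fun t ht => (hpos t (hx.trans ht.1)).le)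
    (fun t ht => ⟨_, S.hasDerivAt_deriv t (hpos t (hx.trans ht.1.le)), ?_⟩)
    (left_mem_Icc.mpr hxy) (right_mem_Icc.mpr hxy) hxy
  have hMt := hx.trans ht.1.le
  have ht0 := hpos t hMt
  obtain ⟨hv, hdv⟩ := h t (hM t hMt).2
  have hf := N.nonpos (-v t) ⟨by linarith, by linarith [(hM t hMt).1]⟩
  rw [N.odd] at hf
  have : 0 ≤ (k + 1) / t * deriv v t := by positivity
  linarith

end Sol

/-! ### The zeros `Z₁`, `Z₂` and the first minimum `T₁` -/

theorem Family.sol {u : ℝ → ℝ → ℝ} (hu : Family (k + 2) f u) {α : ℝ} (hα : 0 < α) :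
    Sol k f (u α) := by
  obtain ⟨-, hd, hc, hdiff, heq⟩ := hu.1 α hα
  refine ⟨hc, ?_, hd, fun r hr => (hdiff r hr).1.hasDerivAt, fun r hr => ?_⟩
  · exact hu.2.2.comp (f := fun r : ℝ => (α, r)) (by fun_prop) fun r hr => ⟨hα, hr⟩
  · refine (hdiff r hr).2.hasDerivAt.congr_deriv ?_
    have := heq r hr
    push_cast at this
    rw [show (k : ℝ) + 2 - 1 = k + 1 by ring] at this
    linarith

section Unfold

variable {u : ℝ → ℝ → ℝ} {α T : ℝ}

theorem mem_zsetK_one {r : ℝ} :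
    r ∈ ZsetK u 1 α ↔ 0 < r ∧ ∀ s ∈ Ioo 0 r, 0 < u α s ∧ deriv (u α) s < 0 := by
  have h : ZsetK u 1 α = ZsetAux u 1 0 α := rfl
  simp [h, ZsetAux]

theorem zk_one : Zk u 1 α = sSup (ZsetK u 1 α) := rfl

theorem zsetK_two : ZsetK u 2 α = Rise (u α) (Tk u 1 α) := by
  have h : ZsetK u 2 α = ZsetAux u 2 (Tk u 1 α) α := rfl
  simp [h, ZsetAux, Rise]

theorem zk_two : Zk u 2 α = sSup (Rise (u α) (Tk u 1 α)) := congrArg sSup zsetK_two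

theorem ftil_two : Ftil u 2 α ↔ ∀ r, Zk u 1 α < r → deriv (u α) r < 0 := by
  simp [Ftil]

theorem mem_Nk_two :
    α ∈ Nk u 2 ↔ α ∈ Nk u 1 ∧ ¬Ftil u 2 α ∧ uAtZ u 2 α = 0 ∧ 0 < duAtZ u 2 α := by
  have h : α ∈ Nk u 2 ↔ α ∈ Nk u 1 ∧ ¬Ftil u 2 α ∧ uAtZ u 2 α = 0 ∧
    0 < (-1 : ℝ) ^ 2 * duAtZ u 2 α := Iff.rfl
  rw [h, neg_one_sq, one_mul]

theorem mem_Gk_two :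
    α ∈ Gk u 2 ↔ α ∈ Nk u 1 ∧ ¬Ftil u 2 α ∧ uAtZ u 2 α = 0 ∧ duAtZ u 2 α = 0 := Iff.rfl

theorem mem_Fk_two : α ∈ Fk u 2 ↔ α ∈ Nk u 1 ∧ ¬Ftil u 2 α ∧ uAtZ u 2 α < 0 := by
  have h : α ∈ Fk u 2 ↔ α ∈ Nk u 1 ∧ ¬Ftil u 2 α ∧ (-1 : ℝ) ^ 2 * uAtZ u 2 α < 0 := Iff.rfl
  rw [h, neg_one_sq, one_mul]

theorem uAtZ_two_of_bddAbove (hb : BddAbove (Rise (u α) (Tk u 1 α))) :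
    uAtZ u 2 α = u α (sSup (Rise (u α) (Tk u 1 α))) := by
  rw [uAtZ, zsetK_two, if_pos hb, zk_two]

theorem uAtZ_two_of_not_bddAbove (hb : ¬BddAbove (Rise (u α) (Tk u 1 α))) :
    uAtZ u 2 α = limUnder atTop (u α) := by
  rw [uAtZ, zsetK_two, if_neg hb]

theorem duAtZ_two_of_bddAbove (hb : BddAbove (Rise (u α) (Tk u 1 α))) :
    duAtZ u 2 α = deriv (u α) (sSup (Rise (u α) (Tk u 1 α))) := by
  rw [duAtZ, zsetK_two, if_pos hb, zk_two]

theorem duAtZ_two_of_not_bddAbove (hb : ¬BddAbove (Rise (u α) (Tk u 1 α))) :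
    duAtZ u 2 α = limUnder atTop (deriv (u α)) := by
  rw [duAtZ, zsetK_two, if_neg hb]

theorem zkE_two_of_bddAbove (hb : BddAbove (Rise (u α) (Tk u 1 α))) :
    ZkE u 2 α = (sSup (Rise (u α) (Tk u 1 α)) : ℝ) := by
  rw [ZkE, zsetK_two, if_pos hb, zk_two]

theorem zkE_two_of_not_bddAbove (hb : ¬BddAbove (Rise (u α) (Tk u 1 α))) : ZkE u 2 α = ⊤ := by
  rw [ZkE, zsetK_two, if_neg hb]

namespace Sol

theorem tendsto_uAtZ (S : Sol k f (u α)) (hT : 0 ≤ Tk u 1 α)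
    (hne : (Rise (u α) (Tk u 1 α)).Nonempty) :
    Tendsto (u α) (riseEnd (u α) (Tk u 1 α)) (𝓝 (uAtZ u 2 α)) := by
  rw [riseEnd]
  split_ifs with hb
  · rw [uAtZ_two_of_bddAbove hb]
    exact (S.continuousAt (hT.trans_lt (sSup_mem_rise hne hb).1)).tendsto.mono_left
      nhdsWithin_le_nhds
  · obtain ⟨L, hL⟩ := S.exists_tendsto hT (forall_of_not_bddAbove_rise hb)
    rwa [uAtZ_two_of_not_bddAbove hb, hL.limUnder_eq]

theorem tendsto_duAtZ (S : Sol k f (u α)) (N : Nonlinearity k f b β) (hT : 0 ≤ Tk u 1 α)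
    (hne : (Rise (u α) (Tk u 1 α)).Nonempty) (h0 : uAtZ u 2 α = 0) :
    Tendsto (deriv (u α)) (riseEnd (u α) (Tk u 1 α)) (𝓝 (duAtZ u 2 α)) := by
  have hlim := S.tendsto_uAtZ hT hne
  rw [h0] at hlim
  rw [riseEnd] at hlim ⊢
  split_ifs at hlim ⊢ with hb
  · rw [duAtZ_two_of_bddAbove hb]
    exact (S.continuousAt_deriv (hT.trans_lt (sSup_mem_rise hne hb).1)).tendsto.mono_left
      nhdsWithin_le_nhds
  · have hd := S.tendsto_deriv_zero N hT (forall_of_not_bddAbove_rise hb) hlim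
    rwa [duAtZ_two_of_not_bddAbove hb, hd.limUnder_eq]

end Sol

-- `Z₁ = 0` would come from the junk value `sSup ∅ = 0`, and it is excluded by `u 0 ≠ 0`.
theorem first_zero_of_mem_Nk_one (h0 : u α 0 = α) (h : α ∈ Nk u 1) (hF : ¬Ftil u 2 α) :
    0 < Zk u 1 α ∧ u α (Zk u 1 α) = 0 ∧ ∀ s ∈ Ioc 0 (Zk u 1 α), deriv (u α) s < 0 := by
  obtain ⟨hα, hz0, hz1⟩ := h
  have hb : BddAbove (ZsetK u 1 α) := by
    by_contra hb
    refine hF (ftil_two.mpr fun r hr => ?_)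
    rw [zk_one, Real.sSup_of_not_bddAbove hb] at hr
    obtain ⟨r', hr', hlt⟩ := not_bddAbove_iff.mp hb r
    exact ((mem_zsetK_one.mp hr').2 r ⟨hr, hlt⟩).2
  rw [uAtZ, if_pos hb] at hz0
  rw [duAtZ, if_pos hb] at hz1
  obtain ⟨r, hr⟩ : (ZsetK u 1 α).Nonempty := by
    by_contra hne
    rw [zk_one, not_nonempty_iff_eq_empty.mp hne, Real.sSup_empty, h0] at hz0
    exact hα.ne' hz0
  have hrpos := (mem_zsetK_one.mp hr).1
  refine ⟨hrpos.trans_le (le_csSup hb hr), hz0, fun s hs => ?_⟩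
  rcases hs.2.lt_or_eq with hlt | rfl
  · obtain ⟨r', hr', hlt'⟩ := exists_lt_of_lt_csSup ⟨r, hr⟩ hlt
    exact ((mem_zsetK_one.mp hr').2 s ⟨hs.1, hlt'⟩).2
  · exact hz1

theorem first_minimum_of_mem_Nk_one (S : Sol k f (u α)) (h0 : u α 0 = α) (h : α ∈ Nk u 1)
    (hF : ¬Ftil u 2 α) :
    Zk u 1 α < Tk u 1 α ∧ deriv (u α) (Tk u 1 α) = 0 ∧
      ∀ x ∈ Ioo 0 (Tk u 1 α), deriv (u α) x < 0 := by
  obtain ⟨hz, -, hneg⟩ := first_zero_of_mem_Nk_one h0 h hF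
  rw [ftil_two] at hF
  push Not at hF
  obtain ⟨q, hq, hq0⟩ := hF
  obtain ⟨x, hx, hx0, hlt⟩ := exists_first_zero (g := fun r => -deriv (u α) r)
    (S.cont_deriv.mono fun t ht => hz.le.trans ht.1).neg
    (neg_pos.mpr (hneg _ ⟨hz, le_rfl⟩)) (right_mem_Icc.mpr hq.le) (neg_nonpos.mpr hq0)
  have hd : deriv (u α) x = 0 := neg_eq_zero.mp hx0
  have hTx : Tk u 1 α = x := IsLeast.csInf_eq ⟨⟨hx.1, hd⟩, fun r hr => by
    by_contra! hrx
    exact (neg_pos.mp (hlt r ⟨hr.1.le, hrx⟩)).ne hr.2⟩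
  rw [hTx]
  refine ⟨hx.1, hd, fun t ht => ?_⟩
  rcases le_total t (Zk u 1 α) with h' | h'
  · exact hneg t ⟨ht.1, h'⟩
  · exact neg_pos.mp (hlt t ⟨h', ht.2⟩)

-- As in `first_zero_of_mem_Nk_one`, an empty rise would give `Z₂ = 0`. The energy decreases to a
-- nonnegative limit, so it is positive at both extrema, where it reduces to `2 F(u)`.
theorem Descent.of_mem_Gk_two (N : Nonlinearity k f b β) (S : Sol k f (u α)) (h0 : u α 0 = α)
    (h : α ∈ Gk u 2) : Descent k f β (u α) (Tk u 1 α) := by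
  obtain ⟨hN, hF, hZ, -⟩ := mem_Gk_two.mp h
  obtain ⟨hz, hz0, -⟩ := first_zero_of_mem_Nk_one h0 hN hF
  obtain ⟨hzT, hdT, hneg⟩ := first_minimum_of_mem_Nk_one S h0 hN hF
  have hT := hz.trans hzT
  have hne : (Rise (u α) (Tk u 1 α)).Nonempty := by
    by_contra hne
    rw [not_nonempty_iff_eq_empty] at hne
    rw [uAtZ_two_of_bddAbove (hne ▸ bddAbove_empty), hne, Real.sSup_empty, h0] at hZ
    exact hN.1.ne' hZ
  have hlim := S.tendsto_uAtZ hT.le hne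
  rw [hZ] at hlim
  obtain ⟨r, hTr, hr⟩ := (eventually_riseEnd hne).exists
  obtain ⟨hvr, hdr⟩ := hr r ⟨hTr, le_rfl⟩
  have hErn := S.radialEnergy_nonneg_of_tendsto N.cont hlim (hT.trans hTr).le
    ((S.eventually_gt_riseEnd hT.le ⟨hTr, fun s hs => hr s (Ioo_subset_Ioc_self hs)⟩ hvr
      hdr).mono fun _ h => h.le)
  have hET := hErn.trans_lt (S.radialEnergy_lt N.cont hT.le hTr fun x hx =>
    (hr x (Ioo_subset_Ioc_self hx)).2.ne')
  have hE0 := hET.trans (S.radialEnergy_lt N.cont le_rfl hT fun x hx => (hneg x hx).ne)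
  rw [radialEnergy, hdT] at hET
  rw [radialEnergy, S.deriv_zero] at hE0
  have hvT := S.strictAntiOn le_rfl hneg ⟨hz.le, hzT.le⟩ (right_mem_Icc.mpr hT.le) hzT
  have hβ := N.β_pos
  refine ⟨S, hT, hneg, hdT, ?_, ?_⟩ <;> by_contra! hle
  · linarith [N.prim_nonpos (s := u α 0) ⟨by linarith [hN.1], hle⟩]
  · linarith [N.prim_nonpos (s := u α (Tk u 1 α)) ⟨hle, by linarith⟩]

end Unfold

namespace Descent

variable {v : ℝ → ℝ} {u : ℝ → ℝ → ℝ} {T α : ℝ}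

theorem zk_one_mem (N : Nonlinearity k f b β) (D : Descent k f β (u α) T) :
    Zk u 1 α ∈ Ioo 0 T ∧ u α (Zk u 1 α) = 0 ∧ BddAbove (ZsetK u 1 α) := by
  have anti := D.sol.strictAntiOn le_rfl D.deriv_neg
  obtain ⟨z, hz, hz0⟩ : (0 : ℝ) ∈ u α '' Ioo 0 T :=
    intermediate_value_Ioo' D.pos.le (D.sol.cont.mono Icc_subset_Ici_self)
      ⟨D.bot.trans (neg_neg_of_pos N.β_pos), N.β_pos.trans D.top⟩
  have hset : ZsetK u 1 α = Ioc 0 z := by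
    ext r
    refine mem_zsetK_one.trans ⟨fun hr => ⟨hr.1, ?_⟩, fun hr => ⟨hr.1, fun s hs => ?_⟩⟩
    · by_contra! hlt
      exact (hr.2 z ⟨hz.1, hlt⟩).1.ne' hz0
    · have hsT : s < T := (hs.2.trans_le hr.2).trans hz.2
      exact ⟨hz0 ▸ anti ⟨hs.1.le, hsT.le⟩ (Ioo_subset_Icc_self hz) (hs.2.trans_le hr.2),
        D.deriv_neg s ⟨hs.1, hsT⟩⟩
  rw [zk_one, hset, csSup_Ioc hz.1]
  exact ⟨hz, hz0, bddAbove_Ioc⟩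

theorem mem_Nk_one (N : Nonlinearity k f b β) (D : Descent k f β (u α) T) (hα : 0 < α) :
    α ∈ Nk u 1 := by
  obtain ⟨hz, hz0, hb⟩ := D.zk_one_mem N
  refine ⟨hα, ?_, ?_⟩
  · rw [uAtZ, if_pos hb, hz0]
  · rw [duAtZ, if_pos hb]
    exact D.deriv_neg _ hz

theorem not_ftil_two (N : Nonlinearity k f b β) (D : Descent k f β (u α) T) : ¬Ftil u 2 α :=
  fun h => (ftil_two.mp h T (D.zk_one_mem N).1.2).ne D.deriv_eq

theorem tk_one_eq (N : Nonlinearity k f b β) (D : Descent k f β (u α) T) : Tk u 1 α = T := by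
  obtain ⟨hz, -⟩ := D.zk_one_mem N
  refine IsLeast.csInf_eq ⟨⟨hz.2, D.deriv_eq⟩, fun r hr => ?_⟩
  by_contra! hlt
  exact (D.deriv_neg r ⟨hz.1.trans hr.1, hlt⟩).ne hr.2

theorem deriv_deriv_pos (N : Nonlinearity k f b β) (D : Descent k f β v T) :
    0 < deriv (deriv v) T := by
  have hfT : 0 < f (-v T) := N.pos _ (N.b_lt.trans (lt_neg.mp D.bot))
  rw [(D.sol.hasDerivAt_deriv T D.pos).deriv, D.deriv_eq]
  rw [N.odd] at hfT
  linarith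

theorem rise_nonempty (N : Nonlinearity k f b β) (D : Descent k f β v T) :
    (Rise v T).Nonempty := by
  have hvT : v T < 0 := D.bot.trans (neg_neg_of_pos N.β_pos)
  obtain ⟨d, hd0, hball⟩ := Metric.eventually_nhds_iff_ball.mp
    ((eventually_nhdsWithin_sign_eq_of_deriv_pos (D.deriv_deriv_pos N) D.deriv_eq).and
      ((D.sol.continuousAt D.pos).eventually_lt_const hvT))
  rw [Real.ball_eq_Ioo] at hball
  refine ⟨T + d, lt_add_of_pos_right T hd0, fun s hs => ?_⟩
  obtain ⟨hsign, hv⟩ := hball s ⟨by linarith [hs.1], hs.2⟩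
  rw [sign_pos (sub_pos.mpr hs.1)] at hsign
  exact ⟨hv, sign_eq_one_iff.mp hsign⟩

theorem mem_Gk_or_mem_Nk_or_mem_Fk (N : Nonlinearity k f b β) (D : Descent k f β (u α) T)
    (hα : 0 < α) : α ∈ Gk u 2 ∨ α ∈ Nk u 2 ∨ α ∈ Fk u 2 := by
  obtain rfl := D.tk_one_eq N
  have hN := D.mem_Nk_one N hα
  have hF := D.not_ftil_two N
  have hne := D.rise_nonempty N
  have sign : ∀ᶠ r in riseEnd (u α) (Tk u 1 α), u α r < 0 ∧ 0 < deriv (u α) r :=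
    (eventually_riseEnd hne).mono fun r hr => hr.2 r ⟨hr.1, le_rfl⟩
  rcases (le_of_tendsto (D.sol.tendsto_uAtZ D.pos.le hne)
    (sign.mono fun _ h => h.1.le)).lt_or_eq with h0 | h0
  · exact Or.inr (Or.inr (mem_Fk_two.mpr ⟨hN, hF, h0⟩))
  rcases (ge_of_tendsto (D.sol.tendsto_duAtZ N D.pos.le hne h0)
    (sign.mono fun _ h => h.2.le)).lt_or_eq with h1 | h1
  · exact Or.inr (Or.inl (mem_Nk_two.mpr ⟨hN, hF, h0, h1⟩))
  · exact Or.inl (mem_Gk_two.mpr ⟨hN, hF, h0, h1.symm⟩)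

end Descent

/-! ### The second zeros -/

/-- Past their first minima `T₁` and `T₂`, the solutions `v₁` and `v₂` are rising at `t₁` and `t₂`,
at a common level in `[-β, 0)`; there `v₂` leads by `κ`, while `v₁` rises all the way to `0`. -/
structure Race (k : ℕ) (f : ℝ → ℝ) (β : ℝ) (v₁ v₂ : ℝ → ℝ) (T₁ T₂ t₁ t₂ κ : ℝ) : Prop where
  sol₁ : Sol k f v₁
  sol₂ : Sol k f v₂
  T₁_nonneg : 0 ≤ T₁
  T₂_nonneg : 0 ≤ T₂
  rise₁ : t₁ ∈ Rise v₁ T₁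
  rise₂ : t₂ ∈ Rise v₂ T₂
  low : -β ≤ v₁ t₁
  high : v₁ t₁ < 0
  κ_pos : 0 < κ
  leads : Leads f v₁ v₂ t₁ t₂ κ
  lim : Tendsto v₁ (riseEnd v₁ T₁) (𝓝 0)

namespace Race

variable {v₁ v₂ : ℝ → ℝ} {T₁ T₂ t₁ t₂ κ z : ℝ}

theorem t₂_pos (C : Race k f β v₁ v₂ T₁ T₂ t₁ t₂ κ) : 0 < t₂ := C.T₂_nonneg.trans_lt C.rise₂.1

theorem ascend (C : Race k f β v₁ v₂ T₁ T₂ t₁ t₂ κ) (N : Nonlinearity k f b β) {z₁ z₂ : ℝ}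
    (h₁ : z₁ ∈ Rise v₁ T₁) (h₂ : z₂ ∈ Rise v₂ T₂) (hz₁ : t₁ < z₁) (hz₂ : t₂ < z₂)
    (heq : v₁ z₁ = v₂ z₂) (hE : 0 ≤ radialEnergy f v₁ z₁) :
    Leads f v₁ v₂ z₁ z₂ κ ∧ z₂ < z₁ :=
  C.leads.ascend N C.sol₁ C.sol₂ C.κ_pos (C.T₁_nonneg.trans C.rise₁.1.le) C.t₂_pos.le hz₁ hz₂
    (fun t ht => (h₁.2 t ⟨C.rise₁.1.trans ht.1, ht.2⟩).2)
    (fun t ht => (h₂.2 t ⟨C.rise₂.1.trans ht.1, ht.2⟩).2) heq C.low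
    (C.sol₁.le_of_mem_rise C.T₁_nonneg h₁).1 hE

-- `v₂ ≥ -β` past `t₂`, so `F(v₂) ≤ 0` and the weighted speed is at most `r v₂'`.
theorem le_mul_deriv (C : Race k f β v₁ v₂ T₁ T₂ t₁ t₂ κ) (N : Nonlinearity k f b β)
    (hz : z ∈ Rise v₂ T₂) (htz : t₂ < z) (hneg : v₂ z < 0) : κ ≤ z * deriv v₂ z := by
  have mono₁ {x : ℝ} (hx : x ∈ Rise v₁ T₁) := C.sol₁.strictMonoOn_of_mem_rise C.T₁_nonneg hx
  have hlt : v₁ t₁ < v₂ z := C.leads.eq.trans_lt <|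
    C.sol₂.strictMonoOn_of_mem_rise C.T₂_nonneg hz ⟨C.rise₂.1.le, htz.le⟩
      (right_mem_Icc.mpr hz.1.le) htz
  have hT₁ : v₁ T₁ < v₁ t₁ := mono₁ C.rise₁ (left_mem_Icc.mpr C.rise₁.1.le)
    (right_mem_Icc.mpr C.rise₁.1.le) C.rise₁.1
  obtain ⟨z₁, hz₁, heq, -, hE⟩ := C.sol₁.exists_rise_level N.cont C.T₁_nonneg ⟨t₁, C.rise₁⟩ C.lim
    hneg (hT₁.trans hlt)
  have htz₁ : t₁ < z₁ := by
    by_contra! hle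
    exact ((mono₁ C.rise₁).monotoneOn ⟨hz₁.1.le, hle⟩
      (right_mem_Icc.mpr C.rise₁.1.le) hle).not_gt (heq ▸ hlt)
  have gap := (C.ascend N hz₁ hz htz₁ htz heq hE).1.gap
  have speed : √(radialEnergy f v₂ z) ≤ deriv v₂ z := by
    refine Real.sqrt_le_iff.mpr ⟨(C.sol₂.le_of_mem_rise C.T₂_nonneg hz).2, ?_⟩
    rw [radialEnergy]
    linarith [N.prim_nonpos (s := v₂ z) ⟨by linarith [C.low], by linarith [N.β_pos]⟩]
  have hz₁0 : 0 ≤ z₁ := C.T₁_nonneg.trans hz₁.1.le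
  calc κ ≤ z₁ * √(radialEnergy f v₁ z₁) + κ := le_add_of_nonneg_left (by positivity)
    _ ≤ z * √(radialEnergy f v₂ z) := gap
    _ ≤ z * deriv v₂ z := mul_le_mul_of_nonneg_left speed (C.t₂_pos.trans htz).le

-- Otherwise `v₂' ≥ κ / r` for all large `r`, and `v₂` would grow like `κ log r`.
theorem bddAbove_rise (C : Race k f β v₁ v₂ T₁ T₂ t₁ t₂ κ) (N : Nonlinearity k f b β) :
    BddAbove (Rise v₂ T₂) := by
  by_contra hb
  have hall := forall_of_not_bddAbove_rise hb
  have hpos : 0 < t₂ + 1 := by linarith [C.t₂_pos]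
  have hT : ∀ r, t₂ + 1 ≤ r → T₂ < r := fun r hr => by linarith [C.rise₂.1]
  obtain ⟨r, hr, h0⟩ := exists_nonneg_of_le_mul_deriv hpos C.κ_pos
    (fun r hr => C.sol₂.hasDerivAt r (hpos.trans_le hr)) fun r hr =>
      C.le_mul_deriv N ⟨hT r hr, fun s hs => hall s hs.1⟩ (by linarith) (hall r (hT r hr)).1
  exact (hall r (hT r hr)).1.not_ge h0

theorem lt_sSup_rise (C : Race k f β v₁ v₂ T₁ T₂ t₁ t₂ κ) (N : Nonlinearity k f b β) :
    t₂ < sSup (Rise v₂ T₂) := by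
  have hd : 0 < deriv v₂ t₂ :=
    (C.sol₁.le_of_mem_rise C.T₁_nonneg C.rise₁).2.trans_lt C.leads.slope_lt
  obtain ⟨r, hr, hlt⟩ := C.sol₂.exists_gt_mem_rise C.T₂_nonneg C.rise₂ (C.leads.eq ▸ C.high) hd
  exact hlt.trans_le (le_csSup (C.bddAbove_rise N) hr)

theorem deriv_pos (C : Race k f β v₁ v₂ T₁ T₂ t₁ t₂ κ) (N : Nonlinearity k f b β) :
    0 < deriv v₂ (sSup (Rise v₂ T₂)) := by
  have htZ := C.lt_sSup_rise N
  have hZ := sSup_mem_rise ⟨t₂, C.rise₂⟩ (C.bddAbove_rise N)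
  have hZ0 := C.t₂_pos.trans htZ
  have hlim : Tendsto (fun z => z * deriv v₂ z) (𝓝[<] sSup (Rise v₂ T₂))
      (𝓝 (sSup (Rise v₂ T₂) * deriv v₂ (sSup (Rise v₂ T₂)))) :=
    (continuousAt_id.mul (C.sol₂.continuousAt_deriv hZ0)).continuousWithinAt
  have hle := ge_of_tendsto hlim <| by
    filter_upwards [Ioo_mem_nhdsLT htZ] with z hz
    have hTz := C.rise₂.1.trans hz.1
    exact C.le_mul_deriv N ⟨hTz, fun s hs => hZ.2 s ⟨hs.1, hs.2.trans hz.2⟩⟩ hz.1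
      (hZ.2 z ⟨hTz, hz.2⟩).1
  exact (pos_iff_pos_of_mul_pos (C.κ_pos.trans_le hle)).mp hZ0

theorem eq_zero (C : Race k f β v₁ v₂ T₁ T₂ t₁ t₂ κ) (N : Nonlinearity k f b β) :
    v₂ (sSup (Rise v₂ T₂)) = 0 :=
  C.sol₂.sSup_rise_eq_zero C.T₂_nonneg ⟨t₂, C.rise₂⟩ (C.bddAbove_rise N) (C.deriv_pos N)

theorem sSup_rise_lt (C : Race k f β v₁ v₂ T₁ T₂ t₁ t₂ κ) (N : Nonlinearity k f b β)
    (hb : BddAbove (Rise v₁ T₁)) (h0 : v₁ (sSup (Rise v₁ T₁)) = 0) :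
    sSup (Rise v₂ T₂) < sSup (Rise v₁ T₁) ∧
      deriv v₁ (sSup (Rise v₁ T₁)) < deriv v₂ (sSup (Rise v₂ T₂)) := by
  have hlt : t₁ < sSup (Rise v₁ T₁) :=
    (le_csSup hb C.rise₁).lt_of_ne fun h => (h0 ▸ h ▸ C.high).false
  obtain ⟨L, hZ⟩ := C.ascend N (sSup_mem_rise ⟨t₁, C.rise₁⟩ hb)
    (sSup_mem_rise ⟨t₂, C.rise₂⟩ (C.bddAbove_rise N)) hlt (C.lt_sSup_rise N)
    (h0.trans (C.eq_zero N).symm) (by rw [radialEnergy, h0, Fint_zero]; positivity)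
  exact ⟨hZ, L.slope_lt⟩

theorem mem_Nk_and_lt {u : ℝ → ℝ → ℝ} {α₁ α₂ : ℝ} (N : Nonlinearity k f b β)
    (C : Race k f β (u α₁) (u α₂) (Tk u 1 α₁) (Tk u 1 α₂) t₁ t₂ κ) (h₀ : uAtZ u 2 α₁ = 0)
    (hN : α₂ ∈ Nk u 1) (hF : ¬Ftil u 2 α₂) :
    α₂ ∈ Nk u 2 ∧ ZkE u 2 α₂ < ZkE u 2 α₁ ∧ duAtZ u 2 α₁ < duAtZ u 2 α₂ := by
  have hb₂ := C.bddAbove_rise N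
  have hd₂ := C.deriv_pos N
  rw [← duAtZ_two_of_bddAbove hb₂] at hd₂
  refine ⟨mem_Nk_two.mpr ⟨hN, hF, (uAtZ_two_of_bddAbove hb₂).trans (C.eq_zero N), hd₂⟩, ?_⟩
  rw [zkE_two_of_bddAbove hb₂]
  by_cases hb₁ : BddAbove (Rise (u α₁) (Tk u 1 α₁))
  · obtain ⟨hZ, hslope⟩ := C.sSup_rise_lt N hb₁ ((uAtZ_two_of_bddAbove hb₁).symm.trans h₀)
    rw [zkE_two_of_bddAbove hb₁, duAtZ_two_of_bddAbove hb₁, duAtZ_two_of_bddAbove hb₂]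
    exact ⟨WithTop.coe_lt_coe.mpr hZ, hslope⟩
  · have hd₁ := C.sol₁.tendsto_deriv_zero N C.T₁_nonneg (forall_of_not_bddAbove_rise hb₁)
      (by simpa only [riseEnd, if_neg hb₁] using C.lim)
    rw [zkE_two_of_not_bddAbove hb₁, duAtZ_two_of_not_bddAbove hb₁, hd₁.limUnder_eq]
    exact ⟨WithTop.coe_lt_top _, hd₂⟩

end Race

section Race

variable {v : ℝ → ℝ} {ε ρ R σ τ η T x x₁ x₂ y y₁ y₂ t α₁ α₂ : ℝ} {u : ℝ → ℝ → ℝ}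

theorem Ascent.mem_rise (A : Ascent b ε ρ R σ τ η v T x y) (S : Sol k f v) (hT : 0 ≤ T)
    (hε : 0 < ε) (ht : t ∈ Ioc T y) : t ∈ Rise v T := by
  refine ⟨ht.1, fun s hs => ?_⟩
  have hsy : s < y := hs.2.trans_le ht.2
  have hlt := S.strictMonoOn hT (fun r hr => A.deriv_pos r (Ioo_subset_Ioc_self hr))
    ⟨hs.1.le, hsy.le⟩ (right_mem_Icc.mpr A.T_lt.le) hsy
  exact ⟨by linarith [A.low], A.deriv_pos s ⟨hs.1, hsy.le⟩⟩

theorem Descent.exists_race (N : Nonlinearity k f b β) (D₁ : Descent k f β (u α₁) (Tk u 1 α₁))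
    (D₂ : Descent k f β (u α₂) (Tk u 1 α₂)) (h0 : u α₁ 0 < u α₂ 0) (hε : 0 < ε) (hεb : ε < b / 2)
    (hthr : Threshold k f b ρ R σ τ η) (A₁ : Ascent b ε ρ R σ τ η (u α₁) (Tk u 1 α₁) x₁ y₁)
    (A₂ : Ascent b ε ρ R σ τ η (u α₂) (Tk u 1 α₂) x₂ y₂) (hu : uAtZ u 2 α₁ = 0) :
    ∃ t₁ t₂ κ, Race k f β (u α₁) (u α₂) (Tk u 1 α₁) (Tk u 1 α₂) t₁ t₂ κ := by
  have hy₁ : y₁ ∈ Ioc (Tk u 1 α₁) y₁ := right_mem_Ioc.mpr A₁.T_lt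
  have rise₁ := fun {t} => A₁.mem_rise D₁.sol D₁.pos.le hε (t := t)
  have hlim := hu ▸ D₁.sol.tendsto_uAtZ D₁.pos.le ⟨y₁, rise₁ hy₁⟩
  have hend := D₁.sol.eventually_gt_riseEnd D₁.pos.le (rise₁ hy₁) (by linarith [A₁.low])
    (A₁.deriv_pos y₁ hy₁)
  have hE := D₁.sol.radialEnergy_nonneg_of_tendsto N.cont hlim (D₁.pos.trans A₁.T_lt).le
    (hend.mono fun _ h => h.le)
  obtain ⟨t₁, ht₁, t₂, ht₂, κ, hκ, L, hlow, hhigh⟩ :=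
    D₁.exists_leads N D₂ h0 hε hεb hthr A₁ A₂ hE
  exact ⟨t₁, t₂, κ, D₁.sol, D₂.sol, D₁.pos.le, D₂.pos.le, rise₁ ht₁,
    A₂.mem_rise D₂.sol D₂.pos.le hε ht₂, hlow, by linarith, hκ, L, hlim⟩

theorem Descent.mem_Nk_and_lt (N : Nonlinearity k f b β)
    (D₁ : Descent k f β (u α₁) (Tk u 1 α₁)) (D₂ : Descent k f β (u α₂) (Tk u 1 α₂))
    (h0 : u α₁ 0 < u α₂ 0) (hα₂ : 0 < α₂) (hε : 0 < ε) (hεb : ε < b / 2)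
    (hthr : Threshold k f b ρ R σ τ η) (A₁ : Ascent b ε ρ R σ τ η (u α₁) (Tk u 1 α₁) x₁ y₁)
    (A₂ : Ascent b ε ρ R σ τ η (u α₂) (Tk u 1 α₂) x₂ y₂) (h : α₁ ∈ Gk u 2 ∪ Nk u 2) :
    α₂ ∈ Nk u 2 ∧ ZkE u 2 α₂ < ZkE u 2 α₁ ∧ |duAtZ u 2 α₁| < |duAtZ u 2 α₂| := by
  obtain ⟨hu, hdu⟩ : uAtZ u 2 α₁ = 0 ∧ 0 ≤ duAtZ u 2 α₁ := by
    rcases h with h | h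
    · exact ⟨(mem_Gk_two.mp h).2.2.1, (mem_Gk_two.mp h).2.2.2.ge⟩
    · exact ⟨(mem_Nk_two.mp h).2.2.1, (mem_Nk_two.mp h).2.2.2.le⟩
  obtain ⟨t₁, t₂, κ, C⟩ := D₁.exists_race N D₂ h0 hε hεb hthr A₁ A₂ hu
  obtain ⟨hN, hZ, hlt⟩ := C.mem_Nk_and_lt N hu (D₂.mem_Nk_one N hα₂) (D₂.not_ftil_two N)
  refine ⟨hN, hZ, ?_⟩
  rwa [abs_of_nonneg hdu, abs_of_pos (hdu.trans_lt hlt)]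

end Race

/-! ### Stability under perturbation of the initial value -/

theorem eventually_forall_mem {g : ℝ × ℝ → ℝ} {A K U : Set ℝ} {α₀ : ℝ}
    (hg : ContinuousOn g (Ioi 0 ×ˢ A)) (h0 : 0 < α₀) (hK : IsCompact K) (hKA : K ⊆ A)
    (hU : IsOpen U) (h : ∀ r ∈ K, g (α₀, r) ∈ U) : ∀ᶠ α in 𝓝 α₀, ∀ r ∈ K, g (α, r) ∈ U := by
  have local_mem : ∀ᶠ α in 𝓝 α₀, ∀ r ∈ K, (α, r) ∈ Ioi (0 : ℝ) ×ˢ A → g (α, r) ∈ U :=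
    hK.eventually_forall_of_forall_eventually fun r hr => eventually_nhdsWithin_iff.mp
      ((hg (α₀, r) ⟨h0, hKA hr⟩).eventually_mem (hU.mem_nhds (h r hr)))
  filter_upwards [local_mem, lt_mem_nhds h0] with α h1 h2 r hr using h1 r hr ⟨h2, hKA hr⟩

namespace Family

variable {u : ℝ → ℝ → ℝ} {α₀ r T : ℝ}

theorem continuousAt (hu : Family (k + 2) f u) (h0 : 0 < α₀) (hr : 0 ≤ r) :
    ContinuousAt (fun α => u α r) α₀ :=
  (hu.2.1.comp (f := fun α : ℝ => (α, r)) (by fun_prop) fun _ hα => ⟨hα, hr⟩).continuousAt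
    (Ioi_mem_nhds h0)

theorem continuousAt_deriv (hu : Family (k + 2) f u) (h0 : 0 < α₀) (hr : 0 ≤ r) :
    ContinuousAt (fun α => deriv (u α) r) α₀ :=
  (hu.2.2.comp (f := fun α : ℝ => (α, r)) (by fun_prop) fun _ hα => ⟨hα, hr⟩).continuousAt
    (Ioi_mem_nhds h0)

theorem continuousOn_deriv_deriv (hu : Family (k + 2) f u) (hf : Continuous f) :
    ContinuousOn (fun q : ℝ × ℝ => deriv (deriv (u q.1)) q.2) (Ioi 0 ×ˢ Ioi 0) := by
  have hsub : Ioi (0 : ℝ) ×ˢ Ioi (0 : ℝ) ⊆ Ioi 0 ×ˢ Ici 0 := prod_mono_right Ioi_subset_Ici_self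
  refine (((continuousOn_const.div continuousOn_snd fun q hq => (mem_Ioi.mp hq.2).ne').mul
    (hu.2.2.mono hsub)).neg.sub (hf.comp_continuousOn (hu.2.1.mono hsub))).congr
    fun q hq => ((hu.sol hq.1).hasDerivAt_deriv q.2 hq.2).deriv

theorem exists_eventually_strictMonoOn_deriv (hu : Family (k + 2) f u) (hf : Continuous f)
    (h0 : 0 < α₀) (hT : 0 < T) (h2 : 0 < deriv (deriv (u α₀)) T) {U : Set ℝ} (hU : U ∈ 𝓝 T) :
    ∃ e > 0, Icc (T - e) (T + e) ⊆ U ∧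
      ∀ᶠ α in 𝓝 α₀, StrictMonoOn (deriv (u α)) (Icc (T - e) (T + e)) := by
  have hc := hu.continuousOn_deriv_deriv hf
  have hcT : ContinuousAt (fun t => deriv (deriv (u α₀)) t) T :=
    (hc.comp (f := fun t : ℝ => (α₀, t)) (by fun_prop) fun _ ht => ⟨h0, ht⟩).continuousAt
      (Ioi_mem_nhds hT)
  obtain ⟨e, he, hball⟩ := Metric.nhds_basis_closedBall.mem_iff.mp
    (inter_mem hU (inter_mem (Ioi_mem_nhds hT) (hcT.eventually_const_lt h2)))
  rw [Real.closedBall_eq_Icc] at hball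
  have hpos : Icc (T - e) (T + e) ⊆ Ioi 0 := fun t ht => (hball ht).2.1
  refine ⟨e, he, fun t ht => (hball ht).1, ?_⟩
  filter_upwards [lt_mem_nhds h0, eventually_forall_mem hc h0 isCompact_Icc hpos isOpen_Ioi
    fun t ht => (hball ht).2.2] with α hα h
  refine strictMonoOn_of_deriv_pos (convex_Icc _ _)
    ((hu.sol hα).cont_deriv.mono (hpos.trans Ioi_subset_Ici_self)) fun t ht => ?_
  rw [interior_Icc] at ht
  exact h t (Ioo_subset_Icc_self ht)

theorem eventually_exists_level (hu : Family (k + 2) f u) (h0 : 0 < α₀) {A B x : ℝ} {V : Set ℝ}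
    (hA : 0 ≤ A) (hx : x ∈ Ioo A B) (hpos : 0 < deriv (u α₀) x) (hV : V ∈ 𝓝 (deriv (u α₀) x)) :
    ∀ᶠ α in 𝓝 α₀, ∃ x' ∈ Ioo A B, u α x' = u α₀ x ∧ deriv (u α) x' ∈ V := by
  have S := hu.sol h0
  obtain ⟨W, hWV, hW, hxW⟩ := mem_nhds_iff.mp (inter_mem hV (Ioi_mem_nhds hpos))
  obtain ⟨e, he, hball⟩ := Metric.nhds_basis_closedBall.mem_iff.mp
    (inter_mem (Ioo_mem_nhds hx.1 hx.2)
      ((S.continuousAt_deriv (hA.trans_lt hx.1)).preimage_mem_nhds (hW.mem_nhds hxW)))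
  rw [Real.closedBall_eq_Icc] at hball
  have hsub : Icc (x - e) (x + e) ⊆ Ici 0 := fun t ht => hA.trans (hball ht).1.1.le
  have hl : x - e ∈ Icc (x - e) (x + e) := left_mem_Icc.mpr (by linarith)
  have hr : x + e ∈ Icc (x - e) (x + e) := right_mem_Icc.mpr (by linarith)
  have hm : x ∈ Icc (x - e) (x + e) := ⟨by linarith, by linarith⟩
  have mono : StrictMonoOn (u α₀) (Icc (x - e) (x + e)) :=
    S.strictMonoOn (hsub hl) fun t ht => (hWV (hball (Ioo_subset_Icc_self ht)).2).2
  filter_upwards [lt_mem_nhds h0,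
    eventually_forall_mem hu.2.2 h0 isCompact_Icc hsub hW fun t ht => (hball ht).2,
    (hu.continuousAt h0 (hsub hl)).eventually_lt_const (mono hl hm (by linarith)),
    (hu.continuousAt h0 (hsub hr)).eventually_const_lt (mono hm hr (by linarith))]
    with α hα hslope hleft hright
  obtain ⟨x', hx', hval⟩ := intermediate_value_Icc (by linarith)
    ((hu.sol hα).cont.mono hsub) ⟨hleft.le, hright.le⟩
  exact ⟨x', (hball hx').1, hval, (hWV (hslope x' hx')).1⟩

end Family

-- Equation (E) reads `(r^(k+1) v')' = -r^(k+1) f(v)`.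
theorem Sol.deriv_neg_of_lt {v : ℝ → ℝ} (S : Sol k f v) (N : Nonlinearity k f b β) {r : ℝ}
    (hr : 0 < r) (h : ∀ t ∈ Icc 0 r, b < v t) : deriv v r < 0 := by
  have anti : StrictAntiOn (fun t => t ^ (k + 1) * deriv v t) (Icc 0 r) := by
    refine strictAntiOn_Icc_of_hasDerivAt
      ((continuousOn_id.pow _).mul (S.cont_deriv.mono fun t ht => ht.1))
      fun t ht => ⟨-(t ^ (k + 1) * f (v t)), ?_, ?_⟩
    · refine ((hasDerivAt_pow (k + 1) t).mul (S.hasDerivAt_deriv t ht.1)).congr_deriv ?_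
      have := ht.1.ne'
      push_cast
      field_simp
      ring
    · exact neg_neg_of_pos (mul_pos (pow_pos ht.1 _) (N.pos _ (h t (Ioo_subset_Icc_self ht))))
  have hlt := anti (left_mem_Icc.mpr hr.le) (right_mem_Icc.mpr hr.le) hr
  simp only [zero_pow k.succ_ne_zero, zero_mul] at hlt
  exact neg_of_mul_neg_right hlt (pow_nonneg hr.le _)

section Perturbation

variable {u : ℝ → ℝ → ℝ} {α₀ T c X x y ρ R σ τ η ε : ℝ}

namespace Descent

theorem eventually_deriv_neg (N : Nonlinearity k f b β) (hu : Family (k + 2) f u) (h0 : 0 < α₀)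
    (D : Descent k f β (u α₀) T) (hc : c < T) :
    ∀ᶠ α in 𝓝 α₀, ∀ t ∈ Ioc 0 c, deriv (u α) t < 0 := by
  obtain ⟨r, hr, htop⟩ := mem_nhdsGE_iff_exists_Icc_subset.mp
    ((D.sol.cont 0 self_mem_Ici).eventually_const_lt (N.b_lt.trans D.top))
  filter_upwards [lt_mem_nhds h0,
    eventually_forall_mem hu.2.1 h0 isCompact_Icc Icc_subset_Ici_self isOpen_Ioi htop,
    eventually_forall_mem hu.2.2 h0 isCompact_Icc
      (Icc_subset_Ici_self.trans (Ici_subset_Ici.mpr (mem_Ioi.mp hr).le)) (isOpen_Iio (a := 0))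
      (K := Icc r c) fun t ht => D.deriv_neg t ⟨(mem_Ioi.mp hr).trans_le ht.1, ht.2.trans_lt hc⟩]
    with α hα hhigh hneg t ht
  rcases le_total t r with h | h
  · exact (hu.sol hα).deriv_neg_of_lt N ht.1 fun s hs => hhigh s ⟨hs.1, hs.2.trans h⟩
  · exact hneg t ⟨h, ht.2⟩

theorem eventually_exists (N : Nonlinearity k f b β) (hu : Family (k + 2) f u) (h0 : 0 < α₀)
    (D : Descent k f β (u α₀) T) {U : Set ℝ} (hU : U ∈ 𝓝 T) (hTX : T < X)
    (hX : ∀ t ∈ Ioc T X, 0 < deriv (u α₀) t) :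
    ∀ᶠ α in 𝓝 α₀, ∃ T' ∈ U, Descent k f β (u α) T' ∧ ∀ t ∈ Ioc T' X, 0 < deriv (u α) t := by
  have hnhds : U ∩ (Ioo 0 X ∩ {t | u α₀ t < -β}) ∈ 𝓝 T := inter_mem hU <|
    inter_mem (Ioo_mem_nhds D.pos hTX) ((D.sol.continuousAt D.pos).eventually_lt_const D.bot)
  obtain ⟨e, he, hball, hmono⟩ :=
    hu.exists_eventually_strictMonoOn_deriv N.cont h0 D.pos (D.deriv_deriv_pos N) hnhds
  have hsub : Icc (T - e) (T + e) ⊆ Ici 0 := fun t ht => (hball ht).2.1.1.le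
  have hl : T - e ∈ Icc (T - e) (T + e) := left_mem_Icc.mpr (by linarith)
  have hr : T + e ∈ Icc (T - e) (T + e) := right_mem_Icc.mpr (by linarith)
  have hle : T - e < T := by linarith
  have hlt : T < T + e := by linarith
  filter_upwards [lt_mem_nhds h0, hmono, D.eventually_deriv_neg N hu h0 hle,
    eventually_forall_mem hu.2.1 h0 isCompact_Icc hsub isOpen_Iio fun t ht => (hball ht).2.2,
    (hu.continuousAt h0 le_rfl).eventually_const_lt D.top,
    (hu.continuousAt_deriv h0 (hsub hr)).eventually_const_lt (hX _ ⟨hlt, (hball hr).2.1.2.le⟩),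
    eventually_forall_mem hu.2.2 h0 isCompact_Icc
      (Icc_subset_Ici_self.trans (Ici_subset_Ici.mpr (hsub hr))) (isOpen_Ioi (a := 0))
      (K := Icc (T + e) X) fun t ht => hX t ⟨hlt.trans_le ht.1, ht.2⟩]
    with α hα mono hneg hbot htop hright hpos
  have S := hu.sol hα
  have hleft := hneg (T - e) ⟨(hball hl).2.1.1, le_rfl⟩
  obtain ⟨T', hT', hT'0⟩ := intermediate_value_Ioo (hle.trans hlt).le (S.cont_deriv.mono hsub)
    ⟨hleft, hright⟩
  have hT'' := Ioo_subset_Icc_self hT'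
  refine ⟨T', (hball hT'').1, ⟨S, (hball hT'').2.1.1, fun t ht => ?_, hT'0, htop, hbot T' hT''⟩,
    fun t ht => ?_⟩
  · rcases le_total t (T - e) with h | h
    · exact hneg t ⟨ht.1, h⟩
    · exact hT'0 ▸ mono ⟨h, (ht.2.trans hT'.2).le⟩ hT'' ht.2
  · rcases le_total t (T + e) with h | h
    · exact hT'0 ▸ mono hT'' ⟨(hT'.1.trans ht.1).le, h⟩ ht.1
    · exact hpos t ⟨h, ht.2⟩

theorem eventually_exists_ascent (N : Nonlinearity k f b β) (hu : Family (k + 2) f u) (h0 : 0 < α₀)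
    (D : Descent k f β (u α₀) T) (hX : ∀ t ∈ Ioc T X, 0 < deriv (u α₀) t) (hx : T < x)
    (hxy : x < y) (hyX : y < X) (hmid : u α₀ x = -(b / 2)) (hρ : ρ < T) (hR : x < R)
    (hστ : deriv (u α₀) x ∈ Ioo σ τ) (hη : deriv (u α₀) y < η) :
    ∀ᶠ α in 𝓝 α₀, ∃ T' x' y', Descent k f β (u α) T' ∧
      Ascent b (-u α₀ y) ρ R σ τ η (u α) T' x' y' := by
  obtain ⟨c, hTc, hcx⟩ := exists_between hx
  obtain ⟨m, hxm, hmy⟩ := exists_between hxy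
  have hc : 0 ≤ c := (D.pos.trans hTc).le
  filter_upwards [D.eventually_exists N hu h0 (Ioo_mem_nhds hρ hTc) (by linarith) hX,
    hu.eventually_exists_level h0 (B := min m R) hc ⟨hcx, lt_min hxm hR⟩
      (hX x ⟨hx, by linarith⟩) (Ioo_mem_nhds hστ.1 hστ.2),
    hu.eventually_exists_level h0 (A := m) (by linarith) ⟨hmy, hyX⟩ (hX y ⟨by linarith, hyX.le⟩)
      (Iio_mem_nhds hη)]
    with α ⟨T', hT', D', hpos⟩ ⟨x', hx', hx'v, hx's⟩ ⟨y', hy', hy'v, hy's⟩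
  obtain ⟨hx'm, hx'R⟩ := lt_min_iff.mp hx'.2
  exact ⟨T', x', y', D', hT'.1.le, ⟨hT'.2.trans hx'.1, hx'm.trans hy'.1⟩,
    fun t ht => hpos t ⟨ht.1, ht.2.trans hy'.2.le⟩, by rw [hx'v, hmid, neg_neg], hx'R.le, hx's.1.le,
    hx's.2.le, by rw [hy'v], (mem_Iio.mp hy's).le⟩

theorem exists_small_slope (N : Nonlinearity k f b β) (D : Descent k f β (u α₀) (Tk u 1 α₀))
    (h : α₀ ∈ Gk u 2) (hε : 0 < ε) (hη : 0 < η) :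
    ∃ y X, Tk u 1 α₀ < y ∧ y < X ∧
      (∀ t ∈ Ioc (Tk u 1 α₀) X, u α₀ t < 0 ∧ 0 < deriv (u α₀) t) ∧
      -ε < u α₀ y ∧ deriv (u α₀) y < η := by
  obtain ⟨-, -, hu0, hdu0⟩ := mem_Gk_two.mp h
  have hne := D.rise_nonempty N
  have hv := hu0 ▸ D.sol.tendsto_uAtZ D.pos.le hne
  have hdv := hdu0 ▸ D.sol.tendsto_duAtZ N D.pos.le hne hu0
  obtain ⟨y, hε', hη', hTy, hy⟩ := ((hv.eventually_const_lt (neg_neg_of_pos hε)).and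
    ((hdv.eventually_lt_const hη).and (eventually_riseEnd hne))).exists
  obtain ⟨hvy, hdy⟩ := hy y ⟨hTy, le_rfl⟩
  obtain ⟨X, hyX, -, hX⟩ := ((D.sol.eventually_gt_riseEnd D.pos.le
    ⟨hTy, fun s hs => hy s (Ioo_subset_Ioc_self hs)⟩ hvy hdy).and (eventually_riseEnd hne)).exists
  exact ⟨y, X, hTy, hyX, hX, hε', hη'⟩

end Descent

theorem Family.exists_threshold_eventually_ascent (N : Nonlinearity k f b β)
    (hu : Family (k + 2) f u) (h : α₀ ∈ Gk u 2) :
    ∃ ε ρ R σ τ η, 0 < ε ∧ ε < b / 2 ∧ Threshold k f b ρ R σ τ η ∧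
      ∀ᶠ α in 𝓝 α₀, ∃ T x y, Descent k f β (u α) T ∧ Ascent b ε ρ R σ τ η (u α) T x y := by
  have h0 : 0 < α₀ := h.1.1
  have hb := N.b_pos
  have D := Descent.of_mem_Gk_two N (hu.sol h0) (hu.1 α₀ h0).1 h
  have hne := D.rise_nonempty N
  have hlim := (mem_Gk_two.mp h).2.2.1 ▸ D.sol.tendsto_uAtZ D.pos.le hne
  obtain ⟨x, hxrise, hxv, hdx, -⟩ := D.sol.exists_rise_level N.cont D.pos.le hne hlim
    (s := -(b / 2)) (by linarith) (by linarith [D.bot, N.b_lt])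
  obtain ⟨Q, hQ⟩ := (isCompact_Icc (a := (0 : ℝ)) (b := b)).bddAbove_image
    (f := fun s => -f s) N.cont.neg.continuousOn
  have hT := D.pos
  obtain ⟨η, hη, hthr⟩ := exists_threshold (ρ := Tk u 1 α₀ / 2) (R := x + 1)
    (σ := deriv (u α₀) x / 2) (τ := 2 * deriv (u α₀) x) k hb N.nonpos
    (fun s hs => hQ ⟨s, hs, rfl⟩) (by linarith) (by linarith [hxrise.1]) (by linarith)
    (by linarith)
  obtain ⟨y, X, hTy, hyX, hX, hlev, hslope⟩ := D.exists_small_slope N h (half_pos hb) hη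
  have hxy : x < y := by
    by_contra! hle
    exact ((D.sol.strictMonoOn_of_mem_rise hT.le hxrise).monotoneOn ⟨hTy.le, hle⟩
      (right_mem_Icc.mpr hxrise.1.le) hle).not_gt (hxv ▸ hlev)
  exact ⟨-u α₀ y, _, _, _, _, η, neg_pos.mpr (hX y ⟨hTy, hyX.le⟩).1, by linarith, hthr,
    D.eventually_exists_ascent N hu h0 (fun t ht => (hX t ht).2) hxrise.1 hxy hyX hxv
      (by linarith) (lt_add_one x) ⟨by linarith, by linarith⟩ hslope⟩

end Perturbation

theorem G2_N2_F2_trichotomy_general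
    (n : ℕ) (hn : 2 ≤ n)
    (f : ℝ → ℝ) (b β : ℝ) (hf : Continuous f)
    (h1 : Hf1 f b β) (hd : ∀ s, β < s → DifferentiableAt ℝ f s) (h3 : Hf3 f β) (h4 : Hf4 n f β)
    (u : ℝ → ℝ → ℝ) (hu : Family n f u)
    (αs : ℝ) (hαs : αs ∈ Gk u 2) :
    ∃ δ : ℝ, 0 < δ ∧
      ∀ α₁ ∈ Ioo (αs - δ) (αs + δ), ∀ α₂ ∈ Ioo (αs - δ) (αs + δ), α₁ < α₂ →
        (α₁ ∈ Gk u 2 ∪ Nk u 2 →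
          α₂ ∈ Nk u 2 ∧ ZkE u 2 α₂ < ZkE u 2 α₁ ∧
            |duAtZ u 2 α₁| < |duAtZ u 2 α₂|) ∧
        (α₂ ∈ Gk u 2 → α₁ ∈ Fk u 2) := by
  obtain ⟨k, rfl⟩ := Nat.exists_eq_add_of_le' hn
  obtain ⟨odd, -, b_pos, b_lt, pos, nonpos, -, prim_β⟩ := h1
  have N : Nonlinearity k f b β := ⟨hf, odd, b_pos, b_lt, pos, nonpos, prim_β, hd, h3, h4⟩
  obtain ⟨ε, ρ, R, σ, τ, η, hε, hεb, hthr, near⟩ := hu.exists_threshold_eventually_ascent N hαs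
  obtain ⟨δ, hδ, hball⟩ :=
    Metric.eventually_nhds_iff_ball.mp (near.and (lt_mem_nhds hαs.1.1))
  rw [Real.ball_eq_Ioo] at hball
  refine ⟨δ, hδ, fun α₁ h₁ α₂ h₂ hlt => ?_⟩
  obtain ⟨⟨T₁, x₁, y₁, D₁, A₁⟩, hα₁⟩ := hball α₁ h₁
  obtain ⟨⟨T₂, x₂, y₂, D₂, A₂⟩, hα₂⟩ := hball α₂ h₂
  obtain rfl := D₁.tk_one_eq N
  obtain rfl := D₂.tk_one_eq N
  have h0 : u α₁ 0 < u α₂ 0 := by rwa [(hu.1 α₁ hα₁).1, (hu.1 α₂ hα₂).1]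
  have order := D₁.mem_Nk_and_lt N D₂ h0 hα₂ hε hεb hthr A₁ A₂
  refine ⟨order, fun hG => ?_⟩
  have not_mem (h : α₁ ∈ Gk u 2 ∪ Nk u 2) : False :=
    (mem_Nk_two.mp (order h).1).2.2.2.ne' (mem_Gk_two.mp hG).2.2.2
  rcases D₁.mem_Gk_or_mem_Nk_or_mem_Fk N hα₁ with h | h | h
  exacts [(not_mem (Or.inl h)).elim, (not_mem (Or.inr h)).elim, h]

end Paper

/-- **Proposition 4.10.** Under (f1)–(f3) and (f4), for `α* ∈ G₂`: nearby initial values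
`α₁ < α₂` satisfy: if `α₁ ∈ G₂ ∪ N₂` then `α₂ ∈ N₂`, `Z₂(α₁) > Z₂(α₂)` and
`|u₁'(Z₂(α₁))| < |u₂'(Z₂(α₂))|`; if `α₂ ∈ G₂` then `α₁ ∈ F₂`. -/
theorem G2_N2_F2_trichotomy
    (n : ℕ) (hn : 2 ≤ n)
    (f : ℝ → ℝ) (b β : ℝ) (hf : Continuous f)
    (h1 : Hf1 f b β) (h2 : Hf2 f) (h3 : Hf3 f β) (h4 : Hf4 n f β)
    (u : ℝ → ℝ → ℝ) (hu : Family n f u)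
    (αs : ℝ) (hαs : αs ∈ Gk u 2) :
    ∃ δ : ℝ, 0 < δ ∧
      ∀ α₁ ∈ Ioo (αs - δ) (αs + δ), ∀ α₂ ∈ Ioo (αs - δ) (αs + δ), α₁ < α₂ →
        (α₁ ∈ Gk u 2 ∪ Nk u 2 →
          α₂ ∈ Nk u 2 ∧ ZkE u 2 α₂ < ZkE u 2 α₁ ∧
            |duAtZ u 2 α₁| < |duAtZ u 2 α₂|) ∧
        (α₂ ∈ Gk u 2 → α₁ ∈ Fk u 2) :=
  G2_N2_F2_trichotomy_general n hn f b β hf h1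
    (fun s hs => h2.2.1 s ((h1.2.2.1.trans h1.2.2.2.1).trans hs)) h3 h4 u hu αs hαs
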